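/- Let ψ be the (σ,λ)-GFF on V_N with Gibbs measure 𝒢_{β,N}. For every β > 0 and ρ ∈ (0,λ_1), the Gibbs mass of the boundary region vanishes: 𝒢_{β,N}(A_{N,ρ}^c) → 0 as N → ∞, where the limit holds in probability and in L^p for every 1 ≤ p < ∞, and A_{N,ρ}^c = V_N ∖ A_{N,ρ}. -/

import Mathlib

open Filter
open scoped Classical

noncomputable section GFFCommon

/-- Vertices of `ℤ²`. -/
abbrev Vtx : Type := ℤ × ℤ

/-- Sample space: a real-valued field indexed by the vertices of `ℤ²`. -/
abbrev FieldSp : Type := Vtx → ℝ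

/-- The box `V_N = {0,1,…,N}²`. -/
def VN (N : ℕ) : Finset Vtx := Finset.Icc (0, 0) ((N : ℤ), (N : ℤ))

/-- The boundary `∂B` of a finite box `B ⊆ ℤ²`:
vertices of `B` having a (Euclidean distance 1) neighbour outside `B`. -/
def bdry (B : Finset Vtx) : Finset Vtx :=
  B.filter fun v =>
    ¬((v.1 + 1, v.2) ∈ B ∧ (v.1 - 1, v.2) ∈ B ∧ (v.1, v.2 + 1) ∈ B ∧ (v.1, v.2 - 1) ∈ B)

/-- The interior `B° = B ∖ ∂B`. -/
def intr (B : Finset Vtx) : Finset Vtx := B \ bdry B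

/-- The neighbourhood `[v]_λ` of `v` in `V_N`. -/
def nbhd (N : ℕ) (lam : ℝ) (v : Vtx) : Finset Vtx :=
  if lam = 0 then VN N
  else if lam = 1 then {v}
  else (VN N).filter fun w =>
    |(w.1 : ℝ) - (v.1 : ℝ)| ≤ (N : ℝ) ^ ((1 : ℝ) - lam) / 2 ∧
    |(w.2 : ℝ) - (v.2 : ℝ)| ≤ (N : ℝ) ^ ((1 : ℝ) - lam) / 2

/-- The σ-algebra `F_{∂[v]_λ ∪ [v]_λ^c}`, generated by the field variables on the
boundary of `[v]_λ` and those outside of it. -/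
def scaleAlg (N : ℕ) (lam : ℝ) (v : Vtx) : MeasurableSpace FieldSp :=
  ⨆ w ∈ {w : Vtx | w ∈ VN N ∧ w ∉ intr (nbhd N lam v)},
    MeasurableSpace.comap (fun ω : FieldSp => ω w) inferInstance

/-- `G` is the Green function of simple random walk killed on `∂B`, normalized by `π/2`:
it vanishes unless both arguments are in `B°`, and in `B°` it satisfies the
first-step (discrete Poisson equation) characterization
`G(x,y) = (1/4)·Σ_{x'∼x} G(x',y) + (π/2)·1_{x=y}`. -/
def IsGreenFn (B : Finset Vtx) (G : Vtx → Vtx → ℝ) : Prop :=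
  (∀ x y : Vtx, x ∉ intr B ∨ y ∉ intr B → G x y = 0) ∧
  ∀ y ∈ intr B, ∀ x ∈ intr B,
    G x y = (G (x.1 + 1, x.2) y + G (x.1 - 1, x.2) y
        + G (x.1, x.2 + 1) y + G (x.1, x.2 - 1) y) / 4
      + (Real.pi / 2) * (if x = y then 1 else 0)

/-- `P` is the law (on the canonical space `FieldSp`) of the Gaussian free field on `V_N`:
a centered Gaussian field with covariance the Green function `G_{V_N}`. -/
def IsGFF (N : ℕ) (P : MeasureTheory.Measure FieldSp) : Prop :=
  MeasureTheory.IsProbabilityMeasure P ∧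
  ∃ G : Vtx → Vtx → ℝ, IsGreenFn (VN N) G ∧
    ∀ c : Vtx → ℝ,
      P.map (fun ω => ∑ v ∈ VN N, c v * ω v) =
        ProbabilityTheory.gaussianReal 0 (Real.toNNReal (∑ v ∈ VN N, ∑ w ∈ VN N, c v * c w * G v w))

open MeasureTheory in
/-- `φ_v(λ) = E[φ_v | F_{∂[v]_λ ∪ [v]_λ^c}]`. -/
def phiScale (N : ℕ) (P : MeasureTheory.Measure FieldSp) (v : Vtx) (lam : ℝ) : FieldSp → ℝ :=
  P[fun ω : FieldSp => ω v | scaleAlg N lam v]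

/-- Admissible parameters `(σ,λ)`: `σ_1,…,σ_M > 0` and `0 = λ_0 < λ_1 < … < λ_M = 1`. -/
def ScaleParams (M : ℕ) (sigv lamv : ℕ → ℝ) : Prop :=
  1 ≤ M ∧ (∀ i ∈ Finset.Icc 1 M, 0 < sigv i) ∧
  lamv 0 = 0 ∧ lamv M = 1 ∧ ∀ i, i < M → lamv i < lamv (i + 1)

/-- The `(σ,λ)`-GFF: `ψ_v = Σ_{i=1}^M σ_i (φ_v(λ_i) − φ_v(λ_{i−1}))`. -/
def psiFld (N M : ℕ) (sigv lamv : ℕ → ℝ) (P : MeasureTheory.Measure FieldSp) (v : Vtx) : FieldSp → ℝ :=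
  fun ω => ∑ i ∈ Finset.Icc 1 M, sigv i * (phiScale N P v (lamv i) ω - phiScale N P v (lamv (i - 1)) ω)

open MeasureTheory in
/-- `ψ_v(λ) = E[ψ_v | F_{∂[v]_λ ∪ [v]_λ^c}]`. -/
def psiScale (N M : ℕ) (sigv lamv : ℕ → ℝ) (P : MeasureTheory.Measure FieldSp) (v : Vtx) (lam : ℝ) :
    FieldSp → ℝ :=
  P[psiFld N M sigv lamv P v | scaleAlg N lam v]

/-- The increment `ψ_v(λ,λ') = ψ_v(λ') − ψ_v(λ)`. -/
def psiInc (N M : ℕ) (sigv lamv : ℕ → ℝ) (P : MeasureTheory.Measure FieldSp) (v : Vtx) (lam lam' : ℝ) :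
    FieldSp → ℝ :=
  fun ω => psiScale N M sigv lamv P v lam' ω - psiScale N M sigv lamv P v lam ω

/-- The step function `σ(s) = σ_1 1_{{0}}(s) + Σ_{i=1}^M σ_i 1_{(λ_{i−1},λ_i]}(s)`. -/
def stepFn (M : ℕ) (sigv lamv : ℕ → ℝ) (s : ℝ) : ℝ :=
  (if s = 0 then sigv 1 else 0) +
  ∑ i ∈ Finset.Icc 1 M, if lamv (i - 1) < s ∧ s ≤ lamv i then sigv i else 0

/-- `𝒥_f(s) = ∫_0^s f(r) dr`. -/
def Jint (f : ℝ → ℝ) (s : ℝ) : ℝ := ∫ r in (0:ℝ)..s, f r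

/-- `𝒥_f(s₁,s₂) = ∫_{s₁}^{s₂} f(r) dr`. -/
def Jint2 (f : ℝ → ℝ) (s₁ s₂ : ℝ) : ℝ := ∫ r in s₁..s₂, f r

/-- The speed function `𝒥_{σ²}`. -/
def Jsig2 (M : ℕ) (sigv lamv : ℕ → ℝ) (s : ℝ) : ℝ := Jint (fun r => (stepFn M sigv lamv r) ^ 2) s

/-- The normalized speed function `𝒥̄_{σ²} = 𝒥_{σ²}/𝒥_{σ²}(1)`. -/
def JsigBar (M : ℕ) (sigv lamv : ℕ → ℝ) (s : ℝ) : ℝ := Jsig2 M sigv lamv s / Jsig2 M sigv lamv 1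

/-- The concave hull on `[0,1]` of a function `f`, i.e. the pointwise infimum over all
concave functions dominating `f` on `[0,1]`. -/
def concaveHull (f : ℝ → ℝ) (s : ℝ) : ℝ :=
  sInf {y | ∃ g : ℝ → ℝ, ConcaveOn ℝ (Set.Icc (0:ℝ) 1) g ∧
    (∀ t ∈ Set.Icc (0:ℝ) 1, f t ≤ g t) ∧ y = g s}

/-- The effective parameters: jump scales `0 = λ⁰ < … < λ^m = 1`, values
`σ̄_1 > … > σ̄_m > 0`, and the left-continuous non-increasing step function `σ̄`
such that `∫_0^s σ̄²` is the concavification of `𝒥_{σ²}`. -/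
def EffParams (M : ℕ) (sigv lamv : ℕ → ℝ) (m : ℕ) (sigb lamb : ℕ → ℝ) (sigbar : ℝ → ℝ) : Prop :=
  1 ≤ m ∧ m ≤ M ∧ lamb 0 = 0 ∧ lamb m = 1 ∧ (∀ j, j < m → lamb j < lamb (j + 1)) ∧
  (∀ l, 1 ≤ l → l < m → sigb (l + 1) < sigb l) ∧ (∀ l ∈ Finset.Icc 1 m, 0 < sigb l) ∧
  sigbar 0 = sigb 1 ∧
  (∀ l ∈ Finset.Icc 1 m, ∀ s : ℝ, lamb (l - 1) < s → s ≤ lamb l → sigbar s = sigb l) ∧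
  (∀ s : ℝ, 0 < s → s ≤ 1 →
    concaveHull (Jsig2 M sigv lamv) s = ∫ r in (0:ℝ)..s, (sigbar r) ^ 2)

/-- `γ* = 𝒥_{σ²/σ̄}(1)`. -/
def gammaStar (M : ℕ) (sigv lamv : ℕ → ℝ) (sigbar : ℝ → ℝ) : ℝ :=
  ∫ s in (0:ℝ)..1, (stepFn M sigv lamv s) ^ 2 / sigbar s

/-- The critical levels `γ^l = ∫_0^1 σ²(s)/σ̄(s ∧ λ^l) ds`, `γ⁰ = 0`. -/
def gammaL (M : ℕ) (sigv lamv : ℕ → ℝ) (lamb : ℕ → ℝ) (sigbar : ℝ → ℝ) (l : ℕ) : ℝ :=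
  if l = 0 then 0 else ∫ s in (0:ℝ)..1, (stepFn M sigv lamv s) ^ 2 / sigbar (min s (lamb l))

/-- `EntE` is the entropy function `𝓔` of the model. -/
def IsEntropy (M : ℕ) (sigv lamv : ℕ → ℝ) (m : ℕ) (lamb : ℕ → ℝ) (sigbar : ℝ → ℝ)
    (EntE : ℝ → ℝ) : Prop :=
  EntE 0 = 1 ∧
  ∀ l ∈ Finset.Icc 1 m, ∀ γ : ℝ,
    gammaL M sigv lamv lamb sigbar (l - 1) < γ → γ ≤ gammaL M sigv lamv lamb sigbar l →
      EntE γ = (1 - lamb (l - 1)) -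
        (γ - ∫ s in (0:ℝ)..(lamb (l - 1)), (stepFn M sigv lamv s) ^ 2 / sigbar s) ^ 2 /
          Jint2 (fun r => (stepFn M sigv lamv r) ^ 2) (lamb (l - 1)) 1

/-- The limiting free energy of the `REM(σ)` model. -/
def fREM (σ β : ℝ) : ℝ :=
  if (2 / σ) < β then 2 * (β / (2 / σ)) else 1 + (β / (2 / σ)) ^ 2

/-- The index `l_β`. -/
def lbeta (m : ℕ) (sigb : ℕ → ℝ) (β : ℝ) : ℕ :=
  if β ≤ 2 / sigb m then sInf {l : ℕ | 1 ≤ l ∧ β ≤ 2 / sigb l} else m + 1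

/-- The limiting free energy `f^ψ(β)`, written with the `l_β` split. -/
def fpsiLim (m : ℕ) (sigb lamb : ℕ → ℝ) (β : ℝ) : ℝ :=
  (∑ j ∈ Finset.Icc 1 (lbeta m sigb β - 1), (2 * β / (2 / sigb j)) * (lamb j - lamb (j - 1))) +
  ∑ j ∈ Finset.Icc (lbeta m sigb β) m, (1 + β ^ 2 / (2 / sigb j) ^ 2) * (lamb j - lamb (j - 1))

/-- The set `ℬ` of non-critical inverse temperatures. -/
def critSet (m : ℕ) (sigb : ℕ → ℝ) : Set ℝ :=
  {β | 0 < β ∧ ∀ j ∈ Finset.Icc 1 m, β ≠ 2 / sigb j}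

/-- The partition function `Z_N^ψ(β)`. -/
def ZN (N M : ℕ) (sigv lamv : ℕ → ℝ) (P : MeasureTheory.Measure FieldSp) (β : ℝ) (ω : FieldSp) : ℝ :=
  ∑ v ∈ VN N, Real.exp (β * psiFld N M sigv lamv P v ω)

/-- The free energy `f_N^ψ(β)` on `V_N`. -/
def freeEnergy (N M : ℕ) (sigv lamv : ℕ → ℝ) (P : MeasureTheory.Measure FieldSp) (β : ℝ) (ω : FieldSp) : ℝ :=
  (Real.log ((N : ℝ) ^ 2))⁻¹ * Real.log (ZN N M sigv lamv P β ω)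

/-- The set `A_{N,ρ}` of points at distance at least `N^{1−ρ}` from `ℤ² ∖ V_N`. -/
def AN (N : ℕ) (ρ : ℝ) : Finset Vtx :=
  (VN N).filter fun v => ∀ z : Vtx, z ∉ VN N →
    (N : ℝ) ^ ((1 : ℝ) - ρ) ≤ Real.sqrt (((v.1 : ℝ) - (z.1 : ℝ)) ^ 2 + ((v.2 : ℝ) - (z.2 : ℝ)) ^ 2)

/-- The restricted partition function `Z_{N,ρ}^ψ(β)`. -/
def ZNres (N M : ℕ) (sigv lamv : ℕ → ℝ) (P : MeasureTheory.Measure FieldSp) (β ρ : ℝ) (ω : FieldSp) : ℝ :=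
  ∑ v ∈ AN N ρ, Real.exp (β * psiFld N M sigv lamv P v ω)

/-- The free energy `f_{N,ρ}^ψ(β)` on `A_{N,ρ}`. -/
def freeEnergyRes (N M : ℕ) (sigv lamv : ℕ → ℝ) (P : MeasureTheory.Measure FieldSp) (β ρ : ℝ)
    (ω : FieldSp) : ℝ :=
  (Real.log ((N : ℝ) ^ 2))⁻¹ * Real.log (ZNres N M sigv lamv P β ρ ω)

/-- The Gibbs weight `𝒢_{β,N}({v})`. -/
def gibbsW (N M : ℕ) (sigv lamv : ℕ → ℝ) (P : MeasureTheory.Measure FieldSp) (β : ℝ) (v : Vtx)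
    (ω : FieldSp) : ℝ :=
  Real.exp (β * psiFld N M sigv lamv P v ω) / ZN N M sigv lamv P β ω

/-- The restricted Gibbs weight `𝒢_{β,N,ρ}({v})`. -/
def gibbsWres (N M : ℕ) (sigv lamv : ℕ → ℝ) (P : MeasureTheory.Measure FieldSp) (β ρ : ℝ) (v : Vtx)
    (ω : FieldSp) : ℝ :=
  Real.exp (β * psiFld N M sigv lamv P v ω) / ZNres N M sigv lamv P β ρ ω

/-- `E𝒢_{β,N}^{×s}[F]`: the mean over the disorder of the `s`-fold Gibbs average of `F`. -/
def gibbsExp (N M : ℕ) (sigv lamv : ℕ → ℝ) (P : MeasureTheory.Measure FieldSp) (β : ℝ) (s : ℕ)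
    (F : (Fin s → Vtx) → ℝ) : ℝ :=
  ∫ ω, (∑ vv ∈ Fintype.piFinset (fun _ : Fin s => VN N),
    (∏ i, gibbsW N M sigv lamv P β (vv i) ω) * F vv) ∂P

/-- `E𝒢_{β,N,ρ}^{×s}[F]`, with an `ω`-dependent integrand allowed. -/
def gibbsExpRes (N M : ℕ) (sigv lamv : ℕ → ℝ) (P : MeasureTheory.Measure FieldSp) (β ρ : ℝ) (s : ℕ)
    (F : (Fin s → Vtx) → FieldSp → ℝ) : ℝ :=
  ∫ ω, (∑ vv ∈ Fintype.piFinset (fun _ : Fin s => AN N ρ),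
    (∏ i, gibbsWres N M sigv lamv P β ρ (vv i) ω) * F vv ω) ∂P

/-- `E𝒢_{β,N}^{×s}[F]`, with an `ω`-dependent integrand allowed. -/
def gibbsExpW (N M : ℕ) (sigv lamv : ℕ → ℝ) (P : MeasureTheory.Measure FieldSp) (β : ℝ) (s : ℕ)
    (F : (Fin s → Vtx) → FieldSp → ℝ) : ℝ :=
  ∫ ω, (∑ vv ∈ Fintype.piFinset (fun _ : Fin s => VN N),
    (∏ i, gibbsW N M sigv lamv P β (vv i) ω) * F vv ω) ∂P

/-- The covariance `E[ψ_v ψ_{v'}]`. -/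
def psiCov (N M : ℕ) (sigv lamv : ℕ → ℝ) (P : MeasureTheory.Measure FieldSp) (v v' : Vtx) : ℝ :=
  ∫ ω, psiFld N M sigv lamv P v ω * psiFld N M sigv lamv P v' ω ∂P

/-- `C₀` is a constant witnessing the uniform variance upper bound
`max_{v∈V_N} E[ψ_v²] ≤ 𝒥_{σ²}(1) log N + C₀` for `N` large. -/
def IsVarBound (M : ℕ) (sigv lamv : ℕ → ℝ) (P : ℕ → MeasureTheory.Measure FieldSp) (C₀ : ℝ) : Prop :=
  0 < C₀ ∧ ∃ N₀ : ℕ, ∀ N ≥ N₀, ∀ v ∈ VN N,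
    psiCov N M sigv lamv (P N) v v ≤ Jsig2 M sigv lamv 1 * Real.log N + C₀

/-- The overlap `q^N(v,v')`. -/
def overlapQ (N M : ℕ) (sigv lamv : ℕ → ℝ) (P : MeasureTheory.Measure FieldSp) (C₀ : ℝ) (v v' : Vtx) : ℝ :=
  psiCov N M sigv lamv P v v' / (Jsig2 M sigv lamv 1 * Real.log N + C₀)

/-- Convergence in probability to a constant, for a sequence of random variables on a
sequence of probability spaces. -/
def TendstoInProb (P : ℕ → MeasureTheory.Measure FieldSp) (X : ℕ → FieldSp → ℝ) (c : ℝ) : Prop :=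
  ∀ ε : ℝ, 0 < ε → Tendsto (fun N => P N {ω | ε < |X N ω - c|}) atTop (nhds 0)

/-- Convergence in `L^p` to a constant. -/
def TendstoLp (P : ℕ → MeasureTheory.Measure FieldSp) (X : ℕ → FieldSp → ℝ) (p c : ℝ) : Prop :=
  Tendsto (fun N => ∫ ω, |X N ω - c| ^ p ∂(P N)) atTop (nhds 0)

/-- The branching scale `b_N(v,v')`. -/
def bScale (N : ℕ) (v v' : Vtx) : ℝ :=
  sSup {lam : ℝ | lam ∈ Set.Icc (0:ℝ) 1 ∧ ((nbhd N lam v) ∩ (nbhd N lam v')).Nonempty}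

end GFFCommon

/-! By symmetry it suffices to bound the mass of a strip of width `n ≈ N ^ (1 - ρ)` along one side of
the box. Cut the box into `K ≈ N ^ (ρ - η)` slabs by columns at distance `m ≈ N ^ (1 - ρ + η)` from
each other. By the Markov property the free field is the sum of the field killed on these columns
and of an independent harmonic extension of its values there. The laws of the killed field on the
slabs are exchangeable, so among the `K` translates of the strip, the first one carries at most a
fraction `1 / K` of the mean Gibbs mass of the field built from the killed part alone.

On the strips, `ψ` differs from that decoupled field by two terms. The averages over boxes reaching
a column have variance `O(η log N)`, because such boxes lie close to a place where the killed field
vanishes. The averages of the harmonic extension over the other boxes are small on the first strip,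
because the field vanishes on the side of `V_N`. On the other strips they need not be small, but
being centred and independent of the decoupled Gibbs measure they have a small Gibbs average, and by
Jensen's inequality they then barely lower the partition function. With fluctuations of order
`δ log N` both terms cost a factor `N ^ O(δ)`, which the factor `1 / K` beats. -/

noncomputable section

section PotentialTheory

/-- The averaging operator of simple random walk on `ℤ²`. -/
def neighborAvg : FieldSp →L[ℝ] FieldSp where
  toFun f x := (f (x.1 + 1, x.2) + f (x.1 - 1, x.2) + f (x.1, x.2 + 1) + f (x.1, x.2 - 1)) / 4
  map_add' f g := by ext x; simp only [Pi.add_apply]; ring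
  map_smul' c f := by ext x; simp only [Pi.smul_apply, smul_eq_mul, RingHom.id_apply]; ring
  cont := by fun_prop

/-- Nearest-neighbour adjacency on `ℤ²`. -/
def IsNeighbor (x y : Vtx) : Prop :=
  y = (x.1 + 1, x.2) ∨ y = (x.1 - 1, x.2) ∨ y = (x.1, x.2 + 1) ∨ y = (x.1, x.2 - 1)

/-- The sites outside `B` that are adjacent to `B`; a function that is harmonic on `B` is
determined by its values there. -/
def outerBdry (B : Finset Vtx) : Set Vtx := {y | y ∉ B ∧ ∃ x ∈ B, IsNeighbor x y}

/-- Discrete harmonicity at the sites of `B`. -/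
def HarmonicOn (B : Finset Vtx) (u : FieldSp) : Prop := ∀ x ∈ B, neighborAvg u x = u x

/-- Discrete superharmonicity at the sites of `B`. -/
def SuperharmonicOn (B : Finset Vtx) (u : FieldSp) : Prop := ∀ x ∈ B, neighborAvg u x ≤ u x

variable {B U V : Finset Vtx} {f g u w : FieldSp} {G : Vtx → Vtx → ℝ} {x y : Vtx}

lemma neighborAvg_apply (f : FieldSp) (x : Vtx) : neighborAvg f x =
    (f (x.1 + 1, x.2) + f (x.1 - 1, x.2) + f (x.1, x.2 + 1) + f (x.1, x.2 - 1)) / 4 := rfl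

lemma forall_isNeighbor {p : Vtx → Prop} : (∀ y, IsNeighbor x y → p y) ↔
    p (x.1 + 1, x.2) ∧ p (x.1 - 1, x.2) ∧ p (x.1, x.2 + 1) ∧ p (x.1, x.2 - 1) := by
  simp only [IsNeighbor, or_imp, forall_and, forall_eq]

lemma neighborAvg_le (h : ∀ y, IsNeighbor x y → f y ≤ g y) :
    neighborAvg f x ≤ neighborAvg g x := by
  obtain ⟨h₁, h₂, h₃, h₄⟩ := forall_isNeighbor.1 h
  rw [neighborAvg_apply, neighborAvg_apply]
  linarith

lemma neighborAvg_congr (h : ∀ y, IsNeighbor x y → f y = g y) :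
    neighborAvg f x = neighborAvg g x :=
  le_antisymm (neighborAvg_le fun y hy => (h y hy).le) (neighborAvg_le fun y hy => (h y hy).ge)

lemma neighborAvg_const (c : ℝ) (x : Vtx) : neighborAvg (fun _ => c) x = c := by
  rw [neighborAvg_apply]; ring

lemma neighborAvg_linear (L : FieldSp →L[ℝ] ℝ) (K : Vtx → FieldSp) (x : Vtx) :
    neighborAvg (fun z => L (K z)) x = L (fun y => neighborAvg (fun z => K z y) x) := by
  have avg_rows : (fun y => neighborAvg (fun z => K z y) x) = (4 : ℝ)⁻¹ •
      (K (x.1 + 1, x.2) + K (x.1 - 1, x.2) + K (x.1, x.2 + 1) + K (x.1, x.2 - 1)) := by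
    funext y
    simp only [neighborAvg_apply, Pi.smul_apply, Pi.add_apply, smul_eq_mul]
    ring
  rw [avg_rows]
  simp only [neighborAvg_apply, map_smul, map_add, smul_eq_mul]
  ring

lemma HarmonicOn.superharmonicOn (h : HarmonicOn B u) : SuperharmonicOn B u :=
  fun x hx => (h x hx).le

lemma harmonicOn_const (B : Finset Vtx) (c : ℝ) : HarmonicOn B fun _ => c :=
  fun x _ => neighborAvg_const c x

lemma HarmonicOn.mono (h : HarmonicOn U u) (hBU : B ⊆ U) : HarmonicOn B u :=
  fun x hx => h x (hBU hx)

lemma SuperharmonicOn.sub_harmonicOn (hw : SuperharmonicOn B w) (hu : HarmonicOn B u) :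
    SuperharmonicOn B (w - u) := fun x hx => by
  rw [map_sub, Pi.sub_apply, Pi.sub_apply, hu x hx]
  exact sub_le_sub_right (hw x hx) _

lemma SuperharmonicOn.nonneg (hu : SuperharmonicOn B u) (hbd : ∀ y ∈ outerBdry B, 0 ≤ u y)
    (hx : x ∈ B) : 0 ≤ u x := by
  by_contra! hneg
  obtain ⟨xmin, hxmin, hmin⟩ := B.exists_min_image u ⟨x, hx⟩
  have hmin_neg : u xmin < 0 := (hmin x hx).trans_lt hneg
  -- The right neighbour of the rightmost minimizer `z` must be a minimizer as well.
  obtain ⟨z, hz, hzright⟩ :=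
    (B.filter fun x => u x = u xmin).exists_max_image (fun x => x.1) ⟨xmin, by simp [hxmin]⟩
  simp only [Finset.mem_filter] at hz hzright
  have hge : ∀ y, IsNeighbor z y → u xmin ≤ u y := fun y hy => by
    by_cases hyB : y ∈ B
    · exact hmin y hyB
    · exact hmin_neg.le.trans (hbd y ⟨hyB, z, hz.1, hy⟩)
  have right_min : u (z.1 + 1, z.2) = u xmin := by
    obtain ⟨h₁, h₂, h₃, h₄⟩ := forall_isNeighbor.1 hge
    have hz_avg := hu z hz.1
    rw [neighborAvg_apply] at hz_avg
    linarith [hz.2]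
  by_cases hB : (z.1 + 1, z.2) ∈ B
  · exact absurd (hzright _ ⟨hB, right_min⟩) (by simp)
  · exact hmin_neg.not_ge (right_min ▸ hbd _ ⟨hB, z, hz.1, Or.inl rfl⟩)

lemma HarmonicOn.le_of_superharmonicOn (hu : HarmonicOn B u) (hw : SuperharmonicOn B w)
    (hbd : ∀ y ∈ outerBdry B, u y ≤ w y) (hx : x ∈ B) : u x ≤ w x :=
  sub_nonneg.1 <| (hw.sub_harmonicOn hu).nonneg (fun y hy => sub_nonneg.2 (hbd y hy)) hx

lemma HarmonicOn.eq_of_eq_outerBdry (hu : HarmonicOn B u) (hw : HarmonicOn B w)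
    (hbd : ∀ y ∈ outerBdry B, u y = w y) (hx : x ∈ B) : u x = w x :=
  le_antisymm (hu.le_of_superharmonicOn hw.superharmonicOn (fun y hy => (hbd y hy).le) hx)
    (hw.le_of_superharmonicOn hu.superharmonicOn (fun y hy => (hbd y hy).ge) hx)

/-- Extension by zero of a function on `B` to a field on `ℤ²`. -/
def extendZero (B : Finset Vtx) : (B → ℝ) →L[ℝ] FieldSp :=
  LinearMap.toContinuousLinearMap (Function.ExtendByZero.linearMap ℝ Subtype.val)

lemma extendZero_apply_coe (v : B → ℝ) (x : B) : extendZero B v x = v x :=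
  Subtype.val_injective.extend_apply v (0 : FieldSp) x

lemma extendZero_of_notMem (v : B → ℝ) (hx : x ∉ B) : extendZero B v x = 0 :=
  Function.extend_apply' v (0 : FieldSp) x fun ⟨a, ha⟩ => hx (ha ▸ a.2)

/-- The restriction to `B` of the discrete Laplacian `id - neighborAvg`. -/
def laplacianOn (B : Finset Vtx) : FieldSp →L[ℝ] (B → ℝ) :=
  .pi fun x => .proj x.1 ∘L (.id ℝ FieldSp - neighborAvg)

lemma harmonicOn_iff_laplacianOn_eq_zero : HarmonicOn B u ↔ laplacianOn B u = 0 :=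
  ⟨fun h => funext fun x => sub_eq_zero.2 (h x x.2).symm,
    fun h x hx => (sub_eq_zero.1 (congrFun h ⟨x, hx⟩)).symm⟩

/-- The Laplacian on `B` with zero boundary condition outside `B`. -/
def dirichletLaplacian (B : Finset Vtx) : (B → ℝ) →ₗ[ℝ] (B → ℝ) :=
  (laplacianOn B ∘L extendZero B).toLinearMap

lemma dirichletLaplacian_injective (B : Finset Vtx) :
    Function.Injective (dirichletLaplacian B) := by
  rw [← LinearMap.ker_eq_bot, LinearMap.ker_eq_bot']
  intro v hv
  have hharm : HarmonicOn B (extendZero B v) := harmonicOn_iff_laplacianOn_eq_zero.2 hv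
  funext x
  rw [← extendZero_apply_coe v x]
  exact hharm.eq_of_eq_outerBdry (harmonicOn_const B 0)
    (fun y hy => extendZero_of_notMem v hy.1) x.2

/-- The harmonic extension into `B` of the values of a field outside `B`. The values inside `B`
are corrected by the solution of the Poisson equation that cancels their Laplacian. -/
def harmonicExt (B : Finset Vtx) : FieldSp →L[ℝ] FieldSp :=
  .id ℝ FieldSp - extendZero B ∘L LinearMap.toContinuousLinearMap
    (LinearEquiv.ofInjectiveEndo _ (dirichletLaplacian_injective B)).symm.toLinearMap ∘L
    laplacianOn B

lemma harmonicExt_of_notMem (f : FieldSp) (hx : x ∉ B) : harmonicExt B f x = f x :=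
  (congrArg (f x - ·) (extendZero_of_notMem _ hx)).trans (sub_zero _)

lemma harmonicOn_harmonicExt (B : Finset Vtx) (f : FieldSp) : HarmonicOn B (harmonicExt B f) := by
  have hsolve : laplacianOn B (harmonicExt B f) = laplacianOn B f - dirichletLaplacian B
      ((LinearEquiv.ofInjectiveEndo _ (dirichletLaplacian_injective B)).symm (laplacianOn B f)) :=
    map_sub (laplacianOn B) _ _
  rw [harmonicOn_iff_laplacianOn_eq_zero, hsolve, sub_eq_zero]
  exact ((LinearEquiv.ofInjectiveEndo _ (dirichletLaplacian_injective B)).apply_symm_apply _).symm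

lemma SuperharmonicOn.harmonicExt_le_of_mem (hu : SuperharmonicOn B u)
    (hbd : ∀ y ∈ outerBdry B, f y ≤ u y) (hx : x ∈ B) : harmonicExt B f x ≤ u x :=
  (harmonicOn_harmonicExt B f).le_of_superharmonicOn hu
    (fun y hy => (harmonicExt_of_notMem f hy.1).trans_le (hbd y hy)) hx

lemma SuperharmonicOn.harmonicExt_le (hu : SuperharmonicOn B u) (hbd : ∀ y ∉ B, f y ≤ u y)
    (x : Vtx) : harmonicExt B f x ≤ u x := by
  by_cases hx : x ∈ B
  · exact hu.harmonicExt_le_of_mem (fun y hy => hbd y hy.1) hx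
  · exact (harmonicExt_of_notMem f hx).trans_le (hbd x hx)

lemma HarmonicOn.harmonicExt_eq_of_mem (hu : HarmonicOn B u)
    (hbd : ∀ y ∈ outerBdry B, f y = u y) (hx : x ∈ B) : harmonicExt B f x = u x :=
  (harmonicOn_harmonicExt B f).eq_of_eq_outerBdry hu
    (fun y hy => (harmonicExt_of_notMem f hy.1).trans (hbd y hy)) hx

lemma HarmonicOn.harmonicExt_eq (hu : HarmonicOn B u) (hbd : ∀ y ∉ B, f y = u y) :
    harmonicExt B f = u := by
  funext x
  by_cases hx : x ∈ B
  · exact hu.harmonicExt_eq_of_mem (fun y hy => hbd y hy.1) hx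
  · exact (harmonicExt_of_notMem f hx).trans (hbd x hx)

lemma HarmonicOn.harmonicExt_eq_self (hu : HarmonicOn B u) : harmonicExt B u = u :=
  hu.harmonicExt_eq fun _ _ => rfl

lemma harmonicExt_congr (h : ∀ y ∉ B, f y = g y) : harmonicExt B f = harmonicExt B g :=
  (harmonicOn_harmonicExt B g).harmonicExt_eq
    fun y hy => (h y hy).trans (harmonicExt_of_notMem g hy).symm

lemma harmonicExt_eq_zero (h : ∀ y ∉ B, f y = 0) : harmonicExt B f = 0 :=
  (harmonicOn_const B 0).harmonicExt_eq h

lemma harmonicExt_le_const {c : ℝ} (h : ∀ y ∉ B, f y ≤ c) (x : Vtx) : harmonicExt B f x ≤ c :=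
  (harmonicOn_const B c).superharmonicOn.harmonicExt_le h x

lemma harmonicExt_harmonicExt (hBU : B ⊆ U) (f : FieldSp) :
    harmonicExt B (harmonicExt U f) = harmonicExt U f :=
  ((harmonicOn_harmonicExt U f).mono hBU).harmonicExt_eq_self

end PotentialTheory

section GreenFunction

/-- `G` is the Green function of simple random walk killed outside `U`, normalized by `π/2`. -/
structure IsKilledGreen (U : Finset Vtx) (G : Vtx → Vtx → ℝ) : Prop where
  eq_zero : ∀ x y, x ∉ U ∨ y ∉ U → G x y = 0
  eq_avg_add : ∀ x ∈ U, ∀ y,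
    G x y = neighborAvg (fun z => G z y) x + if x = y then Real.pi / 2 else 0

variable {U V : Finset Vtx} {F u : FieldSp} {G : Vtx → Vtx → ℝ}

lemma ite_pi_div_two_nonneg (p : Prop) [Decidable p] : (0 : ℝ) ≤ if p then Real.pi / 2 else 0 := by
  split_ifs <;> positivity

lemma sum_mul_comp_add {a b : FieldSp} (e : Vtx) (ha : ∀ x ∉ U, a x = 0) (hb : ∀ x ∉ U, b x = 0) :
    ∑ z ∈ U, a z * b (z + e) = ∑ z ∈ U, b z * a (z - e) := by
  have hsum : ∀ c d : FieldSp, (∀ x ∉ U, c x = 0) → ∑ z ∈ U, c z * d z = ∑ᶠ z, c z * d z :=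
    fun c d hc => (finsum_eq_sum_of_support_subset _ fun z hz => by
      by_contra hzU
      exact hz (by simp only [hc z hzU, zero_mul])).symm
  rw [hsum a (fun z => b (z + e)) ha, hsum b (fun z => a (z - e)) hb,
    ← finsum_comp_equiv (Equiv.addRight e) (f := fun z => b z * a (z - e))]
  simp [mul_comm]

lemma sum_mul_neighborAvg_comm {a b : FieldSp} (ha : ∀ x ∉ U, a x = 0) (hb : ∀ x ∉ U, b x = 0) :
    ∑ z ∈ U, a z * neighborAvg b z = ∑ z ∈ U, b z * neighborAvg a z := by
  have hsplit : ∀ c d : FieldSp, ∑ z ∈ U, c z * neighborAvg d z =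
      (∑ z ∈ U, c z * d (z + (1, 0)) + ∑ z ∈ U, c z * d (z - (1, 0)) +
        ∑ z ∈ U, c z * d (z + (0, 1)) + ∑ z ∈ U, c z * d (z - (0, 1))) / 4 := fun c d => by
    simp only [← Finset.sum_add_distrib, Finset.sum_div]
    refine Finset.sum_congr rfl fun z _ => ?_
    have h₁ : z + (1, 0) = (z.1 + 1, z.2) := by ext <;> simp
    have h₂ : z - (1, 0) = (z.1 - 1, z.2) := by ext <;> simp
    have h₃ : z + (0, 1) = (z.1, z.2 + 1) := by ext <;> simp
    have h₄ : z - (0, 1) = (z.1, z.2 - 1) := by ext <;> simp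
    rw [h₁, h₂, h₃, h₄, neighborAvg_apply]
    ring
  rw [hsplit, hsplit, sum_mul_comp_add (1, 0) ha hb, sum_mul_comp_add (0, 1) ha hb,
    ← sum_mul_comp_add (1, 0) hb ha, ← sum_mul_comp_add (0, 1) hb ha]
  ring

lemma IsKilledGreen.symm (h : IsKilledGreen U G) (x y : Vtx) : G x y = G y x := by
  by_cases hx : x ∈ U
  swap
  · rw [h.eq_zero _ _ (Or.inl hx), h.eq_zero _ _ (Or.inr hx)]
  by_cases hy : y ∈ U
  swap
  · rw [h.eq_zero _ _ (Or.inr hy), h.eq_zero _ _ (Or.inl hy)]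
  have pairing : ∀ s t, t ∈ U → ∑ z ∈ U, G z s * neighborAvg (fun z => G z t) z =
      ∑ z ∈ U, G z s * G z t - G t s * (Real.pi / 2) := fun s t ht => by
    have hterm : ∀ z ∈ U, G z s * neighborAvg (fun z => G z t) z =
        G z s * G z t - if z = t then G z s * (Real.pi / 2) else 0 := fun z hz => by
      rw [h.eq_avg_add z hz t, mul_add, mul_ite, mul_zero, add_sub_cancel_right]
    rw [Finset.sum_congr rfl hterm, Finset.sum_sub_distrib, Finset.sum_ite_eq' U t, if_pos ht]
  have hself := sum_mul_neighborAvg_comm (fun z hz => h.eq_zero z x (Or.inl hz))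
    (fun z hz => h.eq_zero z y (Or.inl hz))
  rw [pairing x y hy, pairing y x hx] at hself
  simp only [mul_comm (G _ y) (G _ x)] at hself
  exact mul_right_cancel₀ (by positivity : Real.pi / 2 ≠ 0) (sub_right_injective hself).symm

lemma IsGreenFn.isKilledGreen {B : Finset Vtx} (h : IsGreenFn B G) : IsKilledGreen (intr B) G := by
  refine ⟨h.1, fun x hx y => ?_⟩
  by_cases hy : y ∈ intr B
  · rw [h.2 y hy x hx, neighborAvg_apply]
    split_ifs <;> ring
  · have hne : x ≠ y := fun e => hy (e ▸ hx)
    simp [neighborAvg_apply, h.1 _ _ (Or.inr hy), hne]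

lemma IsKilledGreen.le (h : IsKilledGreen U G) {y : Vtx}
    (hF : ∀ x ∈ U, neighborAvg F x + (if x = y then Real.pi / 2 else 0) ≤ F x)
    (hbd : ∀ z ∈ outerBdry U, 0 ≤ F z) {x : Vtx} (hx : x ∈ U) : G x y ≤ F x := by
  have hsuper : SuperharmonicOn U (F - fun x => G x y) := fun x hx => by
    rw [map_sub, Pi.sub_apply, Pi.sub_apply]
    linarith [hF x hx, h.eq_avg_add x hx y]
  refine sub_nonneg.1 (hsuper.nonneg (fun z hz => ?_) hx)
  rw [Pi.sub_apply, h.eq_zero z y (Or.inl hz.1), sub_zero]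
  exact hbd z hz

lemma IsKilledGreen.eq (h : IsKilledGreen U G) {y : Vtx}
    (hu : ∀ x ∈ U, u x = neighborAvg u x + if x = y then Real.pi / 2 else 0)
    (hbd : ∀ z ∈ outerBdry U, u z = 0) {x : Vtx} (hx : x ∈ U) : G x y = u x := by
  have hharm : HarmonicOn U (u - fun x => G x y) := fun x hx => by
    rw [map_sub, Pi.sub_apply, Pi.sub_apply]
    linarith [hu x hx, h.eq_avg_add x hx y]
  have hzero := hharm.eq_of_eq_outerBdry (harmonicOn_const U 0)
    (fun z hz => by rw [Pi.sub_apply, hbd z hz, h.eq_zero z y (Or.inl hz.1), sub_zero]) hx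
  exact (sub_eq_zero.1 hzero).symm

/-- The Green function killed outside `U`, obtained from the Green function `G` of a larger
domain. -/
def restrictGreen (U : Finset Vtx) (G : Vtx → Vtx → ℝ) (x y : Vtx) : ℝ :=
  G x y - harmonicExt U (G x) y

lemma IsKilledGreen.harmonicOn_linear_harmonicExt (h : IsKilledGreen V G) (hU : U ⊆ V)
    (L : FieldSp →L[ℝ] ℝ) : HarmonicOn U fun x => L (harmonicExt U (G x)) := fun x hx => by
  have hcol : (fun y => neighborAvg (fun z => G z y) x) =
      G x - fun y => if x = y then Real.pi / 2 else 0 := by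
    funext y
    rw [Pi.sub_apply, h.eq_avg_add x (hU hx) y, add_sub_cancel_right]
  have hpole : harmonicExt U (fun y => if x = y then Real.pi / 2 else 0) = 0 :=
    harmonicExt_eq_zero fun y hy => if_neg fun e : x = y => hy (e ▸ hx)
  have hlin := neighborAvg_linear (L ∘L harmonicExt U) G x
  simp only [ContinuousLinearMap.comp_apply] at hlin
  rw [hlin, hcol, map_sub, hpole, sub_zero]

lemma isKilledGreen_restrictGreen (h : IsKilledGreen V G) (hU : U ⊆ V) :
    IsKilledGreen U (restrictGreen U G) where
  eq_zero x y hxy := by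
    by_cases hy : y ∈ U
    · have hx : x ∉ U := hxy.resolve_right (not_not.2 hy)
      have hharm : HarmonicOn U (G x) := fun z hz => by
        rw [h.symm x z, h.eq_avg_add z (hU hz) x, if_neg fun e : z = x => hx (e ▸ hz),
          add_zero]
        exact neighborAvg_congr fun t _ => h.symm x t
      rw [restrictGreen, hharm.harmonicExt_eq_self, sub_self]
    · rw [restrictGreen, harmonicExt_of_notMem _ hy, sub_self]
  eq_avg_add x hx y := by
    have hharm := h.harmonicOn_linear_harmonicExt hU (.proj y) x hx
    simp only [ContinuousLinearMap.proj_apply] at hharm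
    have havg : neighborAvg (fun z => restrictGreen U G z y) x =
        neighborAvg (fun z => G z y) x - neighborAvg (fun z => harmonicExt U (G z) y) x :=
      congrFun (map_sub neighborAvg _ _) x
    rw [havg, hharm, restrictGreen, h.eq_avg_add x (hU hx) y]
    ring

end GreenFunction

section Box

variable {N : ℕ} {B : Finset Vtx} {f g : FieldSp} {x : Vtx}

lemma mem_VN : x ∈ VN N ↔ 0 ≤ x.1 ∧ x.1 ≤ N ∧ 0 ≤ x.2 ∧ x.2 ≤ N := by
  simp only [VN, Finset.mem_Icc, Prod.le_def]
  tauto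

lemma card_VN (N : ℕ) : (VN N).card = (N + 1) ^ 2 := by
  have hprod : VN N = Finset.Icc (0 : ℤ) N ×ˢ Finset.Icc (0 : ℤ) N := rfl
  rw [hprod, Finset.card_product, Int.card_Icc, sub_zero, Int.toNat_natCast_add_one, sq]

lemma mem_intr_iff : x ∈ intr B ↔ x ∈ B ∧ ∀ y, IsNeighbor x y → y ∈ B := by
  rw [forall_isNeighbor]
  simp only [intr, bdry, Finset.mem_sdiff, Finset.mem_filter]
  tauto

lemma mem_intr_VN : x ∈ intr (VN N) ↔ 1 ≤ x.1 ∧ x.1 + 1 ≤ N ∧ 1 ≤ x.2 ∧ x.2 + 1 ≤ N := by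
  rw [mem_intr_iff, forall_isNeighbor]
  simp only [mem_VN]
  omega

lemma intr_subset (B : Finset Vtx) : intr B ⊆ B := Finset.sdiff_subset

lemma outerBdry_subset {U : Finset Vtx} (hU : U ⊆ intr B) : outerBdry U ⊆ B := by
  rintro y ⟨-, x, hx, hxy⟩
  exact (mem_intr_iff.1 (hU hx)).2 y hxy

end Box

section Covariance

variable {U V : Finset Vtx} {G : Vtx → Vtx → ℝ}

/-- Evaluation of a field at the site `x`, as a continuous linear functional. -/
abbrev evalCLM (x : Vtx) : FieldSp →L[ℝ] ℝ := .proj x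

/-- The covariance of `L X` and `L' X` for a centred random field `X` with covariance kernel `G`. -/
def kernelCov (G : Vtx → Vtx → ℝ) (L L' : FieldSp →L[ℝ] ℝ) : ℝ := L fun x => L' (G x)

lemma kernelCov_neg_self (G : Vtx → Vtx → ℝ) (L : FieldSp →L[ℝ] ℝ) :
    kernelCov G (-L) (-L) = kernelCov G L L := by
  have hneg : (fun x => (-L) (G x)) = -fun x => L (G x) := rfl
  rw [kernelCov, hneg, map_neg, neg_apply, neg_neg, kernelCov]

lemma clm_eq_sum (L : FieldSp →L[ℝ] ℝ) {f : FieldSp} (hf : ∀ x ∉ U, f x = 0) :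
    L f = ∑ x ∈ U, L (Pi.single x 1) * f x := by
  have hdecomp : f = ∑ x ∈ U, f x • Pi.single x (1 : ℝ) := by
    funext y
    simp only [Finset.sum_apply, Pi.smul_apply, Pi.single_apply, smul_eq_mul, mul_ite, mul_one,
      mul_zero, Finset.sum_ite_eq]
    split_ifs with hy
    · rfl
    · exact hf y hy
  conv_lhs => rw [hdecomp]
  simp only [map_sum, map_smul, smul_eq_mul, mul_comm]

lemma kernelCov_eq_sum (hG : ∀ x y, x ∉ U ∨ y ∉ U → G x y = 0) (L L' : FieldSp →L[ℝ] ℝ) :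
    kernelCov G L L' =
      ∑ x ∈ U, ∑ y ∈ U, L (Pi.single x 1) * (L' (Pi.single y 1) * G x y) := by
  have hrow : ∀ x, L' (G x) = ∑ y ∈ U, L' (Pi.single y 1) * G x y := fun x =>
    clm_eq_sum L' fun y hy => hG x y (Or.inr hy)
  rw [kernelCov, clm_eq_sum L (U := U)]
  · simp only [hrow, Finset.mul_sum]
  · intro x hx
    rw [hrow]
    exact Finset.sum_eq_zero fun y _ => by rw [hG x y (Or.inl hx), mul_zero]

lemma IsKilledGreen.kernelCov_comm (hG : IsKilledGreen U G) (L L' : FieldSp →L[ℝ] ℝ) :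
    kernelCov G L L' = kernelCov G L' L := by
  rw [kernelCov_eq_sum hG.eq_zero, kernelCov_eq_sum hG.eq_zero, Finset.sum_comm]
  exact Finset.sum_congr rfl fun x _ => Finset.sum_congr rfl fun y _ => by rw [hG.symm y x]; ring

lemma IsKilledGreen.kernelCov_add_self (hG : IsKilledGreen U G) (L L' : FieldSp →L[ℝ] ℝ) :
    kernelCov G (L + L') (L + L') =
      kernelCov G L L + 2 * kernelCov G L L' + kernelCov G L' L' := by
  have hadd : kernelCov G (L + L') (L + L') =
      L ((fun x => L (G x)) + fun x => L' (G x)) +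
        L' ((fun x => L (G x)) + fun x => L' (G x)) := rfl
  have hcomm : L' (fun x => L (G x)) = L fun x => L' (G x) := hG.kernelCov_comm L' L
  rw [hadd, map_add, map_add, hcomm]
  simp only [kernelCov]
  ring

lemma sum_mul_sub_neighborAvg_nonneg {f : FieldSp} (hf : ∀ x ∉ U, f x = 0) :
    0 ≤ ∑ z ∈ U, f z * (f z - neighborAvg f z) := by
  have havg_sq : ∑ z ∈ U, neighborAvg (f ^ 2) z ≤ ∑ z ∈ U, (f ^ 2) z := by
    have hcomm := sum_mul_neighborAvg_comm (U := U) (a := fun z => if z ∈ U then 1 else 0)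
      (b := f ^ 2) (fun x hx => if_neg hx) fun x hx => by rw [Pi.pow_apply, hf x hx, sq, mul_zero]
    simp only [ite_mul, one_mul, zero_mul, Finset.sum_ite_mem, Finset.inter_self] at hcomm
    rw [hcomm]
    refine Finset.sum_le_sum fun z _ => mul_le_of_le_one_right (sq_nonneg (f z)) ?_
    refine (neighborAvg_le (g := fun _ => 1) fun y _ => ?_).trans_eq (neighborAvg_const 1 z)
    split_ifs <;> norm_num
  have hpointwise : ∀ z ∈ U,
      ((f ^ 2) z - neighborAvg (f ^ 2) z) / 2 ≤ f z * (f z - neighborAvg f z) := fun z _ => by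
    simp only [neighborAvg_apply, Pi.pow_apply]
    linarith [sq_nonneg (f z - f (z.1 + 1, z.2)), sq_nonneg (f z - f (z.1 - 1, z.2)),
      sq_nonneg (f z - f (z.1, z.2 + 1)), sq_nonneg (f z - f (z.1, z.2 - 1))]
  refine le_trans ?_ (Finset.sum_le_sum hpointwise)
  rw [← Finset.sum_div, Finset.sum_sub_distrib]
  linarith

/-- The potential `x ↦ L (G x)` solves the Poisson equation with charge `(π/2) L`. -/
lemma IsKilledGreen.clm_sub_neighborAvg (hG : IsKilledGreen U G) (L : FieldSp →L[ℝ] ℝ) {x : Vtx}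
    (hx : x ∈ U) : L (G x) - neighborAvg (fun z => L (G z)) x =
      Real.pi / 2 * L (Pi.single x 1) := by
  have hcol : (fun y => neighborAvg (fun z => G z y) x) =
      G x - (Real.pi / 2) • (Pi.single x 1 : FieldSp) := by
    funext y
    simp only [Pi.sub_apply, hG.eq_avg_add x hx y, Pi.smul_apply, Pi.single_apply, smul_eq_mul,
      mul_ite, mul_one, mul_zero, eq_comm (a := x), add_sub_cancel_right]
  rw [neighborAvg_linear, hcol, map_sub, map_smul, smul_eq_mul, sub_sub_cancel]

lemma IsKilledGreen.kernelCov_self_nonneg (hG : IsKilledGreen U G) (L : FieldSp →L[ℝ] ℝ) :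
    0 ≤ kernelCov G L L := by
  have hzero : ∀ x ∉ U, L (G x) = 0 := fun x hx => by
    rw [show G x = 0 from funext fun y => hG.eq_zero x y (Or.inl hx), map_zero]
  have henergy : ∑ z ∈ U, L (G z) * (L (G z) - neighborAvg (fun z => L (G z)) z) =
      Real.pi / 2 * kernelCov G L L := by
    rw [kernelCov, clm_eq_sum L hzero, Finset.mul_sum]
    exact Finset.sum_congr rfl fun z hz => by rw [hG.clm_sub_neighborAvg L hz]; ring
  exact nonneg_of_mul_nonneg_right (henergy ▸ sum_mul_sub_neighborAvg_nonneg hzero)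
    (by positivity)

/-- The part of a field that vanishes outside `U`: the field minus the harmonic extension of its
values outside `U`. By the Markov property these two parts of a Gaussian free field are
independent. -/
def dirichletPart (U : Finset Vtx) : FieldSp →L[ℝ] FieldSp := .id ℝ FieldSp - harmonicExt U

lemma dirichletPart_apply (U : Finset Vtx) (f : FieldSp) :
    dirichletPart U f = f - harmonicExt U f := rfl

lemma HarmonicOn.dirichletPart_eq_zero {u : FieldSp} (hu : HarmonicOn U u) :
    dirichletPart U u = 0 := by
  rw [dirichletPart_apply, hu.harmonicExt_eq_self, sub_self]

lemma IsKilledGreen.kernelCov_dirichletPart (hG : IsKilledGreen V G) (hU : U ⊆ V)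
    (L L' : FieldSp →L[ℝ] ℝ) :
    kernelCov G (L ∘L dirichletPart U) (L' ∘L dirichletPart U) =
      kernelCov (restrictGreen U G) L L' := by
  change L (dirichletPart U fun x => L' (restrictGreen U G x)) = _
  rw [dirichletPart_apply, harmonicExt_eq_zero, sub_zero, kernelCov]
  intro x hx
  rw [show restrictGreen U G x = 0 from
    funext fun y => (isKilledGreen_restrictGreen hG hU).eq_zero x y (Or.inl hx), map_zero]

lemma IsKilledGreen.kernelCov_dirichletPart_harmonicExt (hG : IsKilledGreen V G) (hU : U ⊆ V)
    (L L' : FieldSp →L[ℝ] ℝ) :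
    kernelCov G (L ∘L dirichletPart U) (L' ∘L harmonicExt U) = 0 := by
  change L (dirichletPart U fun x => L' (harmonicExt U (G x))) = 0
  rw [(hG.harmonicOn_linear_harmonicExt hU L').dirichletPart_eq_zero, map_zero]

lemma IsKilledGreen.kernelCov_harmonicExt_apply (hG : IsKilledGreen V G) (hU : U ⊆ V) (v : Vtx) :
    kernelCov G (evalCLM v ∘L harmonicExt U) (evalCLM v ∘L harmonicExt U) =
      harmonicExt U (G v) v := by
  change harmonicExt U (fun x => evalCLM v (harmonicExt U (G x))) v = _
  rw [(hG.harmonicOn_linear_harmonicExt hU (evalCLM v)).harmonicExt_eq_self]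
  rfl

end Covariance

section GaussianField

open MeasureTheory ProbabilityTheory

variable {Ω Ω' : Type*} {mΩ : MeasurableSpace Ω} {mΩ' : MeasurableSpace Ω'}
  {P : Measure Ω} {P' : Measure Ω'} {X : Ω → FieldSp} {X' : Ω' → FieldSp}
  {U V : Finset Vtx} {G G' : Vtx → Vtx → ℝ}

/-- `X` is a Gaussian free field on `U` vanishing outside `U`: a centred Gaussian field whose
covariance kernel is the Green function `G` of `U`. -/
structure IsKilledGFF (U : Finset Vtx) (G : Vtx → Vtx → ℝ) (X : Ω → FieldSp) (P : Measure Ω) :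
    Prop where
  isKilledGreen : IsKilledGreen U G
  measurable : Measurable X
  hasLaw : ∀ L : FieldSp →L[ℝ] ℝ,
    HasLaw (fun ω => L (X ω)) (gaussianReal 0 (kernelCov G L L).toNNReal) P

lemma measure_ext_of_map_clm {ι : Type*} {μ ν : Measure (ι → ℝ)} [IsFiniteMeasure μ]
    [IsFiniteMeasure ν] (h : ∀ L : (ι → ℝ) →L[ℝ] ℝ, Measurable L → μ.map L = ν.map L) : μ = ν := by
  refine IsProjectiveLimit.unique (P := fun I => ν.map I.restrict) (fun I => ?_) fun I => rfl
  refine Measure.ext_of_charFunDual (funext fun l => ?_)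
  let L : (ι → ℝ) →L[ℝ] ℝ := l ∘L .pi fun i : I => .proj i.1
  have hL : (L : (ι → ℝ) → ℝ) = l ∘ I.restrict := rfl
  have hI : Measurable (I.restrict : (ι → ℝ) → _) := Finset.measurable_restrict I
  have hmap := h L (hL ▸ l.continuous.measurable.comp hI)
  rw [hL, ← Measure.map_map l.continuous.measurable hI,
    ← Measure.map_map l.continuous.measurable hI] at hmap
  rw [charFunDual_eq_charFun_map_one, charFunDual_eq_charFun_map_one, hmap]

namespace IsKilledGFF

lemma isProbabilityMeasure (h : IsKilledGFF U G X P) : IsProbabilityMeasure P :=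
  (h.hasLaw 0).isProbabilityMeasure

lemma of_clm (h : IsKilledGFF U G X P) (hG' : IsKilledGreen V G') (A : FieldSp →L[ℝ] FieldSp)
    (hcov : ∀ L : FieldSp →L[ℝ] ℝ, kernelCov G (L ∘L A) (L ∘L A) = kernelCov G' L L) :
    IsKilledGFF V G' (fun ω => A (X ω)) P where
  isKilledGreen := hG'
  measurable := A.continuous.measurable.comp h.measurable
  hasLaw L := hcov L ▸ h.hasLaw (L ∘L A)

lemma dirichletPart (h : IsKilledGFF V G X P) (hU : U ⊆ V) :
    IsKilledGFF U (restrictGreen U G) (fun ω => dirichletPart U (X ω)) P :=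
  h.of_clm (isKilledGreen_restrictGreen h.isKilledGreen hU) _ fun L =>
    h.isKilledGreen.kernelCov_dirichletPart hU L L

lemma comp_equiv (h : IsKilledGFF U G X P) (e : Vtx ≃ Vtx)
    (hG : ∀ x y, G (e x) (e y) = G x y) : IsKilledGFF U G (fun ω => X ω ∘ e) P := by
  let A : FieldSp →L[ℝ] FieldSp := .pi fun x => .proj (e x)
  refine h.of_clm h.isKilledGreen A fun L => ?_
  change L (fun x => L fun y => G (e x) (e y)) = _
  simp only [hG, kernelCov]

lemma identDistrib (h : IsKilledGFF U G X P) (h' : IsKilledGFF U G X' P') :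
    IdentDistrib X X' P P' where
  aemeasurable_fst := h.measurable.aemeasurable
  aemeasurable_snd := h'.measurable.aemeasurable
  map_eq := by
    have := h.isProbabilityMeasure
    have := h'.isProbabilityMeasure
    refine measure_ext_of_map_clm fun L hL => ?_
    rw [Measure.map_map hL h.measurable, Measure.map_map hL h'.measurable]
    exact (h.hasLaw L).map_eq.trans (h'.hasLaw L).map_eq.symm

lemma hasGaussianLaw (h : IsKilledGFF U G X P) : HasGaussianLaw X P where
  isGaussian_map := isGaussian_of_map_eq_gaussianReal fun L =>
    ⟨0, _, by
      rw [Measure.map_map L.continuous.measurable h.measurable]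
      exact (h.hasLaw L).map_eq⟩

lemma memLp_two (h : IsKilledGFF U G X P) (L : FieldSp →L[ℝ] ℝ) :
    MemLp (fun ω => L (X ω)) 2 P :=
  (h.hasLaw L).hasGaussianLaw.memLp_two

lemma integral_eq_zero (h : IsKilledGFF U G X P) (L : FieldSp →L[ℝ] ℝ) :
    ∫ ω, L (X ω) ∂P = 0 :=
  (h.hasLaw L).integral_eq.trans integral_id_gaussianReal

lemma variance_eq (h : IsKilledGFF U G X P) (L : FieldSp →L[ℝ] ℝ) :
    Var[fun ω => L (X ω); P] = kernelCov G L L := by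
  rw [(h.hasLaw L).variance_eq, variance_id_gaussianReal,
    Real.coe_toNNReal _ (h.isKilledGreen.kernelCov_self_nonneg L)]

lemma integral_sq (h : IsKilledGFF U G X P) (L : FieldSp →L[ℝ] ℝ) :
    ∫ ω, L (X ω) ^ 2 ∂P = kernelCov G L L := by
  rw [← h.variance_eq L,
    variance_of_integral_eq_zero (h.hasLaw L).aemeasurable (h.integral_eq_zero L)]

lemma covariance_eq (h : IsKilledGFF U G X P) (L L' : FieldSp →L[ℝ] ℝ) :
    cov[fun ω => L (X ω), fun ω => L' (X ω); P] = kernelCov G L L' := by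
  have := h.isProbabilityMeasure
  have hadd := variance_fun_add (h.memLp_two L) (h.memLp_two L')
  rw [h.variance_eq, h.variance_eq] at hadd
  have hsum := (h.variance_eq (L + L')).trans (h.isKilledGreen.kernelCov_add_self L L')
  simp only [add_apply] at hsum
  linarith

lemma indepFun (h : IsKilledGFF U G X P) {A A' : FieldSp →L[ℝ] FieldSp}
    (hcov : ∀ L L' : FieldSp →L[ℝ] ℝ, kernelCov G (L ∘L A) (L' ∘L A') = 0) :
    IndepFun (fun ω => A (X ω)) (fun ω => A' (X ω)) P := by
  have hproc : IsGaussianProcess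
      (Sum.elim (fun x ω => A (X ω) x) fun x ω => A' (X ω) x) P := ⟨fun I => by
    let J : FieldSp →L[ℝ] (I → ℝ) :=
      .pi fun i => Sum.elim (fun x => evalCLM x ∘L A) (fun x => evalCLM x ∘L A') i.1
    have hJ : (fun ω => I.restrict fun i =>
        Sum.elim (fun x ω => A (X ω) x) (fun x ω => A' (X ω) x) i ω) = J ∘ X := by
      funext ω ⟨i, hi⟩
      cases i <;> rfl
    rw [hJ]
    exact h.hasGaussianLaw.map_of_measurable J J.continuous.measurable⟩
  have hmeas : ∀ (B : FieldSp →L[ℝ] FieldSp) x, AEMeasurable (fun ω => B (X ω) x) P :=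
    fun B x => (h.hasLaw (evalCLM x ∘L B)).aemeasurable
  exact hproc.indepFun_of_covariance_eq_zero (hmeas A) (hmeas A') fun x y =>
    (h.covariance_eq (evalCLM x ∘L A) (evalCLM y ∘L A')).trans (hcov (evalCLM x) (evalCLM y))

lemma indepFun_dirichletPart_harmonicExt (h : IsKilledGFF V G X P) (hU : U ⊆ V) :
    IndepFun (fun ω => _root_.dirichletPart U (X ω)) (fun ω => harmonicExt U (X ω)) P :=
  h.indepFun (h.isKilledGreen.kernelCov_dirichletPart_harmonicExt hU)

lemma measurable_iSup_comap_harmonicExt (X : Ω → FieldSp) (U : Finset Vtx) :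
    Measurable[⨆ w ∉ U, MeasurableSpace.comap (fun ω => X ω w) inferInstance]
      fun ω => harmonicExt U (X ω) := by
  let _ : MeasurableSpace Ω := ⨆ w ∉ U, MeasurableSpace.comap (fun ω => X ω w) inferInstance
  have hreset : (fun ω => harmonicExt U (X ω)) =
      harmonicExt U ∘ fun ω w => if w ∈ U then 0 else X ω w :=
    funext fun ω => harmonicExt_congr fun w hw => (if_neg hw).symm
  rw [hreset]
  refine (harmonicExt U).continuous.measurable.comp (measurable_pi_iff.2 fun w => ?_)
  by_cases hw : w ∈ U
  · simp only [hw, if_true, measurable_const]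
  · simp only [hw, if_false]
    exact Measurable.of_comap_le (le_iSup₂_of_le w hw le_rfl)

lemma iSup_comap_le_comap_harmonicExt (X : Ω → FieldSp) (U : Finset Vtx) :
    ⨆ w ∉ U, MeasurableSpace.comap (fun ω => X ω w) inferInstance ≤
      MeasurableSpace.comap (fun ω => harmonicExt U (X ω)) inferInstance := by
  refine iSup₂_le fun w hw => Measurable.comap_le ?_
  simp only [← harmonicExt_of_notMem (X _) hw]
  exact (measurable_pi_apply w).comp (comap_measurable _)

lemma condExp_eval (h : IsKilledGFF V G X P) (hU : U ⊆ V) (v : Vtx) :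
    P[fun ω => X ω v | ⨆ w ∉ U, MeasurableSpace.comap (fun ω => X ω w) inferInstance] =ᵐ[P]
      fun ω => harmonicExt U (X ω) v := by
  have := h.isProbabilityMeasure
  set m : MeasurableSpace Ω := ⨆ w ∉ U, MeasurableSpace.comap (fun ω => X ω w) inferInstance
  have hm : m ≤ mΩ := iSup₂_le fun w _ => ((measurable_pi_apply w).comp h.measurable).comap_le
  have hindep : Indep (MeasurableSpace.comap (fun ω => _root_.dirichletPart U (X ω)) inferInstance)
      m P :=
    indep_of_indep_of_le_right (h.indepFun_dirichletPart_harmonicExt hU)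
      (iSup_comap_le_comap_harmonicExt X U)
  have hdirichlet : P[fun ω => _root_.dirichletPart U (X ω) v | m] =ᵐ[P] 0 := by
    refine (condExp_indep_eq ((_root_.dirichletPart U).continuous.measurable.comp
      h.measurable).comap_le hm ((measurable_pi_apply v).comp
        (comap_measurable _)).stronglyMeasurable hindep).trans (.of_eq ?_)
    exact funext fun _ => h.integral_eq_zero (evalCLM v ∘L _root_.dirichletPart U)
  have hint : ∀ A : FieldSp →L[ℝ] FieldSp, Integrable (fun ω => A (X ω) v) P := fun A =>
    (h.memLp_two (evalCLM v ∘L A)).integrable one_le_two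
  have hharmonic : P[fun ω => harmonicExt U (X ω) v | m] = fun ω => harmonicExt U (X ω) v :=
    condExp_of_stronglyMeasurable hm
      ((measurable_pi_apply v).comp (measurable_iSup_comap_harmonicExt X U)).stronglyMeasurable
      (hint _)
  have hsplit : (fun ω => X ω v) =
      (fun ω => _root_.dirichletPart U (X ω) v) + fun ω => harmonicExt U (X ω) v :=
    funext fun ω => (sub_add_cancel _ _).symm
  rw [hsplit]
  refine (condExp_add (hint _) (hint _) m).trans ?_
  rw [hharmonic]
  filter_upwards [hdirichlet] with ω hω
  rw [Pi.add_apply, hω, Pi.zero_apply, zero_add]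

lemma measureReal_lt_abs_le (h : IsKilledGFF U G X P) {L : FieldSp →L[ℝ] ℝ} {s a : ℝ}
    (ha : 0 ≤ a) (hs : kernelCov G L L ≤ s) :
    P.real {ω | a < |L (X ω)|} ≤ 2 * Real.exp (-a ^ 2 / (2 * s)) := by
  have := h.isProbabilityMeasure
  have hvar := h.isKilledGreen.kernelCov_self_nonneg
  have hone_sided : ∀ L : FieldSp →L[ℝ] ℝ, kernelCov G L L ≤ s →
      P.real {ω | a ≤ L (X ω)} ≤ Real.exp (-a ^ 2 / (2 * s)) := fun L hs => by
    have hsubgaussian : HasSubgaussianMGF (fun ω => L (X ω)) s.toNNReal P := by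
      refine HasSubgaussianMGF.of_map (X := id) (h.hasLaw L).aemeasurable ?_
      rw [(h.hasLaw L).map_eq]
      refine ⟨integrable_exp_mul_gaussianReal, fun t => ?_⟩
      rw [congrFun mgf_id_gaussianReal t, zero_mul, zero_add]
      gcongr
    have htail := hsubgaussian.measure_ge_le ha
    rwa [Real.coe_toNNReal _ ((hvar L).trans hs)] at htail
  have hcover : {ω | a < |L (X ω)|} ⊆ {ω | a ≤ L (X ω)} ∪ {ω | a ≤ (-L) (X ω)} :=
    fun ω hω => (lt_abs.1 hω).imp (fun hlt : a < L (X ω) => hlt.le) fun hlt : a < -L (X ω) => hlt.le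
  calc P.real {ω | a < |L (X ω)|}
      ≤ P.real {ω | a ≤ L (X ω)} + P.real {ω | a ≤ (-L) (X ω)} :=
        (measureReal_mono hcover).trans (measureReal_union_le _ _)
    _ ≤ Real.exp (-a ^ 2 / (2 * s)) + Real.exp (-a ^ 2 / (2 * s)) :=
        add_le_add (hone_sided L hs) (hone_sided (-L) ((kernelCov_neg_self G L).trans_le hs))
    _ = 2 * Real.exp (-a ^ 2 / (2 * s)) := (two_mul _).symm

end IsKilledGFF

end GaussianField

section LogarithmicMajorant

variable {A K : ℝ} {x y : Vtx}

/-- The squared Euclidean distance of two sites. -/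
def sqDist (x y : Vtx) : ℝ := ((x.1 : ℝ) - y.1) ^ 2 + ((x.2 : ℝ) - y.2) ^ 2

/-- The factor that gives the superharmonic function `-log (1 + |·|²)` the charge `π/2` at `0`. -/
def logCharge : ℝ := (Real.pi / 2) / Real.log 2

/-- A logarithmic supersolution of the equation of the Green function with pole `y`. It is
nonnegative as long as `1 + |x - y|² ≤ A`. -/
def logMajorant (A : ℝ) (x y : Vtx) : ℝ :=
  logCharge * (Real.log A - Real.log (sqDist x y + 1))

lemma sqDist_comm (x y : Vtx) : sqDist x y = sqDist y x := by
  rw [sqDist, sqDist, sub_sq_comm, sub_sq_comm (x.2 : ℝ)]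

lemma sqDist_nonneg (x y : Vtx) : 0 ≤ sqDist x y := by
  unfold sqDist
  positivity

lemma sqDist_le {r : ℝ} (h₁ : |(x.1 : ℝ) - y.1| ≤ r) (h₂ : |(x.2 : ℝ) - y.2| ≤ r) :
    sqDist x y ≤ 2 * r ^ 2 := by
  rw [sqDist, ← sq_abs ((x.1 : ℝ) - y.1), ← sq_abs ((x.2 : ℝ) - y.2), two_mul]
  gcongr

lemma logCharge_pos : 0 < logCharge := by
  have := Real.log_pos one_lt_two
  unfold logCharge
  positivity

lemma four_mul_log_sq_add_sq_add_one_le (a b : ℝ) : 4 * Real.log (a ^ 2 + b ^ 2 + 1) ≤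
    Real.log ((a + 1) ^ 2 + b ^ 2 + 1) + Real.log ((a - 1) ^ 2 + b ^ 2 + 1) +
      Real.log (a ^ 2 + (b + 1) ^ 2 + 1) + Real.log (a ^ 2 + (b - 1) ^ 2 + 1) := by
  have hprod : ((a + 1) ^ 2 + b ^ 2 + 1) * ((a - 1) ^ 2 + b ^ 2 + 1) *
      (a ^ 2 + (b + 1) ^ 2 + 1) * (a ^ 2 + (b - 1) ^ 2 + 1) - (a ^ 2 + b ^ 2 + 1) ^ 4 =
      2 * (a ^ 2 + b ^ 2 + 2) ^ 2 + 4 * (a ^ 2 + b ^ 2) + 7 + 16 * (a * b) ^ 2 := by ring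
  rw [← Real.log_mul (by positivity) (by positivity), ← Real.log_mul (by positivity)
    (by positivity), ← Real.log_mul (by positivity) (by positivity)]
  have hpow : 4 * Real.log (a ^ 2 + b ^ 2 + 1) = Real.log ((a ^ 2 + b ^ 2 + 1) ^ 4) := by
    rw [Real.log_pow, Nat.cast_ofNat]
  rw [hpow]
  refine Real.log_le_log (by positivity) (sub_nonneg.1 ?_)
  rw [hprod]
  positivity

lemma logMajorant_comm (A : ℝ) (x y : Vtx) : logMajorant A x y = logMajorant A y x := by
  rw [logMajorant, sqDist_comm, logMajorant]

lemma logMajorant_nonneg (h : sqDist x y + 1 ≤ A) : 0 ≤ logMajorant A x y :=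
  mul_nonneg logCharge_pos.le <| sub_nonneg.2 <|
    Real.log_le_log (add_pos_of_nonneg_of_pos (sqDist_nonneg x y) one_pos) h

lemma logMajorant_le (hA : 0 < A) (h : A ≤ K * (sqDist x y + 1)) :
    logMajorant A x y ≤ logCharge * Real.log K := by
  have hpos := add_pos_of_nonneg_of_pos (sqDist_nonneg x y) one_pos
  refine mul_le_mul_of_nonneg_left ?_ logCharge_pos.le
  rw [← Real.log_div hA.ne' hpos.ne']
  exact Real.log_le_log (div_pos hA hpos) ((div_le_iff₀ hpos).2 h)

lemma neighborAvg_logMajorant_add_le (A : ℝ) (x y : Vtx) :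
    neighborAvg (fun x => logMajorant A x y) x + (if x = y then Real.pi / 2 else 0) ≤
      logMajorant A x y := by
  have hcharge : logCharge * Real.log 2 = Real.pi / 2 :=
    div_mul_cancel₀ _ (Real.log_pos one_lt_two).ne'
  have hstep : neighborAvg (fun x => logMajorant A x y) x = logMajorant A x y - logCharge / 4 *
      (Real.log ((x.1 - y.1 + 1 : ℝ) ^ 2 + (x.2 - y.2 : ℝ) ^ 2 + 1) +
        Real.log ((x.1 - y.1 - 1 : ℝ) ^ 2 + (x.2 - y.2 : ℝ) ^ 2 + 1) +
        Real.log ((x.1 - y.1 : ℝ) ^ 2 + (x.2 - y.2 + 1 : ℝ) ^ 2 + 1) +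
        Real.log ((x.1 - y.1 : ℝ) ^ 2 + (x.2 - y.2 - 1 : ℝ) ^ 2 + 1) -
        4 * Real.log ((x.1 - y.1 : ℝ) ^ 2 + (x.2 - y.2 : ℝ) ^ 2 + 1)) := by
    simp only [neighborAvg_apply, logMajorant, sqDist, Int.cast_add, Int.cast_sub, Int.cast_one,
      add_sub_right_comm, sub_right_comm _ (1 : ℝ)]
    ring
  rw [hstep]
  split_ifs with hxy
  · subst hxy
    norm_num
    linarith
  · have hlog := four_mul_log_sq_add_sq_add_one_le (x.1 - y.1) (x.2 - y.2)
    have := mul_nonneg (div_pos logCharge_pos four_pos).le (sub_nonneg.2 hlog)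
    linarith

lemma neighborAvg_logMajorant_le (A : ℝ) (x y : Vtx) :
    neighborAvg (logMajorant A x) y ≤ logMajorant A x y := by
  rw [funext (logMajorant_comm A x)]
  linarith [neighborAvg_logMajorant_add_le A y x, ite_pi_div_two_nonneg (y = x)]

end LogarithmicMajorant

section GreenBound

variable {N : ℕ} {U : Finset Vtx} {G : Vtx → Vtx → ℝ} {x y : Vtx}

/-- A bound for the Green function of every subset of the interior of `V_N`. -/
def greenBound (N : ℕ) : ℝ := logCharge * Real.log (2 * (N : ℝ) ^ 2 + 1)

lemma greenBound_nonneg (N : ℕ) : 0 ≤ greenBound N :=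
  mul_nonneg logCharge_pos.le (Real.log_nonneg (by linarith [sq_nonneg (N : ℝ)]))

lemma abs_sub_le_of_mem_VN (hx : x ∈ VN N) (hy : y ∈ VN N) :
    |(x.1 : ℝ) - y.1| ≤ N ∧ |(x.2 : ℝ) - y.2| ≤ N := by
  rw [mem_VN] at hx hy
  have hint : |x.1 - y.1| ≤ N ∧ |x.2 - y.2| ≤ N := by
    rw [abs_le, abs_le]
    omega
  exact_mod_cast hint

lemma IsKilledGreen.le_greenBound (h : IsKilledGreen U G) (hU : U ⊆ intr (VN N)) (x y : Vtx) :
    G x y ≤ greenBound N := by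
  by_cases hxy : x ∈ U ∧ y ∈ U
  swap
  · rw [h.eq_zero x y (not_and_or.1 hxy)]
    exact greenBound_nonneg N
  have hbdry : ∀ z ∈ outerBdry U, 0 ≤ logMajorant (2 * (N : ℝ) ^ 2 + 1) z y := fun z hz => by
    obtain ⟨h₁, h₂⟩ := abs_sub_le_of_mem_VN (outerBdry_subset hU hz) (intr_subset _ (hU hxy.2))
    exact logMajorant_nonneg (add_le_add_left (sqDist_le h₁ h₂) 1)
  refine (h.le (fun x _ => neighborAvg_logMajorant_add_le _ x y) hbdry hxy.1).trans
    (logMajorant_le (by positivity) ?_)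
  exact le_mul_of_one_le_right (by positivity) (by linarith [sqDist_nonneg x y])

end GreenBound

section SlitBarrier

variable {N R : ℕ} {U : Finset Vtx} {G : Vtx → Vtx → ℝ} {a c : ℤ} {x y z : Vtx}

/-- A function which is harmonic off the column `{x | x.1 = a}`, nonnegative in the square of
half side `R` around `(a, c)`, and at least `1` on the boundary of that square. -/
def slitBarrier (R : ℕ) (a c : ℤ) (x : Vtx) : ℝ :=
  (((x.2 : ℝ) - c) ^ 2 - ((x.1 : ℝ) - a) ^ 2 + 2 * R * |(x.1 : ℝ) - a|) / R ^ 2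

lemma neighborAvg_slitBarrier (R : ℕ) (c : ℤ) (hx : x.1 ≠ a) :
    neighborAvg (slitBarrier R a c) x = slitBarrier R a c x := by
  simp only [neighborAvg_apply, slitBarrier, Int.cast_add, Int.cast_sub, Int.cast_one]
  rcases lt_or_gt_of_ne hx with hlt | hgt
  · have hle : (x.1 : ℝ) + 1 ≤ a := by exact_mod_cast hlt
    rw [abs_of_nonpos (by linarith : (x.1 : ℝ) + 1 - a ≤ 0),
      abs_of_nonpos (by linarith : (x.1 : ℝ) - 1 - a ≤ 0),
      abs_of_nonpos (by linarith : (x.1 : ℝ) - a ≤ 0)]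
    ring
  · have hle : (a : ℝ) + 1 ≤ x.1 := by exact_mod_cast hgt
    rw [abs_of_nonneg (by linarith : 0 ≤ (x.1 : ℝ) + 1 - a),
      abs_of_nonneg (by linarith : 0 ≤ (x.1 : ℝ) - 1 - a),
      abs_of_nonneg (by linarith : 0 ≤ (x.1 : ℝ) - a)]
    ring

lemma slitBarrier_nonneg (c : ℤ) (hx : |(x.1 : ℝ) - a| ≤ R) : 0 ≤ slitBarrier R a c x := by
  refine div_nonneg ?_ (sq_nonneg _)
  rw [← sq_abs ((x.1 : ℝ) - a)]
  nlinarith [sq_nonneg ((x.2 : ℝ) - c), abs_nonneg ((x.1 : ℝ) - a)]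

lemma one_le_slitBarrier (hR : 0 < R) (h₁ : |(x.1 : ℝ) - a| ≤ R)
    (h : |(x.1 : ℝ) - a| = R ∨ |(x.2 : ℝ) - c| = R) : 1 ≤ slitBarrier R a c x := by
  have : (0 : ℝ) < R := Nat.cast_pos.2 hR
  rw [slitBarrier, le_div_iff₀ (by positivity), one_mul, ← sq_abs ((x.1 : ℝ) - a),
    ← sq_abs ((x.2 : ℝ) - c)]
  rcases h with h | h
  · rw [h]
    linarith [sq_nonneg |(x.2 : ℝ) - c|]
  · rw [h]
    nlinarith [abs_nonneg ((x.1 : ℝ) - a)]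

lemma slitBarrier_le {r t : ℝ} (hr : 0 < r) (ht : 1 ≤ t) (hR : r * t ≤ R)
    (h₁ : |(x.1 : ℝ) - a| ≤ 2 * r) (h₂ : |(x.2 : ℝ) - c| ≤ r) :
    slitBarrier R a c x ≤ 5 / t := by
  have hrR : r ≤ R := (le_mul_of_one_le_right hr.le ht).trans hR
  have hR' : (0 : ℝ) < R := hr.trans_le hrR
  have hnum : ((x.2 : ℝ) - c) ^ 2 - ((x.1 : ℝ) - a) ^ 2 + 2 * R * |(x.1 : ℝ) - a| ≤
      5 * (r * R) :=
    calc _ ≤ r ^ 2 - 0 + 2 * R * (2 * r) := by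
            rw [← sq_abs ((x.2 : ℝ) - c)]
            gcongr
            exact sq_nonneg _
      _ ≤ 5 * (r * R) := by nlinarith
  rw [slitBarrier, div_le_div_iff₀ (by positivity) (by positivity)]
  calc _ ≤ 5 * (r * R) * t := by gcongr
    _ = 5 * (R * (r * t)) := by ring
    _ ≤ 5 * (R * R) := by gcongr
    _ = 5 * (R : ℝ) ^ 2 := by ring

lemma abs_le_of_mem_outerBdry_filter_abs_lt
    (hz : z ∈ outerBdry (U.filter fun x => |x.1 - a| < R ∧ |x.2 - c| < R)) :
    |(z.1 : ℝ) - a| ≤ R ∧ |(z.2 : ℝ) - c| ≤ R ∧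
      (z ∈ U → |(z.1 : ℝ) - a| = R ∨ |(z.2 : ℝ) - c| = R) := by
  obtain ⟨hzW, w, hw, hwz⟩ := hz
  obtain ⟨-, hw₁, hw₂⟩ := Finset.mem_filter.1 hw
  obtain ⟨hz₁', hz₂'⟩ : |z.1 - a| ≤ R ∧ |z.2 - c| ≤ R := by
    rw [abs_lt] at hw₁ hw₂
    rw [abs_le, abs_le]
    rcases hwz with rfl | rfl | rfl | rfl <;> dsimp only <;> omega
  have hz₁ : |(z.1 : ℝ) - a| ≤ R := by exact_mod_cast hz₁'
  have hz₂ : |(z.2 : ℝ) - c| ≤ R := by exact_mod_cast hz₂'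
  refine ⟨hz₁, hz₂, fun hzU => ?_⟩
  by_contra! hne
  exact hzW (Finset.mem_filter.2 ⟨hzU, by exact_mod_cast hz₁.lt_of_ne hne.1,
    by exact_mod_cast hz₂.lt_of_ne hne.2⟩)

lemma IsKilledGreen.le_logMajorant_add_slitBarrier (h : IsKilledGreen U G)
    (hU : U ⊆ intr (VN N)) (ha : ∀ x ∈ U, x.1 ≠ a) (hx : x ∈ U) (hx₁ : |x.1 - a| < R)
    (hx₂ : |x.2 - c| < R) (hy₁ : |(y.1 : ℝ) - a| ≤ R) (hy₂ : |(y.2 : ℝ) - c| ≤ R) :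
    G x y ≤ logMajorant (8 * R ^ 2 + 1) x y + greenBound N * slitBarrier R a c x := by
  have hR : 0 < R := by exact_mod_cast (abs_nonneg _).trans_lt hx₁
  set W := U.filter fun x => |x.1 - a| < R ∧ |x.2 - c| < R
  set u : FieldSp := (fun x => logMajorant (8 * R ^ 2 + 1) x y) +
    greenBound N • slitBarrier R a c - fun x => G x y with hu
  have hu_apply : ∀ x, u x = logMajorant (8 * R ^ 2 + 1) x y +
      greenBound N * slitBarrier R a c x - G x y := fun x => rfl
  have hsuper : SuperharmonicOn W u := fun z hz => by
    have hzU := (Finset.mem_filter.1 hz).1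
    rw [hu_apply, hu, map_sub, map_add, map_smul]
    simp only [Pi.sub_apply, Pi.add_apply, Pi.smul_apply, smul_eq_mul,
      neighborAvg_slitBarrier R c (ha z hzU)]
    linarith [h.eq_avg_add z hzU y, neighborAvg_logMajorant_add_le (8 * R ^ 2 + 1) z y]
  have hbdry : ∀ z ∈ outerBdry W, 0 ≤ u z := by
    intro z hz
    obtain ⟨hz₁, hz₂, hsphere⟩ := abs_le_of_mem_outerBdry_filter_abs_lt hz
    have hlog : 0 ≤ logMajorant (8 * R ^ 2 + 1) z y := by
      refine logMajorant_nonneg (add_le_add_left ((sqDist_le (r := 2 * R) ?_ ?_).trans_eq ?_) 1)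
      · linarith [abs_sub_le (z.1 : ℝ) a y.1, abs_sub_comm (y.1 : ℝ) a]
      · linarith [abs_sub_le (z.2 : ℝ) c y.2, abs_sub_comm (y.2 : ℝ) c]
      · ring
    rw [hu_apply]
    by_cases hzU : z ∈ U
    · linarith [h.le_greenBound hU z y,
        le_mul_of_one_le_right (greenBound_nonneg N) (one_le_slitBarrier hR hz₁ (hsphere hzU))]
    · rw [h.eq_zero z y (Or.inl hzU)]
      linarith [mul_nonneg (greenBound_nonneg N) (slitBarrier_nonneg c hz₁)]
  exact sub_nonneg.1 (hsuper.nonneg hbdry (Finset.mem_filter.2 ⟨hx, hx₁, hx₂⟩))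

end SlitBarrier

section LocalBox

variable {N : ℕ} {U : Finset Vtx} {G : Vtx → Vtx → ℝ} {r t : ℝ} {a : ℤ} {v w x : Vtx}

/-- The interior points of `V_N` that lie inside the square of half side `r` around `v`. -/
def localBox (N : ℕ) (r : ℝ) (v : Vtx) : Finset Vtx :=
  (intr (VN N)).filter fun w => |(w.1 : ℝ) - v.1| + 1 ≤ r ∧ |(w.2 : ℝ) - v.2| + 1 ≤ r

lemma localBox_subset : localBox N r v ⊆ intr (VN N) := Finset.filter_subset _ _

lemma mem_localBox : w ∈ localBox N r v ↔
    w ∈ intr (VN N) ∧ |(w.1 : ℝ) - v.1| + 1 ≤ r ∧ |(w.2 : ℝ) - v.2| + 1 ≤ r :=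
  Finset.mem_filter

lemma IsNeighbor.abs_sub_le_one (h : IsNeighbor x w) :
    |(w.1 : ℝ) - x.1| ≤ 1 ∧ |(w.2 : ℝ) - x.2| ≤ 1 := by
  rcases h with rfl | rfl | rfl | rfl <;> simp

lemma abs_sub_le_of_mem_outerBdry_localBox (hx : x ∈ outerBdry (localBox N r v)) :
    |(x.1 : ℝ) - v.1| ≤ r ∧ |(x.2 : ℝ) - v.2| ≤ r := by
  obtain ⟨-, z, hz, hzx⟩ := hx
  obtain ⟨-, hz₁, hz₂⟩ := mem_localBox.1 hz
  obtain ⟨h₁, h₂⟩ := hzx.abs_sub_le_one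
  constructor
  · linarith [abs_sub_le (x.1 : ℝ) z.1 v.1]
  · linarith [abs_sub_le (x.2 : ℝ) z.2 v.2]

lemma sq_div_two_le_sqDist_add_one (hx : x ∈ intr (VN N)) (hxB : x ∉ localBox N r v)
    (hr : 1 ≤ r) : r ^ 2 / 2 ≤ sqDist x v + 1 := by
  have hfar : r < |(x.1 : ℝ) - v.1| + 1 ∨ r < |(x.2 : ℝ) - v.2| + 1 := by
    by_contra! hnear
    exact hxB (mem_localBox.2 ⟨hx, hnear⟩)
  rw [sqDist, ← sq_abs ((x.1 : ℝ) - v.1), ← sq_abs ((x.2 : ℝ) - v.2)]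
  rcases hfar with h | h
  · nlinarith [sq_nonneg (r - 2), sq_nonneg |(x.2 : ℝ) - v.2|]
  · nlinarith [sq_nonneg (r - 2), sq_nonneg |(x.1 : ℝ) - v.1|]

/-- A bound for the variance at `v` of the harmonic average of the field over `localBox N r v`,
when `v` is within distance `r` of a column where the field vanishes. -/
def localVarBound (N : ℕ) (t : ℝ) : ℝ := logCharge * Real.log (72 * t ^ 2) + 5 * greenBound N / t

lemma localVarBound_nonneg (N : ℕ) (ht : 1 ≤ t) : 0 ≤ localVarBound N t := by
  have := Real.log_nonneg (by nlinarith : 1 ≤ 72 * t ^ 2)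
  have := logCharge_pos
  have := greenBound_nonneg N
  unfold localVarBound
  positivity

lemma IsKilledGreen.harmonicExt_localBox_le (h : IsKilledGreen U G) (hU : U ⊆ intr (VN N))
    (ha : ∀ x ∈ U, x.1 ≠ a) (hr : |(v.1 : ℝ) - a| + 1 ≤ r) (ht : 3 ≤ t)
    (hv : v ∈ localBox N r v) (hx : x ∈ outerBdry (localBox N r v)) :
    harmonicExt (localBox N r v) (G x) v ≤ localVarBound N t := by
  have hr₁ : 1 ≤ r := by linarith [abs_nonneg ((v.1 : ℝ) - a)]
  by_cases hxU : x ∈ U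
  swap
  · rw [harmonicExt_eq_zero fun y _ => h.eq_zero x y (Or.inl hxU)]
    exact localVarBound_nonneg N (by linarith)
  set R : ℕ := ⌈r * t⌉₊
  have hRge : r * t ≤ R := Nat.le_ceil _
  have hRle : (R : ℝ) ≤ 2 * (r * t) := by
    nlinarith [Nat.ceil_lt_add_one (a := r * t) (by positivity)]
  have h3r : 3 * r ≤ R := by nlinarith
  have hnear : ∀ y ∈ outerBdry (localBox N r v),
      |(y.1 : ℝ) - a| ≤ 2 * r ∧ |(y.2 : ℝ) - v.2| ≤ r := fun y hy => by
    obtain ⟨hy₁, hy₂⟩ := abs_sub_le_of_mem_outerBdry_localBox hy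
    exact ⟨by linarith [abs_sub_le (y.1 : ℝ) v.1 a], hy₂⟩
  obtain ⟨hx₁, hx₂⟩ := hnear x hx
  have hx₁' : |(x.1 : ℝ) - a| < R := by linarith
  have hx₂' : |(x.2 : ℝ) - v.2| < R := by linarith
  have hsuper : SuperharmonicOn (localBox N r v)
      (logMajorant (8 * R ^ 2 + 1) x + fun _ => greenBound N * slitBarrier R a v.2 x) :=
    fun y _ => by
      rw [map_add, Pi.add_apply, neighborAvg_const]
      exact add_le_add_left (neighborAvg_logMajorant_le _ x y) _
  have hmajorant := hsuper.harmonicExt_le_of_mem (f := G x) (fun y hy =>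
    h.le_logMajorant_add_slitBarrier hU ha hxU (by exact_mod_cast hx₁') (by exact_mod_cast hx₂')
      (by linarith [(hnear y hy).1]) (by linarith [(hnear y hy).2])) hv
  have hlog : logMajorant (8 * R ^ 2 + 1) x v ≤ logCharge * Real.log (72 * t ^ 2) := by
    refine logMajorant_le (by positivity) ?_
    calc (8 * R ^ 2 + 1 : ℝ) ≤ 9 * (2 * (r * t)) ^ 2 := by nlinarith
      _ = 72 * t ^ 2 * (r ^ 2 / 2) := by ring
      _ ≤ 72 * t ^ 2 * (sqDist x v + 1) := by
        gcongr
        exact sq_div_two_le_sqDist_add_one (hU hxU) hx.1 hr₁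
  refine hmajorant.trans (add_le_add hlog ?_)
  rw [mul_comm (5 : ℝ), mul_div_assoc]
  exact mul_le_mul_of_nonneg_left (slitBarrier_le (by linarith) (by linarith) hRge hx₁ hx₂)
    (greenBound_nonneg N)

lemma IsKilledGreen.kernelCov_harmonicExt_localBox_le (h : IsKilledGreen U G)
    (hU : U ⊆ intr (VN N)) (ha : ∀ x ∈ U, x.1 ≠ a) (hr : |(v.1 : ℝ) - a| + 1 ≤ r)
    (ht : 3 ≤ t) :
    kernelCov G (evalCLM v ∘L harmonicExt (localBox N r v))
      (evalCLM v ∘L harmonicExt (localBox N r v)) ≤ localVarBound N t := by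
  change harmonicExt _ (fun x => harmonicExt _ (G x) v) v ≤ _
  by_cases hv : v ∈ localBox N r v
  · exact (harmonicOn_const _ _).superharmonicOn.harmonicExt_le_of_mem
      (fun x hx => h.harmonicExt_localBox_le hU ha hr ht hv hx) hv
  · have hvU : v ∉ U := fun hvU => hv <| mem_localBox.2
      ⟨hU hvU, by rw [sub_self, abs_zero]; linarith [abs_nonneg ((v.1 : ℝ) - a)],
        by rw [sub_self, abs_zero]; linarith [abs_nonneg ((v.1 : ℝ) - a)]⟩
    rw [harmonicExt_of_notMem _ hv, harmonicExt_eq_zero fun y _ => h.eq_zero v y (Or.inl hvU)]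
    exact localVarBound_nonneg N (by linarith)

end LocalBox

section Equivariance

variable {B B' U : Finset Vtx} {G : Vtx → Vtx → ℝ} {τ : Vtx → Vtx} {x y : Vtx}

lemma neighborAvg_comp_of_shift {f : FieldSp}
    (h : ∀ y, IsNeighbor x y → f (τ y) = f (y + (τ x - x))) :
    neighborAvg (fun z => f (τ z)) x = neighborAvg f (τ x) := by
  rw [neighborAvg_congr h, neighborAvg_apply, neighborAvg_apply]
  have hshift : ∀ a b : ℤ, (a, b) + (τ x - x) = (a - x.1 + (τ x).1, b - x.2 + (τ x).2) :=
    fun a b => by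
      ext <;> simp only [Prod.fst_add, Prod.snd_add, Prod.fst_sub, Prod.snd_sub] <;> ring
  simp only [hshift]
  ring_nf

lemma harmonicExt_comp (hB : ∀ w, w ∈ B ↔ τ w ∈ B')
    (hτ : ∀ x ∈ B, ∀ g : FieldSp, neighborAvg (fun z => g (τ z)) x = neighborAvg g (τ x))
    (f : FieldSp) (x : Vtx) :
    harmonicExt B (fun z => f (τ z)) x = harmonicExt B' f (τ x) := by
  have hharm : HarmonicOn B fun z => harmonicExt B' f (τ z) := fun z hz => by
    rw [hτ z hz]
    exact harmonicOn_harmonicExt B' f _ ((hB z).1 hz)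
  refine congrFun (hharm.harmonicExt_eq fun y hy => ?_) x
  exact (harmonicExt_of_notMem f fun hyB' => hy ((hB y).2 hyB')).symm

lemma IsKilledGreen.apply_equiv (h : IsKilledGreen U G) (e : Vtx ≃ Vtx)
    (hU : ∀ x, e x ∈ U ↔ x ∈ U)
    (he : ∀ f : FieldSp, (∀ z ∉ U, f z = 0) → ∀ x ∈ U,
      neighborAvg (fun z => f (e z)) x = neighborAvg f (e x)) (x y : Vtx) :
    G (e x) (e y) = G x y := by
  by_cases hx : x ∈ U
  swap
  · rw [h.eq_zero x y (Or.inl hx), h.eq_zero _ _ (Or.inl fun hx' => hx ((hU x).1 hx'))]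
  refine (h.eq (u := fun z => G (e z) (e y)) (fun z hz => ?_) (fun z hz => ?_) hx).symm
  · rw [he (fun z => G z (e y)) (fun z hz => h.eq_zero z _ (Or.inl hz)) z hz,
      h.eq_avg_add _ ((hU z).2 hz)]
    simp only [e.apply_eq_iff_eq]
  · exact h.eq_zero _ _ (Or.inl fun hz' => hz.1 ((hU z).1 hz'))

end Equivariance

section Slabs

variable {N m n K : ℕ} {k : ℤ} {r : ℝ} {v w x y : Vtx}

/-- The interior points of `V_N` off the columns whose first coordinate is divisible by `m`. The
killed field on this set is independent over the vertical slabs between such columns. -/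
def slabInterior (N m : ℕ) : Finset Vtx := (intr (VN N)).filter fun x => ¬ (m : ℤ) ∣ x.1

/-- The points lying in the first `n` columns of one of the first `K` slabs of width `m`. -/
def strips (N m n K : ℕ) : Finset Vtx := (VN N).filter fun v => v.1 % m < n ∧ v.1 / m < K

/-- The part of `strips N m n K` inside the `k`-th slab. -/
def strip (N m n K : ℕ) (k : ℤ) : Finset Vtx := (strips N m n K).filter fun v => v.1 / m = k

/-- The box of half side `r` around `v` reaches the dividing column to the left of `v`. -/
def ReachesDivider (m : ℕ) (r : ℝ) (v : Vtx) : Prop := ((v.1 % m : ℤ) : ℝ) + 1 ≤ r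

lemma slabInterior_subset : slabInterior N m ⊆ intr (VN N) := Finset.filter_subset _ _

lemma mem_slabInterior : x ∈ slabInterior N m ↔ x ∈ intr (VN N) ∧ ¬ (m : ℤ) ∣ x.1 :=
  Finset.mem_filter

lemma mem_strips : v ∈ strips N m n K ↔ v ∈ VN N ∧ v.1 % m < n ∧ v.1 / m < K :=
  Finset.mem_filter

lemma mem_strip : v ∈ strip N m n K k ↔ v ∈ strips N m n K ∧ v.1 / m = k := Finset.mem_filter

lemma ediv_eq_of_abs_sub_le {a b : ℤ} (hab : |a - b| ≤ b % m) (hb : 2 * (b % m) < m) :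
    a / m = b / m := by
  have hm : (0 : ℤ) < m := by linarith [abs_nonneg (a - b)]
  have := Int.emod_add_mul_ediv b m
  obtain ⟨h₁, h₂⟩ := abs_le.1 hab
  exact ((Int.ediv_emod_unique hm (r := a - m * (b / m))).2
    ⟨by ring, by linarith, by linarith⟩).1

lemma add_one_ediv_of_not_dvd (hm : 0 < m) {a : ℤ} (ha : ¬ (m : ℤ) ∣ a + 1) :
    (a + 1) / m = a / m := by
  have hm' : (0 : ℤ) < m := by exact_mod_cast hm
  have hdecomp := Int.emod_add_mul_ediv a m
  have hlt : a % m + 1 < m := (Int.emod_lt_of_pos a hm').lt_of_ne fun h =>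
    ha ⟨a / m + 1, by linarith⟩
  exact ((Int.ediv_emod_unique hm').2
    ⟨by linarith, by linarith [Int.emod_nonneg a hm'.ne'], hlt⟩).1

lemma IsNeighbor.ediv_eq (h : IsNeighbor x y) (hm : 0 < m) (hx : ¬ (m : ℤ) ∣ x.1)
    (hy : ¬ (m : ℤ) ∣ y.1) : y.1 / m = x.1 / m := by
  rcases h with rfl | rfl | rfl | rfl
  · exact add_one_ediv_of_not_dvd hm hy
  · have := add_one_ediv_of_not_dvd hm (a := x.1 - 1) (by rwa [sub_add_cancel])
    rwa [sub_add_cancel, eq_comm] at this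
  · rfl
  · rfl

lemma abs_sub_le_emod_of_not_reachesDivider (hr : ¬ ReachesDivider m r v) {a : ℤ}
    (ha : |(a : ℝ) - v.1| ≤ r) : |a - v.1| ≤ v.1 % m := by
  have : ((|a - v.1| : ℤ) : ℝ) < ((v.1 % m + 1 : ℤ) : ℝ) := by
    push_cast
    exact ha.trans_lt (not_le.1 hr)
  exact Int.lt_add_one_iff.1 (by exact_mod_cast this)

lemma two_mul_emod_lt (hm : 2 * n ≤ m) (hv : v ∈ strips N m n K) : 2 * (v.1 % m) < m := by
  have := (mem_strips.1 hv).2.1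
  omega

lemma localBox_subset_slabInterior (hm : 2 * n ≤ m) (hv : v ∈ strips N m n K)
    (hr : ¬ ReachesDivider m r v) : localBox N r v ⊆ slabInterior N m := by
  intro w hw
  obtain ⟨hwI, hw₁, -⟩ := mem_localBox.1 hw
  refine mem_slabInterior.2 ⟨hwI, fun hdvd => ?_⟩
  have hslab := ediv_eq_of_abs_sub_le (abs_sub_le_emod_of_not_reachesDivider hr (by linarith))
    (two_mul_emod_lt hm hv)
  have hdist : (w.1 : ℝ) - v.1 = -((v.1 % m : ℤ) : ℝ) := by
    have h := Int.emod_add_mul_ediv v.1 m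
    rw [← hslab, Int.mul_ediv_cancel' hdvd] at h
    exact_mod_cast (by linarith : w.1 - v.1 = -(v.1 % m))
  have := neg_le_abs ((w.1 : ℝ) - v.1)
  exact hr (by rw [ReachesDivider]; linarith)

/-- The exchange of the slabs `0` and `k` of width `m`. -/
def slabSwap (m : ℕ) (k : ℤ) : Equiv.Perm Vtx :=
  Function.Involutive.toPerm (fun x => (m * Equiv.swap 0 k (x.1 / m) + x.1 % m, x.2)) fun x => by
    rcases Nat.eq_zero_or_pos m with rfl | hm
    · ext <;> simp
    have hm' : (0 : ℤ) < m := by exact_mod_cast hm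
    ext
    · obtain ⟨hdiv, hmod⟩ := (Int.ediv_emod_unique hm').2
        ⟨add_comm (x.1 % m) (m * Equiv.swap 0 k (x.1 / m)), Int.emod_nonneg _ hm'.ne',
          Int.emod_lt_of_pos _ hm'⟩
      simp only [hdiv, hmod, Equiv.swap_apply_self]
      exact Int.mul_ediv_add_emod _ _
    · rfl

lemma slabSwap_apply (m : ℕ) (k : ℤ) (x : Vtx) :
    slabSwap m k x = (m * Equiv.swap 0 k (x.1 / m) + x.1 % m, x.2) := rfl

lemma slabSwap_slabSwap (m : ℕ) (k : ℤ) (x : Vtx) : slabSwap m k (slabSwap m k x) = x :=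
  (slabSwap m k).symm_apply_apply x

lemma slabSwap_emod (m : ℕ) (k : ℤ) (x : Vtx) : (slabSwap m k x).1 % m = x.1 % m := by
  simp only [slabSwap_apply, Int.mul_add_emod_self_left, Int.emod_emod]

lemma slabSwap_ediv (hm : 0 < m) (k : ℤ) (x : Vtx) :
    (slabSwap m k x).1 / m = Equiv.swap 0 k (x.1 / m) := by
  have hm' : (0 : ℤ) < m := by exact_mod_cast hm
  exact ((Int.ediv_emod_unique hm').2 ⟨add_comm _ _, Int.emod_nonneg _ hm'.ne',
    Int.emod_lt_of_pos _ hm'⟩).1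

lemma slabSwap_eq_add (h : y.1 / (m : ℤ) = x.1 / m) :
    slabSwap m k y = y + (slabSwap m k x - x) := by
  have hx := Int.mul_ediv_add_emod x.1 m
  have hy := Int.mul_ediv_add_emod y.1 m
  rw [h] at hy
  ext
  · simp only [slabSwap_apply, Prod.fst_add, Prod.fst_sub, h]
    linarith
  · simp [slabSwap_apply]

lemma dvd_slabSwap_sub (m : ℕ) (k : ℤ) (x : Vtx) : (m : ℤ) ∣ (slabSwap m k x - x).1 :=
  Int.ModEq.dvd (slabSwap_emod m k x).symm

lemma slabSwap_eq_self_or (hm : 0 < m) (hk₀ : 0 ≤ k) (hk : k < K) (x : Vtx) :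
    slabSwap m k x = x ∨ x.1 % m ≤ (slabSwap m k x).1 ∧ (slabSwap m k x).1 < K * m := by
  have hm' : (0 : ℤ) < m := by exact_mod_cast hm
  have hbound : ∀ q : ℤ, 0 ≤ q → q < K →
      x.1 % m ≤ m * q + x.1 % m ∧ m * q + x.1 % m < K * m := fun q hq₀ hq => by
    have := Int.emod_lt_of_pos x.1 hm'
    exact ⟨by nlinarith, by nlinarith⟩
  rw [slabSwap_apply]
  by_cases h₀ : x.1 / (m : ℤ) = 0
  · rw [h₀, Equiv.swap_apply_left]
    exact Or.inr (hbound k hk₀ hk)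
  by_cases h₁ : x.1 / (m : ℤ) = k
  · rw [h₁, Equiv.swap_apply_right]
    exact Or.inr (hbound 0 le_rfl (hk₀.trans_lt hk))
  · rw [Equiv.swap_apply_of_ne_of_ne h₀ h₁, Int.mul_ediv_add_emod]
    exact Or.inl rfl

lemma slabSwap_mem_slabInterior (hm : 0 < m) (hK : K * m ≤ N) (hk₀ : 0 ≤ k) (hk : k < K)
    (hx : x ∈ slabInterior N m) : slabSwap m k x ∈ slabInterior N m := by
  rcases slabSwap_eq_self_or hm hk₀ hk x with heq | ⟨hlow, hupp⟩
  · rwa [heq]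
  obtain ⟨hxI, hdvd⟩ := mem_slabInterior.1 hx
  have hpos : 0 < x.1 % m :=
    (Int.emod_nonneg _ (by omega)).lt_of_ne' fun h => hdvd (Int.dvd_of_emod_eq_zero h)
  have : (K : ℤ) * m ≤ N := by exact_mod_cast hK
  refine mem_slabInterior.2 ⟨mem_intr_VN.2 ⟨by linarith, by linarith, ?_⟩, fun h => hdvd ?_⟩
  · exact (mem_intr_VN.1 hxI).2.2
  · rw [Int.dvd_iff_emod_eq_zero, slabSwap_emod] at h
    exact Int.dvd_of_emod_eq_zero h

lemma slabSwap_mem_slabInterior_iff (hm : 0 < m) (hK : K * m ≤ N) (hk₀ : 0 ≤ k) (hk : k < K) :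
    slabSwap m k x ∈ slabInterior N m ↔ x ∈ slabInterior N m :=
  ⟨fun h => slabSwap_slabSwap m k x ▸ slabSwap_mem_slabInterior hm hK hk₀ hk h,
    slabSwap_mem_slabInterior hm hK hk₀ hk⟩

lemma slabSwap_mem_strips (hm : 0 < m) (hK : K * m ≤ N) (hk₀ : 0 ≤ k) (hk : k < K)
    (hx : x ∈ strips N m n K) : slabSwap m k x ∈ strips N m n K := by
  rcases slabSwap_eq_self_or hm hk₀ hk x with heq | ⟨hlow, hupp⟩
  · rwa [heq]
  obtain ⟨hxV, hxn, -⟩ := mem_strips.1 hx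
  have hnonneg : 0 ≤ x.1 % m := Int.emod_nonneg _ (by omega)
  have : (K : ℤ) * m ≤ N := by exact_mod_cast hK
  refine mem_strips.2 ⟨mem_VN.2 ⟨by linarith, by linarith, (mem_VN.1 hxV).2.2⟩, ?_, ?_⟩
  · rwa [slabSwap_emod]
  · exact Int.ediv_lt_of_lt_mul (by exact_mod_cast hm) hupp

lemma apply_slabSwap_eq_shift (hm : 0 < m) {f : FieldSp} (hf : ∀ z ∉ slabInterior N m, f z = 0)
    (hx : x ∈ slabInterior N m) (hxy : IsNeighbor x y) :
    f (slabSwap m k y) = f (y + (slabSwap m k x - x)) := by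
  by_cases hdvd : (m : ℤ) ∣ y.1
  · rw [hf _ fun h => (mem_slabInterior.1 h).2 ?_, hf _ fun h => (mem_slabInterior.1 h).2 ?_]
    · exact dvd_add hdvd (dvd_slabSwap_sub m k x)
    · rw [Int.dvd_iff_emod_eq_zero, slabSwap_emod]
      exact Int.emod_eq_zero_of_dvd hdvd
  · exact congrArg f (slabSwap_eq_add (hxy.ediv_eq hm (mem_slabInterior.1 hx).2 hdvd))

lemma IsKilledGreen.apply_slabSwap {G : Vtx → Vtx → ℝ} (h : IsKilledGreen (slabInterior N m) G)
    (hm : 0 < m) (hK : K * m ≤ N) (hk₀ : 0 ≤ k) (hk : k < K) (x y : Vtx) :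
    G (slabSwap m k x) (slabSwap m k y) = G x y :=
  h.apply_equiv (slabSwap m k) (fun _ => slabSwap_mem_slabInterior_iff hm hK hk₀ hk)
    (fun _ hf _ hx => neighborAvg_comp_of_shift fun _ hxy =>
      apply_slabSwap_eq_shift hm hf hx hxy) x y

lemma reachesDivider_slabSwap (m : ℕ) (k : ℤ) (r : ℝ) (v : Vtx) :
    ReachesDivider m r (slabSwap m k v) ↔ ReachesDivider m r v := by
  rw [ReachesDivider, ReachesDivider, slabSwap_emod]

lemma slabSwap_eq_add_of_abs_sub_le (hm : 2 * n ≤ m) (hv : v ∈ strips N m n K)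
    (hr : ¬ ReachesDivider m r v) (hx : |(x.1 : ℝ) - v.1| ≤ r) :
    slabSwap m k x = x + (slabSwap m k v - v) :=
  slabSwap_eq_add (ediv_eq_of_abs_sub_le (abs_sub_le_emod_of_not_reachesDivider hr hx)
    (two_mul_emod_lt hm hv))

lemma slabSwap_mem_localBox (hm : 2 * n ≤ m) (hm₀ : 0 < m) (hK : K * m ≤ N) (hk₀ : 0 ≤ k)
    (hk : k < K) (hv : v ∈ strips N m n K) (hr : ¬ ReachesDivider m r v)
    (hw : w ∈ localBox N r v) : slabSwap m k w ∈ localBox N r (slabSwap m k v) := by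
  have hwU := localBox_subset_slabInterior hm hv hr hw
  obtain ⟨-, hw₁, hw₂⟩ := mem_localBox.1 hw
  refine mem_localBox.2 ⟨slabInterior_subset (slabSwap_mem_slabInterior hm₀ hK hk₀ hk hwU), ?_⟩
  rw [slabSwap_eq_add_of_abs_sub_le hm hv hr (by linarith)]
  have hshift : ∀ a b c : ℤ, ((a + (b - c) : ℤ) : ℝ) - b = a - c := fun a b c => by
    push_cast; ring
  simp only [Prod.fst_add, Prod.snd_add, Prod.fst_sub, Prod.snd_sub, hshift]
  exact ⟨hw₁, hw₂⟩

lemma slabSwap_mem_localBox_iff (hm : 2 * n ≤ m) (hm₀ : 0 < m) (hK : K * m ≤ N) (hk₀ : 0 ≤ k)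
    (hk : k < K) (hv : v ∈ strips N m n K) (hr : ¬ ReachesDivider m r v) :
    w ∈ localBox N r v ↔ slabSwap m k w ∈ localBox N r (slabSwap m k v) := by
  refine ⟨slabSwap_mem_localBox hm hm₀ hK hk₀ hk hv hr, fun hw => ?_⟩
  have := slabSwap_mem_localBox hm hm₀ hK hk₀ hk (slabSwap_mem_strips hm₀ hK hk₀ hk hv)
    (mt (reachesDivider_slabSwap m k r v).1 hr) hw
  rwa [slabSwap_slabSwap, slabSwap_slabSwap] at this

lemma harmonicExt_localBox_slabSwap (hm : 2 * n ≤ m) (hm₀ : 0 < m) (hK : K * m ≤ N)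
    (hk₀ : 0 ≤ k) (hk : k < K) (hv : v ∈ strips N m n K) (hr : ¬ ReachesDivider m r v)
    (f : FieldSp) :
    harmonicExt (localBox N r v) (f ∘ slabSwap m k) v =
      harmonicExt (localBox N r (slabSwap m k v)) f (slabSwap m k v) := by
  refine harmonicExt_comp (fun _ => slabSwap_mem_localBox_iff hm hm₀ hK hk₀ hk hv hr)
    (fun x hx g => neighborAvg_comp_of_shift fun y hxy => congrArg g ?_) f v
  have hx₁ := (mem_localBox.1 hx).2.1
  have hy₁ := hxy.abs_sub_le_one.1
  rw [slabSwap_eq_add_of_abs_sub_le hm hv hr (by linarith [abs_sub_le (y.1 : ℝ) x.1 v.1]),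
    slabSwap_eq_add_of_abs_sub_le hm hv hr (x := x) (by linarith), add_sub_cancel_left]

end Slabs

section FieldVariances

variable {N m n K : ℕ} {r t : ℝ} {v : Vtx} {B U V : Finset Vtx} {G : Vtx → Vtx → ℝ}

lemma IsKilledGreen.kernelCov_comp_harmonicExt_le (hG : IsKilledGreen V G) (hU : U ⊆ V)
    (L : FieldSp →L[ℝ] ℝ) :
    kernelCov G (L ∘L harmonicExt U) (L ∘L harmonicExt U) ≤ kernelCov G L L := by
  have hsplit : L ∘L dirichletPart U + L ∘L harmonicExt U = L := by
    ext f
    simp only [add_apply, ContinuousLinearMap.comp_apply, dirichletPart_apply, map_sub,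
      sub_add_cancel]
  have hpythagoras := hG.kernelCov_add_self (L ∘L dirichletPart U) (L ∘L harmonicExt U)
  rw [hsplit, hG.kernelCov_dirichletPart_harmonicExt hU] at hpythagoras
  linarith [hG.kernelCov_self_nonneg (L ∘L dirichletPart U)]

lemma IsKilledGreen.kernelCov_harmonicExt_le_greenBound (hG : IsKilledGreen (intr (VN N)) G)
    (hB : B ⊆ intr (VN N)) (v : Vtx) :
    kernelCov G (evalCLM v ∘L harmonicExt B) (evalCLM v ∘L harmonicExt B) ≤ greenBound N := by
  rw [hG.kernelCov_harmonicExt_apply hB]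
  exact harmonicExt_le_const (fun y _ => hG.le_greenBound subset_rfl v y) v

lemma superharmonicOn_linear (U : Finset Vtx) (c : ℝ) :
    SuperharmonicOn U fun x => c * x.1 := fun x _ => le_of_eq <| by
  rw [neighborAvg_apply]
  push_cast
  ring

lemma IsKilledGreen.harmonicExt_slabInterior_le (hG : IsKilledGreen (intr (VN N)) G)
    (hv₀ : 0 ≤ v.1) (hvm : v.1 < m) (y : Vtx) :
    harmonicExt (slabInterior N m) (G y) v ≤ greenBound N / m * v.1 := by
  have hm : (0 : ℝ) < m := by exact_mod_cast hv₀.trans_lt hvm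
  have hslope : 0 ≤ greenBound N / m := div_nonneg (greenBound_nonneg N) hm.le
  have houtside : ∀ z : Vtx, 0 ≤ z.1 → z ∉ intr (VN N) →
      harmonicExt (slabInterior N m) (G y) z ≤ greenBound N / m * z.1 := fun z hz₀ hz => by
    rw [harmonicExt_of_notMem _ fun h => hz (slabInterior_subset h), hG.eq_zero _ _ (Or.inr hz)]
    exact mul_nonneg hslope (by exact_mod_cast hz₀)
  have hnotDvd : ∀ z ∈ intr (VN N), z.1 < m → ¬ (m : ℤ) ∣ z.1 := fun z hz hzm hdvd => by
    have := mem_intr_VN.1 hz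
    have := Int.le_of_dvd (by omega) hdvd
    omega
  by_cases hvI : v ∈ intr (VN N)
  swap
  · exact houtside v hv₀ hvI
  rw [← harmonicExt_harmonicExt (Finset.filter_subset (fun x : Vtx => x.1 < m) _)]
  refine (superharmonicOn_linear _ _).harmonicExt_le_of_mem ?_
    (Finset.mem_filter.2 ⟨mem_slabInterior.2 ⟨hvI, hnotDvd v hvI hvm⟩, hvm⟩)
  rintro z ⟨hz, x, hx, hxz⟩
  have hx₁ := mem_intr_VN.1 (slabInterior_subset (Finset.mem_filter.1 hx).1)
  have hz₀ : 0 ≤ z.1 := by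
    rcases hxz with rfl | rfl | rfl | rfl <;> dsimp only <;> omega
  by_cases hzI : z ∈ intr (VN N)
  swap
  · exact houtside z hz₀ hzI
  have hmz : (m : ℝ) ≤ z.1 := by
    by_contra! hzm
    replace hzm : z.1 < m := by exact_mod_cast hzm
    exact hz (Finset.mem_filter.2 ⟨mem_slabInterior.2 ⟨hzI, hnotDvd z hzI hzm⟩, hzm⟩)
  calc harmonicExt (slabInterior N m) (G y) z
    _ ≤ greenBound N := harmonicExt_le_const (fun w _ => hG.le_greenBound subset_rfl y w) z
    _ = greenBound N / m * m := (div_mul_cancel₀ _ hm.ne').symm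
    _ ≤ greenBound N / m * z.1 := mul_le_mul_of_nonneg_left hmz hslope

/-- A bound for the variances of the two fields neglected in comparing the strips: the local
averages over boxes reaching a dividing column, and the field carried by the dividing columns,
seen at distance at most `n` from the side of the box. -/
def stripVarBound (N m n : ℕ) (t : ℝ) : ℝ := localVarBound N t + greenBound N * n / m

lemma localVarBound_le_stripVarBound : localVarBound N t ≤ stripVarBound N m n t :=
  le_add_of_nonneg_right (div_nonneg (mul_nonneg (greenBound_nonneg N) n.cast_nonneg)
    m.cast_nonneg)

lemma IsKilledGreen.kernelCov_localBox_harmonicExt_le (hG : IsKilledGreen (intr (VN N)) G)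
    (hm : 2 * n ≤ m) (hv : v ∈ strip N m n K 0) (r : ℝ) (ht : 3 ≤ t) :
    kernelCov G ((evalCLM v ∘L harmonicExt (localBox N r v)) ∘L harmonicExt (slabInterior N m))
      ((evalCLM v ∘L harmonicExt (localBox N r v)) ∘L harmonicExt (slabInterior N m))
      ≤ stripVarBound N m n t := by
  obtain ⟨hvS, hslab⟩ := mem_strip.1 hv
  obtain ⟨hvV, hvn, -⟩ := mem_strips.1 hvS
  have hv₀ : 0 ≤ v.1 := (mem_VN.1 hvV).1
  have hmod : v.1 % m = v.1 := by
    simpa only [hslab, mul_zero, add_zero] using Int.emod_add_mul_ediv v.1 m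
  rw [hmod] at hvn
  by_cases hr : ReachesDivider m r v
  · rw [ReachesDivider, hmod] at hr
    refine (hG.kernelCov_comp_harmonicExt_le slabInterior_subset _).trans
      ((hG.kernelCov_harmonicExt_localBox_le subset_rfl (a := 0) (fun x hx => ?_) ?_ ht).trans
        localVarBound_le_stripVarBound)
    · have := mem_intr_VN.1 hx
      omega
    · rwa [Int.cast_zero, sub_zero, abs_of_nonneg (by exact_mod_cast hv₀)]
  · have hcollapse : (evalCLM v ∘L harmonicExt (localBox N r v)) ∘L
        harmonicExt (slabInterior N m) = evalCLM v ∘L harmonicExt (slabInterior N m) := by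
      ext f
      exact congrFun (harmonicExt_harmonicExt (localBox_subset_slabInterior hm hvS hr) f) v
    rw [hcollapse, hG.kernelCov_harmonicExt_apply slabInterior_subset]
    calc harmonicExt (slabInterior N m) (G v) v
      _ ≤ greenBound N / m * v.1 := hG.harmonicExt_slabInterior_le hv₀ (by omega) v
      _ ≤ greenBound N / m * n := mul_le_mul_of_nonneg_left (by exact_mod_cast hvn.le)
          (div_nonneg (greenBound_nonneg N) m.cast_nonneg)
      _ = greenBound N * n / m := div_mul_eq_mul_div _ _ _
      _ ≤ stripVarBound N m n t :=
          le_add_of_nonneg_left (localVarBound_nonneg N (by linarith))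

lemma IsKilledGreen.kernelCov_localBox_dirichletPart_le (hG : IsKilledGreen (intr (VN N)) G)
    (hm : 0 < m) (hr : ReachesDivider m r v) (ht : 3 ≤ t) :
    kernelCov G ((evalCLM v ∘L harmonicExt (localBox N r v)) ∘L dirichletPart (slabInterior N m))
      ((evalCLM v ∘L harmonicExt (localBox N r v)) ∘L dirichletPart (slabInterior N m))
      ≤ localVarBound N t := by
  rw [hG.kernelCov_dirichletPart slabInterior_subset]
  refine (isKilledGreen_restrictGreen hG slabInterior_subset).kernelCov_harmonicExt_localBox_le
    slabInterior_subset (a := m * (v.1 / m)) (fun x hx h => ?_) ?_ ht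
  · exact (mem_slabInterior.1 hx).2 (h ▸ dvd_mul_right _ _)
  · have hmod : (v.1 : ℝ) - ((m * (v.1 / m) : ℤ) : ℝ) = ((v.1 % m : ℤ) : ℝ) := by
      rw [← Int.cast_sub, ← Int.emod_def]
    rwa [hmod, abs_of_nonneg (by exact_mod_cast Int.emod_nonneg _ (by omega))]

end FieldVariances

section GibbsMass

variable {α : Type*} {S S' T T' : Finset α} {Y Y' u : α → ℝ} {a b : ℝ}

/-- The mass of `S` under the Gibbs measure on `T` with weights proportional to `exp (Y v)`. The
inverse temperature is part of `Y`. -/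
def gibbsMass (Y : α → ℝ) (T S : Finset α) : ℝ :=
  (∑ v ∈ S, Real.exp (Y v)) / ∑ v ∈ T, Real.exp (Y v)

lemma gibbsMass_nonneg (Y : α → ℝ) (T S : Finset α) : 0 ≤ gibbsMass Y T S := by
  unfold gibbsMass
  positivity

lemma gibbsMass_mono (h : S ⊆ S') : gibbsMass Y T S ≤ gibbsMass Y T S' := by
  unfold gibbsMass
  gcongr

lemma gibbsMass_self (hT : T.Nonempty) : gibbsMass Y T T = 1 :=
  div_self (Finset.sum_pos (fun _ _ => Real.exp_pos _) hT).ne'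

lemma gibbsMass_le_one (h : S ⊆ T) : gibbsMass Y T S ≤ 1 :=
  (gibbsMass_mono h).trans (div_self_le_one _)

lemma sum_gibbsMass_singleton (Y : α → ℝ) (T S : Finset α) :
    ∑ v ∈ S, gibbsMass Y T {v} = gibbsMass Y T S := by
  simp only [gibbsMass, Finset.sum_singleton, Finset.sum_div]

lemma gibbsMass_comp_equiv (e : Equiv.Perm α) (hT : ∀ v, v ∈ T ↔ e v ∈ T')
    (hS : ∀ v, v ∈ S ↔ e v ∈ S') (hST : S ⊆ T) (hY : ∀ v ∈ T, Y v = Y' (e v)) :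
    gibbsMass Y T S = gibbsMass Y' T' S' := by
  unfold gibbsMass
  rw [Finset.sum_equiv (g := fun v => Real.exp (Y' v)) e hS fun v hv =>
      congrArg Real.exp (hY v (hST hv)),
    Finset.sum_equiv (g := fun v => Real.exp (Y' v)) e hT fun v hv => congrArg Real.exp (hY v hv)]

lemma measurable_gibbsMass {Ω : Type*} [MeasurableSpace Ω] {Y : Ω → α → ℝ}
    (hY : ∀ v, Measurable fun ω => Y ω v) (T S : Finset α) :
    Measurable fun ω => gibbsMass (Y ω) T S :=
  (Finset.measurable_sum _ fun v _ => (hY v).exp).div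
    (Finset.measurable_sum _ fun v _ => (hY v).exp)

lemma abs_sum_gibbsMass_mul_le (hT : T.Nonempty) (hu : ∀ v ∈ T, |u v| ≤ a) :
    |∑ v ∈ T, gibbsMass Y T {v} * u v| ≤ a := calc
  _ ≤ ∑ v ∈ T, gibbsMass Y T {v} * a := by
      refine (Finset.abs_sum_le_sum_abs _ _).trans (Finset.sum_le_sum fun v hv => ?_)
      rw [abs_mul, abs_of_nonneg (gibbsMass_nonneg _ _ _)]
      exact mul_le_mul_of_nonneg_left (hu v hv) (gibbsMass_nonneg _ _ _)
  _ = a := by rw [← Finset.sum_mul, sum_gibbsMass_singleton, gibbsMass_self hT, one_mul]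

lemma exp_sum_gibbsMass_mul_le (hT : T.Nonempty) :
    Real.exp (∑ v ∈ T, gibbsMass Y T {v} * u v) * ∑ v ∈ T, Real.exp (Y v) ≤
      ∑ v ∈ T, Real.exp (Y v + u v) := by
  have hZ : 0 < ∑ v ∈ T, Real.exp (Y v) := Finset.sum_pos (fun _ _ => Real.exp_pos _) hT
  have hjensen := convexOn_exp.map_sum_le (t := T) (w := fun v => gibbsMass Y T {v}) (p := u)
    (fun v _ => gibbsMass_nonneg _ _ _)
    ((sum_gibbsMass_singleton Y T T).trans (gibbsMass_self hT)) (fun _ _ => Set.mem_univ _)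
  simp only [smul_eq_mul] at hjensen
  refine (mul_le_mul_of_nonneg_right hjensen hZ.le).trans_eq ?_
  rw [Finset.sum_mul]
  refine Finset.sum_congr rfl fun v _ => ?_
  rw [gibbsMass, Finset.sum_singleton, Real.exp_add]
  field_simp

/-- A perturbation that is small on `S` and whose Gibbs average over `T` is small barely affects
the mass of `S`; it need not be small on `T`. -/
lemma gibbsMass_add_le (hT : T.Nonempty) (hu : ∀ v ∈ S, u v ≤ b)
    (havg : -b ≤ ∑ v ∈ T, gibbsMass Y T {v} * u v) :
    gibbsMass (fun v => Y v + u v) T S ≤ Real.exp (2 * b) * gibbsMass Y T S := by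
  have hnum : ∑ v ∈ S, Real.exp (Y v + u v) ≤ Real.exp b * ∑ v ∈ S, Real.exp (Y v) := by
    rw [Finset.mul_sum]
    refine Finset.sum_le_sum fun v hv => ?_
    rw [← Real.exp_add]
    exact Real.exp_le_exp.2 (by linarith [hu v hv])
  have hden : Real.exp (-b) * ∑ v ∈ T, Real.exp (Y v) ≤ ∑ v ∈ T, Real.exp (Y v + u v) :=
    (by gcongr : _ ≤ _).trans (exp_sum_gibbsMass_mul_le hT)
  have : 0 < ∑ v ∈ T, Real.exp (Y v) := Finset.sum_pos (fun _ _ => Real.exp_pos _) hT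
  calc gibbsMass (fun v => Y v + u v) T S
    _ ≤ (Real.exp b * ∑ v ∈ S, Real.exp (Y v)) / (Real.exp (-b) * ∑ v ∈ T, Real.exp (Y v)) :=
        div_le_div₀ (by positivity) hnum (by positivity) hden
    _ = Real.exp (2 * b) * gibbsMass Y T S := by
        rw [gibbsMass, mul_div_mul_comm, ← Real.exp_sub]
        ring_nf

end GibbsMass

section RandomGibbsMass

open MeasureTheory ProbabilityTheory

variable {Ω α : Type*} {mΩ : MeasurableSpace Ω} {P : Measure Ω} {T S : Finset α}

lemma integrable_gibbsMass [IsFiniteMeasure P] {Y : Ω → α → ℝ}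
    (hY : ∀ v, Measurable fun ω => Y ω v) (hST : S ⊆ T) :
    Integrable (fun ω => gibbsMass (Y ω) T S) P :=
  .of_bound (measurable_gibbsMass hY T S).aestronglyMeasurable 1 <| .of_forall fun ω => by
    rw [Real.norm_of_nonneg (gibbsMass_nonneg _ _ _)]
    exact gibbsMass_le_one hST

lemma measureReal_lt_abs_sum_mul_le {p g : α → Ω → ℝ} {s a : ℝ}
    (hp_int : ∀ v ∈ T, Integrable (p v) P) (hp_nonneg : ∀ v ∈ T, ∀ ω, 0 ≤ p v ω)
    (hp_sum : ∀ ω, ∑ v ∈ T, p v ω = 1) (hg : ∀ v ∈ T, MemLp (g v) 2 P)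
    (hindep : ∀ v ∈ T, IndepFun (p v) (g v) P) (hs : ∀ v ∈ T, ∫ ω, g v ω ^ 2 ∂P ≤ s)
    (ha : 0 < a) [IsProbabilityMeasure P] :
    P.real {ω | a < |∑ v ∈ T, p v ω * g v ω|} ≤ s / a ^ 2 := by
  have hindep_sq : ∀ v ∈ T, IndepFun (p v) (fun ω => g v ω ^ 2) P := fun v hv =>
    (hindep v hv).comp measurable_id (measurable_id.pow_const 2)
  have hint : ∀ v ∈ T, Integrable (fun ω => p v ω * g v ω ^ 2) P := fun v hv =>
    (hindep_sq v hv).integrable_mul (hp_int v hv) (hg v hv).integrable_sq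
  have hmean : ∫ ω, ∑ v ∈ T, p v ω * g v ω ^ 2 ∂P ≤ s := calc
    _ = ∑ v ∈ T, (∫ ω, p v ω ∂P) * ∫ ω, g v ω ^ 2 ∂P := by
        rw [integral_finsetSum _ hint]
        exact Finset.sum_congr rfl fun v hv => (hindep_sq v hv).integral_fun_mul_eq_mul_integral
          (hp_int v hv).aestronglyMeasurable (hg v hv).integrable_sq.aestronglyMeasurable
    _ ≤ ∑ v ∈ T, (∫ ω, p v ω ∂P) * s := Finset.sum_le_sum fun v hv =>
        mul_le_mul_of_nonneg_left (hs v hv) (integral_nonneg (hp_nonneg v hv))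
    _ = s := by
        rw [← Finset.sum_mul, ← integral_finsetSum _ hp_int]
        simp only [hp_sum, integral_const, probReal_univ, smul_eq_mul, one_mul]
  have hmarkov := mul_meas_ge_le_integral_of_nonneg
    (.of_forall fun ω => Finset.sum_nonneg fun v hv => mul_nonneg (hp_nonneg v hv ω) (sq_nonneg _))
    (integrable_finsetSum _ hint) (a ^ 2)
  have hjensen : {ω | a < |∑ v ∈ T, p v ω * g v ω|} ⊆
      {ω | a ^ 2 ≤ ∑ v ∈ T, p v ω * g v ω ^ 2} := fun ω hω => by
    have := (even_two.convexOn_pow (𝕜 := ℝ)).map_sum_le (t := T) (w := fun v => p v ω)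
      (p := fun v => g v ω) (fun v hv => hp_nonneg v hv ω) (hp_sum ω) (fun _ _ => Set.mem_univ _)
    simp only [smul_eq_mul] at this
    refine le_trans ?_ this
    rw [← sq_abs (∑ v ∈ T, _)]
    exact pow_le_pow_left₀ ha.le hω.le 2
  rw [le_div_iff₀' (by positivity)]
  exact (mul_le_mul_of_nonneg_left (measureReal_mono hjensen) (by positivity)).trans
    (hmarkov.trans hmean)

lemma measureReal_biUnion_le_card_mul {b : α → Set Ω} {p : ℝ} (hb : ∀ i ∈ T, P.real (b i) ≤ p) :
    P.real (⋃ i ∈ T, b i) ≤ T.card * p :=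
  (measureReal_biUnion_finset_le T b).trans
    ((Finset.sum_le_card_nsmul _ _ _ hb).trans_eq (nsmul_eq_mul _ _))

end RandomGibbsMass

section MultiscaleAverage

variable {ι : Type*} {N m n K : ℕ} {k : ℤ} {r κ : ι → ℝ} {J J' : Finset ι} {f : FieldSp}
  {U T S : Finset Vtx} {c τ : ℝ} {v : Vtx}

/-- The linear combination, with coefficients `κ j`, of the averages of a field over harmonic
measure from `v` on the boundaries of the boxes of radii `r j` around `v`. -/
def multiscaleAvg (N : ℕ) (r κ : ι → ℝ) (J : Finset ι) (v : Vtx) : FieldSp →L[ℝ] ℝ :=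
  ∑ j ∈ J, κ j • (evalCLM v ∘L harmonicExt (localBox N (r j) v))

/-- The part of `multiscaleAvg` coming from the boxes that do not reach a dividing column. On the
field killed on the dividing columns these parts are exchangeable between the slabs. -/
def decoupledAvg (N m : ℕ) (r κ : ι → ℝ) (J : Finset ι) (v : Vtx) : FieldSp →L[ℝ] ℝ :=
  multiscaleAvg N r κ (J.filter fun j => ¬ ReachesDivider m (r j) v) v

lemma multiscaleAvg_apply (N : ℕ) (r κ : ι → ℝ) (J : Finset ι) (v : Vtx) (f : FieldSp) :
    multiscaleAvg N r κ J v f = ∑ j ∈ J, κ j * harmonicExt (localBox N (r j) v) f v := by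
  simp only [multiscaleAvg, sum_apply, smul_apply,
    ContinuousLinearMap.comp_apply, smul_eq_mul]
  rfl

lemma multiscaleAvg_eq_decoupledAvg_add (N m : ℕ) (r κ : ι → ℝ) (J : Finset ι) (U : Finset Vtx)
    (v : Vtx) (f : FieldSp) :
    multiscaleAvg N r κ J v f = decoupledAvg N m r κ J v (dirichletPart U f) +
      (multiscaleAvg N r κ (J.filter fun j => ReachesDivider m (r j) v) v (dirichletPart U f) +
        multiscaleAvg N r κ J v (harmonicExt U f)) := by
  have hsplit : multiscaleAvg N r κ J v (dirichletPart U f) =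
      decoupledAvg N m r κ J v (dirichletPart U f) +
        multiscaleAvg N r κ (J.filter fun j => ReachesDivider m (r j) v) v (dirichletPart U f) := by
    simp only [decoupledAvg, multiscaleAvg_apply]
    rw [add_comm, Finset.sum_filter_add_sum_filter_not]
  rw [← add_assoc, ← hsplit, ← map_add, dirichletPart_apply, sub_add_cancel]

lemma abs_multiscaleAvg_le (hJ : J' ⊆ J)
    (h : ∀ j ∈ J', |harmonicExt (localBox N (r j) v) f v| ≤ τ) (hτ : 0 ≤ τ)
    (hκ : ∑ j ∈ J, |κ j| ≤ c) : |multiscaleAvg N r κ J' v f| ≤ c * τ := by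
  rw [multiscaleAvg_apply]
  calc |∑ j ∈ J', κ j * harmonicExt (localBox N (r j) v) f v|
    _ ≤ ∑ j ∈ J', |κ j| * τ := by
        refine (Finset.abs_sum_le_sum_abs _ _).trans (Finset.sum_le_sum fun j hj => ?_)
        rw [abs_mul]
        exact mul_le_mul_of_nonneg_left (h j hj) (abs_nonneg _)
    _ ≤ ∑ j ∈ J, |κ j| * τ :=
        Finset.sum_le_sum_of_subset_of_nonneg hJ fun _ _ _ => by positivity
    _ ≤ c * τ := by
        rw [← Finset.sum_mul]
        exact mul_le_mul_of_nonneg_right hκ hτ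

lemma gibbsMass_multiscaleAvg_le (hT : T.Nonempty) (hST : S ⊆ T) (hτ : 0 ≤ τ)
    (hκ : ∑ j ∈ J, |κ j| ≤ c)
    (hreach : ∀ v ∈ T, ∀ j ∈ J, ReachesDivider m (r j) v →
      |harmonicExt (localBox N (r j) v) (dirichletPart U f) v| ≤ τ)
    (hcoarse : ∀ v ∈ S, ∀ j ∈ J, |harmonicExt (localBox N (r j) v) (harmonicExt U f) v| ≤ τ)
    (havg : |∑ v ∈ T, gibbsMass (fun v => decoupledAvg N m r κ J v (dirichletPart U f)) T {v} *
      multiscaleAvg N r κ J v (harmonicExt U f)| ≤ c * τ) :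
    gibbsMass (fun v => multiscaleAvg N r κ J v f) T S ≤
      Real.exp (4 * (c * τ)) *
        gibbsMass (fun v => decoupledAvg N m r κ J v (dirichletPart U f)) T S := by
  have hfine : ∀ v ∈ T, |multiscaleAvg N r κ (J.filter fun j => ReachesDivider m (r j) v) v
      (dirichletPart U f)| ≤ c * τ := fun v hv =>
    abs_multiscaleAvg_le (Finset.filter_subset _ _)
      (fun j hj => hreach v hv j (Finset.mem_filter.1 hj).1 (Finset.mem_filter.1 hj).2) hτ hκ
  have hfine_avg := abs_sum_gibbsMass_mul_le
    (Y := fun v => decoupledAvg N m r κ J v (dirichletPart U f)) hT hfine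
  simp only [multiscaleAvg_eq_decoupledAvg_add N m r κ J U _ f]
  rw [show 4 * (c * τ) = 2 * (2 * (c * τ)) by ring]
  refine gibbsMass_add_le hT (fun v hv => ?_) ?_
  · have := abs_le.1 (hfine v (hST hv))
    have := abs_le.1 (abs_multiscaleAvg_le subset_rfl (hcoarse v hv) hτ hκ)
    linarith
  · simp only [mul_add, Finset.sum_add_distrib]
    linarith [abs_le.1 hfine_avg, abs_le.1 havg]

lemma decoupledAvg_comp_slabSwap (hm : 2 * n ≤ m) (hm₀ : 0 < m) (hK : K * m ≤ N) (hk₀ : 0 ≤ k)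
    (hk : k < K) (hv : v ∈ strips N m n K) (f : FieldSp) :
    decoupledAvg N m r κ J v (f ∘ slabSwap m k) =
      decoupledAvg N m r κ J (slabSwap m k v) f := by
  simp only [decoupledAvg, multiscaleAvg_apply, reachesDivider_slabSwap]
  refine Finset.sum_congr rfl fun j hj => congrArg _ ?_
  exact harmonicExt_localBox_slabSwap hm hm₀ hK hk₀ hk hv (Finset.mem_filter.1 hj).2 f

lemma strip_subset_strips : strip N m n K k ⊆ strips N m n K := Finset.filter_subset _ _

lemma strips_subset_VN : strips N m n K ⊆ VN N := Finset.filter_subset _ _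

lemma slabSwap_mem_strips_iff (hm : 0 < m) (hK : K * m ≤ N) (hk₀ : 0 ≤ k) (hk : k < K) :
    v ∈ strips N m n K ↔ slabSwap m k v ∈ strips N m n K :=
  ⟨slabSwap_mem_strips hm hK hk₀ hk,
    fun h => slabSwap_slabSwap m k v ▸ slabSwap_mem_strips hm hK hk₀ hk h⟩

lemma gibbsMass_decoupledAvg_comp_slabSwap (hm : 2 * n ≤ m) (hm₀ : 0 < m) (hK : K * m ≤ N)
    (hk₀ : 0 ≤ k) (hk : k < K) (f : FieldSp) :
    gibbsMass (fun v => decoupledAvg N m r κ J v (f ∘ slabSwap m k)) (strips N m n K)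
        (strip N m n K 0) =
      gibbsMass (fun v => decoupledAvg N m r κ J v f) (strips N m n K) (strip N m n K k) := by
  refine gibbsMass_comp_equiv (slabSwap m k) (fun _ => slabSwap_mem_strips_iff hm₀ hK hk₀ hk)
    (fun v => ?_) strip_subset_strips
    (fun v hv => decoupledAvg_comp_slabSwap hm hm₀ hK hk₀ hk hv f)
  rw [mem_strip, mem_strip, ← slabSwap_mem_strips_iff hm₀ hK hk₀ hk, slabSwap_ediv hm₀,
    Equiv.swap_apply_eq_iff, Equiv.swap_apply_right]

lemma sum_gibbsMass_strip_le_one (Y : Vtx → ℝ) :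
    ∑ k ∈ Finset.range K, gibbsMass Y (strips N m n K) (strip N m n K k) ≤ 1 := by
  have hmaps : ∀ v ∈ strips N m n K,
      v.1 / (m : ℤ) ∈ (Finset.range K).image ((↑) : ℕ → ℤ) := fun v hv => by
    obtain ⟨hvV, -, hvK⟩ := mem_strips.1 hv
    have := Int.ediv_nonneg (mem_VN.1 hvV).1 (Int.natCast_nonneg m)
    exact Finset.mem_image.2 ⟨(v.1 / (m : ℤ)).toNat, Finset.mem_range.2 (by omega), by omega⟩
  have hfiber := Finset.sum_fiberwise_of_maps_to hmaps fun v => gibbsMass Y (strips N m n K) {v}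
  rw [Finset.sum_image fun a _ b _ h => Int.natCast_inj.1 h] at hfiber
  simp only [← sum_gibbsMass_singleton Y _ (strip N m n K _)]
  exact hfiber.trans_le ((sum_gibbsMass_singleton _ _ _).trans_le (gibbsMass_le_one subset_rfl))

end MultiscaleAverage

section StripMass

open MeasureTheory ProbabilityTheory

variable {Ω ι : Type*} {mΩ : MeasurableSpace Ω} {P : Measure Ω} {X : Ω → FieldSp}
  {N m n K : ℕ} {r κ : ι → ℝ} {J : Finset ι} {G : Vtx → Vtx → ℝ} {U V : Finset Vtx}
  {c s t τ ε : ℝ}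

lemma card_product_le {T : Finset Vtx} (hT : T ⊆ VN N) (J : Finset ι) :
    ((T ×ˢ J).card : ℝ) ≤ (N + 1) ^ 2 * J.card := by
  rw [Finset.card_product]
  exact_mod_cast Nat.mul_le_mul_right _ ((Finset.card_le_card hT).trans_eq (card_VN N))

namespace IsKilledGFF

lemma measurable_clm (h : IsKilledGFF U G X P) (L : FieldSp →L[ℝ] ℝ) :
    Measurable fun ω => L (X ω) :=
  L.continuous.measurable.comp h.measurable

lemma mul_integral_gibbsMass_strip_le_one (h : IsKilledGFF (slabInterior N m) G X P)
    (hm : 2 * n ≤ m) (hm₀ : 0 < m) (hK : K * m ≤ N) :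
    K * ∫ ω, gibbsMass (fun v => decoupledAvg N m r κ J v (X ω)) (strips N m n K)
      (strip N m n K 0) ∂P ≤ 1 := by
  have := h.isProbabilityMeasure
  have hexch : ∀ k ∈ Finset.range K,
      ∫ ω, gibbsMass (fun v => decoupledAvg N m r κ J v (X ω)) (strips N m n K)
        (strip N m n K k) ∂P =
      ∫ ω, gibbsMass (fun v => decoupledAvg N m r κ J v (X ω)) (strips N m n K)
        (strip N m n K 0) ∂P := fun k hk => by
    have hk' : (k : ℤ) < K := by exact_mod_cast Finset.mem_range.1 hk
    simp only [← gibbsMass_decoupledAvg_comp_slabSwap hm hm₀ hK k.cast_nonneg hk']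
    exact ((h.comp_equiv (slabSwap m k) fun x y => h.isKilledGreen.apply_slabSwap hm₀ hK
      k.cast_nonneg hk' x y).identDistrib h).comp (measurable_gibbsMass (fun v =>
        (decoupledAvg N m r κ J v).continuous.measurable) _ _) |>.integral_eq
  have hint : ∀ k ∈ Finset.range K, Integrable (fun ω => gibbsMass
      (fun v => decoupledAvg N m r κ J v (X ω)) (strips N m n K) (strip N m n K k)) P :=
    fun k _ => integrable_gibbsMass (fun v => h.measurable_clm _) strip_subset_strips
  calc (K : ℝ) * ∫ ω, gibbsMass (fun v => decoupledAvg N m r κ J v (X ω)) (strips N m n K)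
        (strip N m n K 0) ∂P
    _ = ∫ ω, ∑ k ∈ Finset.range K, gibbsMass (fun v => decoupledAvg N m r κ J v (X ω))
          (strips N m n K) (strip N m n K k) ∂P := by
        rw [integral_finsetSum _ hint, Finset.sum_congr rfl hexch, Finset.sum_const,
          Finset.card_range, nsmul_eq_mul]
    _ ≤ ∫ _, 1 ∂P := integral_mono (integrable_finsetSum _ hint) (integrable_const _)
        fun ω => sum_gibbsMass_strip_le_one _
    _ = 1 := by simp only [integral_const, probReal_univ, smul_eq_mul, one_mul]

lemma integral_sq_sum_le (h : IsKilledGFF U G X P) {L : ι → FieldSp →L[ℝ] ℝ}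
    (hs : ∀ j ∈ J, kernelCov G (L j) (L j) ≤ s) :
    ∫ ω, (∑ j ∈ J, κ j * L j (X ω)) ^ 2 ∂P ≤ (∑ j ∈ J, |κ j|) ^ 2 * s := by
  have hint : ∀ j ∈ J, Integrable (fun ω => |κ j| * L j (X ω) ^ 2) P := fun j _ =>
    (h.memLp_two (L j)).integrable_sq.const_mul _
  have hcauchy : ∀ ω, (∑ j ∈ J, κ j * L j (X ω)) ^ 2 ≤
      (∑ j ∈ J, |κ j|) * ∑ j ∈ J, |κ j| * L j (X ω) ^ 2 := fun ω =>
    Finset.sum_sq_le_sum_mul_sum_of_sq_le_mul _ (fun _ _ => abs_nonneg _)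
      (fun _ _ => by positivity) fun j _ => by rw [mul_pow, ← sq_abs (κ j), sq, mul_assoc]
  calc ∫ ω, (∑ j ∈ J, κ j * L j (X ω)) ^ 2 ∂P
    _ ≤ ∫ ω, (∑ j ∈ J, |κ j|) * ∑ j ∈ J, |κ j| * L j (X ω) ^ 2 ∂P :=
        integral_mono_of_nonneg (.of_forall fun _ => sq_nonneg _)
          ((integrable_finsetSum _ hint).const_mul _) (.of_forall hcauchy)
    _ = (∑ j ∈ J, |κ j|) * ∑ j ∈ J, |κ j| * kernelCov G (L j) (L j) := by
        simp only [integral_const_mul, integral_finsetSum _ hint, h.integral_sq]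
    _ ≤ (∑ j ∈ J, |κ j|) * ∑ j ∈ J, |κ j| * s := by
        gcongr with j hj
        exact hs j hj
    _ = (∑ j ∈ J, |κ j|) ^ 2 * s := by rw [← Finset.sum_mul, sq, mul_assoc]

lemma measureReal_lt_coarse_average_le (h : IsKilledGFF (intr (VN N)) G X P)
    (hU : U ⊆ intr (VN N)) {T : Finset Vtx} (hT : T.Nonempty) (hκ : ∑ j ∈ J, |κ j| ≤ c)
    (hc : 0 < c) (hτ : 0 < τ) :
    P.real {ω | c * τ <
      |∑ v ∈ T, gibbsMass (fun v => decoupledAvg N m r κ J v (_root_.dirichletPart U (X ω))) T {v} *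
        multiscaleAvg N r κ J v (harmonicExt U (X ω))|} ≤ greenBound N / τ ^ 2 := by
  have := h.isProbabilityMeasure
  have hmeas : ∀ v, Measurable fun f => gibbsMass (fun v => decoupledAvg N m r κ J v f) T {v} :=
    fun v => measurable_gibbsMass (fun v => (decoupledAvg N m r κ J v).continuous.measurable) _ _
  have hvar : ∀ v, ∫ ω, multiscaleAvg N r κ J v (harmonicExt U (X ω)) ^ 2 ∂P ≤
      c ^ 2 * greenBound N := fun v => by
    have hj := h.integral_sq_sum_le (κ := κ) (J := J) fun j _ =>
      (h.isKilledGreen.kernelCov_comp_harmonicExt_le hU _).trans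
        (h.isKilledGreen.kernelCov_harmonicExt_le_greenBound
          (localBox_subset (r := r j) (v := v)) v)
    simp only [multiscaleAvg_apply]
    refine hj.trans (mul_le_mul_of_nonneg_right ?_ (greenBound_nonneg N))
    exact pow_le_pow_left₀ (Finset.sum_nonneg fun _ _ => abs_nonneg _) hκ 2
  refine (measureReal_lt_abs_sum_mul_le (p := fun v ω => gibbsMass
      (fun v => decoupledAvg N m r κ J v (_root_.dirichletPart U (X ω))) T {v})
    (g := fun v ω => multiscaleAvg N r κ J v (harmonicExt U (X ω)))
    (fun v hv => integrable_gibbsMass (fun w => h.measurable_clm (_ ∘L _))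
      (Finset.singleton_subset_iff.2 hv))
    (fun v _ ω => gibbsMass_nonneg _ _ _)
    (fun ω => (sum_gibbsMass_singleton _ _ _).trans (gibbsMass_self hT))
    (fun v _ => h.memLp_two (multiscaleAvg N r κ J v ∘L harmonicExt U))
    (fun v _ => (h.indepFun_dirichletPart_harmonicExt hU).comp (hmeas v)
      (multiscaleAvg N r κ J v).continuous.measurable)
    (fun v _ => hvar v) (mul_pos hc hτ)).trans_eq ?_
  rw [mul_pow, mul_div_mul_left _ _ (by positivity)]

lemma measureReal_lt_gibbsMass_decoupledAvg_le (h : IsKilledGFF (slabInterior N m) G X P)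
    (hm : 2 * n ≤ m) (hm₀ : 0 < m) (hK₀ : 0 < K) (hK : K * m ≤ N) (hε : 0 < ε) (b : ℝ) :
    P.real {ω | ε < Real.exp b * gibbsMass (fun v => decoupledAvg N m r κ J v (X ω))
      (strips N m n K) (strip N m n K 0)} ≤ Real.exp b / (K * ε) := by
  have := h.isProbabilityMeasure
  have hmarkov := mul_meas_ge_le_integral_of_nonneg (μ := P)
    (.of_forall fun ω => mul_nonneg (Real.exp_pos b).le (gibbsMass_nonneg _ _ _))
    ((integrable_gibbsMass (fun v => h.measurable_clm (decoupledAvg N m r κ J v))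
      (strip_subset_strips (N := N) (m := m) (n := n) (K := K) (k := 0))).const_mul _) ε
  rw [integral_const_mul] at hmarkov
  have hK₀' : (0 : ℝ) < K := by exact_mod_cast hK₀
  rw [le_div_iff₀' (by positivity), mul_assoc]
  refine (mul_le_mul_of_nonneg_left ((mul_le_mul_of_nonneg_left
    (measureReal_mono fun ω (hω : ε < _) => hω.le) hε.le).trans hmarkov) hK₀'.le).trans ?_
  rw [mul_left_comm]
  exact mul_le_of_le_one_right (Real.exp_pos b).le
    (h.mul_integral_gibbsMass_strip_le_one hm hm₀ hK)

lemma measureReal_biUnion_reaching_le (h : IsKilledGFF (intr (VN N)) G X P) (hm : 0 < m)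
    (ht : 3 ≤ t) (hτ : 0 ≤ τ) {T : Finset Vtx} (hT : T ⊆ VN N) :
    P.real (⋃ i ∈ T ×ˢ J, {ω | ReachesDivider m (r i.2) i.1 ∧ τ < |harmonicExt
      (localBox N (r i.2) i.1) (_root_.dirichletPart (slabInterior N m) (X ω)) i.1|}) ≤
      ((N + 1) ^ 2 * J.card) * (2 * Real.exp (-τ ^ 2 / (2 * stripVarBound N m n t))) := by
  have := h.isProbabilityMeasure
  refine (measureReal_biUnion_le_card_mul fun i _ => ?_).trans
    (mul_le_mul_of_nonneg_right (card_product_le hT J) (by positivity))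
  by_cases hr : ReachesDivider m (r i.2) i.1
  · exact (measureReal_mono fun ω hω => hω.2).trans <| h.measureReal_lt_abs_le hτ <|
      (h.isKilledGreen.kernelCov_localBox_dirichletPart_le hm hr ht).trans
        localVarBound_le_stripVarBound
  · simp only [hr, false_and, Set.ofPred_false, measureReal_empty]
    positivity

lemma measureReal_biUnion_coarse_le (h : IsKilledGFF (intr (VN N)) G X P) (hm : 2 * n ≤ m)
    (ht : 3 ≤ t) (hτ : 0 ≤ τ) :
    P.real (⋃ i ∈ strip N m n K 0 ×ˢ J, {ω | τ < |harmonicExt (localBox N (r i.2) i.1)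
      (harmonicExt (slabInterior N m) (X ω)) i.1|}) ≤
      ((N + 1) ^ 2 * J.card) * (2 * Real.exp (-τ ^ 2 / (2 * stripVarBound N m n t))) :=
  (measureReal_biUnion_le_card_mul fun i hi => h.measureReal_lt_abs_le hτ <|
    h.isKilledGreen.kernelCov_localBox_harmonicExt_le hm (Finset.mem_product.1 hi).1 (r i.2)
      ht).trans (mul_le_mul_of_nonneg_right
        (card_product_le (strip_subset_strips.trans strips_subset_VN) J) (by positivity))

lemma measureReal_lt_gibbsMass_strip_le (h : IsKilledGFF (intr (VN N)) G X P) (hm : 2 * n ≤ m)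
    (hn : 0 < n) (hK₀ : 0 < K) (hK : K * m ≤ N) (ht : 3 ≤ t) (hτ : 0 < τ)
    (hκ : ∑ j ∈ J, |κ j| ≤ c) (hc : 0 < c) (hε : 0 < ε) :
    P.real {ω | ε < gibbsMass (fun v => multiscaleAvg N r κ J v (X ω)) (strips N m n K)
      (strip N m n K 0)} ≤
      2 * (((N + 1) ^ 2 * J.card) * (2 * Real.exp (-τ ^ 2 / (2 * stripVarBound N m n t)))) +
        greenBound N / τ ^ 2 + Real.exp (4 * (c * τ)) / (K * ε) := by
  have := h.isProbabilityMeasure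
  have hm₀ : 0 < m := by omega
  have hT : (strips N m n K).Nonempty := ⟨(0, 0), mem_strips.2 ⟨mem_VN.2 (by simp),
    by simpa using hn, by simpa using hK₀⟩⟩
  have hreach := h.measureReal_biUnion_reaching_le (n := n) (r := r) (J := J) hm₀ ht hτ.le
    (strips_subset_VN (m := m) (n := n) (K := K))
  have hcoarse := h.measureReal_biUnion_coarse_le (K := K) (r := r) (J := J) hm ht hτ.le
  have havg := h.measureReal_lt_coarse_average_le (m := m) (r := r)
    (slabInterior_subset (m := m)) hT hκ hc hτ
  have hdecoupled := (h.dirichletPart (slabInterior_subset (m := m)))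
    |>.measureReal_lt_gibbsMass_decoupledAvg_le (r := r) (κ := κ) (J := J) hm hm₀ hK₀ hK hε
      (4 * (c * τ))
  refine (measureReal_mono (fun ω hω => ?_)).trans <|
    (measureReal_union_le _ _).trans <| (add_le_add_left ((measureReal_union_le _ _).trans <|
      add_le_add_left (measureReal_union_le _ _) _) _).trans <|
    (add_le_add (add_le_add (add_le_add hreach hcoarse) havg) hdecoupled).trans_eq (by ring)
  by_contra hgood
  simp only [Set.mem_union, Set.mem_iUnion, Set.mem_ofPred_eq, Finset.mem_product, not_or,
    not_exists, not_and, not_lt] at hgood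
  obtain ⟨⟨⟨hreach_le, hcoarse_le⟩, havg_le⟩, hdecoupled_le⟩ := hgood
  exact hω.not_ge <| (gibbsMass_multiscaleAvg_le hT strip_subset_strips hτ.le hκ
    (fun v hv j hj => hreach_le (v, j) ⟨hv, hj⟩)
    (fun v hv j hj => hcoarse_le (v, j) ⟨hv, hj⟩)
    havg_le).trans hdecoupled_le

end IsKilledGFF

end StripMass

section StripParameters

variable {N m n K q : ℕ} {c s x δ ε η θ ρ : ℝ}

lemma greenBound_le_mul_log (hN : 3 ≤ N) : greenBound N ≤ 3 * logCharge * Real.log N := by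
  have hN' : (3 : ℝ) ≤ N := by exact_mod_cast hN
  have hlog : Real.log (2 * (N : ℝ) ^ 2 + 1) ≤ 3 * Real.log N := by
    rw [show 3 * Real.log N = Real.log ((N : ℝ) ^ 3) by rw [Real.log_pow]; norm_num]
    exact Real.log_le_log (by positivity) (by nlinarith [sq_nonneg (N : ℝ)])
  calc greenBound N ≤ logCharge * (3 * Real.log N) :=
        mul_le_mul_of_nonneg_left hlog logCharge_pos.le
    _ = 3 * logCharge * Real.log N := by ring

lemma greenBound_div_sq_le (hN : 3 ≤ N) (hδ : 0 < δ) (hε : 0 < ε)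
    (hlog : 9 * logCharge / (δ ^ 2 * ε) ≤ Real.log N) :
    greenBound N / (δ * Real.log N) ^ 2 ≤ ε / 3 := by
  have hlog₀ : 0 < Real.log N := Real.log_pos (by exact_mod_cast (by omega : 1 < N))
  rw [div_le_iff₀ (by positivity)] at hlog ⊢
  calc greenBound N ≤ 3 * logCharge * Real.log N := greenBound_le_mul_log hN
    _ = 9 * logCharge * (Real.log N / 3) := by ring
    _ ≤ Real.log N * (δ ^ 2 * ε) * (Real.log N / 3) := by gcongr
    _ = ε / 3 * (δ * Real.log N) ^ 2 := by ring

lemma stripVarBound_le_mul_log (hN : 3 ≤ N) (hη : 0 < η) (hlog : Real.log 72 / η ≤ Real.log N)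
    (ht : 21 / η ≤ (N : ℝ) ^ η) (hm : 0 < m) (hn : n * (N : ℝ) ^ η ≤ 2 * (m : ℝ)) :
    stripVarBound N m n ((N : ℝ) ^ η) ≤ 4 * logCharge * η * Real.log N := by
  have hN₀ : (0 : ℝ) < N := by exact_mod_cast (by omega : 0 < N)
  have ht₀ : 0 < (N : ℝ) ^ η := Real.rpow_pos_of_pos hN₀ η
  have hm₀ : (0 : ℝ) < m := by exact_mod_cast hm
  have hC := logCharge_pos
  have hB := greenBound_nonneg N
  have hlog₀ : 0 ≤ Real.log N := Real.log_natCast_nonneg N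
  rw [div_le_iff₀ hη] at hlog ht
  have hmain : Real.log (72 * ((N : ℝ) ^ η) ^ 2) ≤ 3 * (η * Real.log N) := by
    rw [Real.log_mul (by norm_num) (by positivity), Real.log_pow, Real.log_rpow hN₀]
    push_cast
    linarith
  have hcoarse : greenBound N * n / m ≤ 2 * greenBound N / (N : ℝ) ^ η := by
    rw [div_le_div_iff₀ hm₀ ht₀, mul_assoc, mul_comm 2, mul_assoc]
    exact mul_le_mul_of_nonneg_left hn hB
  have hscale : 21 / (N : ℝ) ^ η ≤ η := by rwa [div_le_iff₀ ht₀, mul_comm]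
  calc stripVarBound N m n ((N : ℝ) ^ η)
      = logCharge * Real.log (72 * ((N : ℝ) ^ η) ^ 2) + 5 * greenBound N / (N : ℝ) ^ η
          + greenBound N * n / m := rfl
    _ ≤ logCharge * (3 * (η * Real.log N)) + 5 * greenBound N / (N : ℝ) ^ η
          + 2 * greenBound N / (N : ℝ) ^ η := by gcongr
    _ = logCharge * (3 * (η * Real.log N)) + greenBound N * (7 / (N : ℝ) ^ η) := by ring
    _ ≤ logCharge * (3 * (η * Real.log N))
          + 3 * logCharge * Real.log N * (7 / (N : ℝ) ^ η) := by
        gcongr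
        exact greenBound_le_mul_log hN
    _ = logCharge * (3 * (η * Real.log N)) + logCharge * Real.log N * (21 / (N : ℝ) ^ η) := by ring
    _ ≤ logCharge * (3 * (η * Real.log N)) + logCharge * Real.log N * η := by gcongr
    _ = 4 * logCharge * η * Real.log N := by ring

lemma stripVarBound_pos (ht : 1 ≤ x) : 0 < stripVarBound N m n x :=
  lt_of_lt_of_le
    (add_pos_of_pos_of_nonneg (mul_pos logCharge_pos (Real.log_pos (by nlinarith)))
      (div_nonneg (mul_nonneg (by norm_num) (greenBound_nonneg N)) (by linarith)))
    localVarBound_le_stripVarBound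

lemma mul_exp_neg_sq_div_le (hN : 0 < N) (hs : 0 < s) (hsδ : 6 * s ≤ δ ^ 2 * Real.log N)
    (hε : 0 < ε) (hq : 48 * q / ε ≤ N) :
    2 * (((N : ℝ) + 1) ^ 2 * q * (2 * Real.exp (-(δ * Real.log N) ^ 2 / (2 * s)))) ≤ ε / 3 := by
  have hN₁ : (1 : ℝ) ≤ N := by exact_mod_cast hN
  have hlog₀ : 0 ≤ Real.log N := Real.log_natCast_nonneg N
  have hexp : Real.exp (-(δ * Real.log N) ^ 2 / (2 * s)) ≤ ((N : ℝ) ^ 3)⁻¹ := by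
    rw [← Real.exp_log (by positivity : (0 : ℝ) < ((N : ℝ) ^ 3)⁻¹), Real.log_inv, Real.log_pow,
      Real.exp_le_exp, neg_div, neg_le_neg_iff, le_div_iff₀ (by positivity)]
    push_cast
    calc 3 * Real.log N * (2 * s) = 6 * s * Real.log N := by ring
      _ ≤ δ ^ 2 * Real.log N * Real.log N := by gcongr
      _ = (δ * Real.log N) ^ 2 := by ring
  have hsq : ((N : ℝ) + 1) ^ 2 ≤ 4 * (N : ℝ) ^ 2 := by nlinarith
  calc 2 * (((N : ℝ) + 1) ^ 2 * q * (2 * Real.exp (-(δ * Real.log N) ^ 2 / (2 * s))))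
      ≤ 2 * (4 * (N : ℝ) ^ 2 * q * (2 * ((N : ℝ) ^ 3)⁻¹)) := by gcongr
    _ = 16 * q / (N : ℝ) := by field_simp; ring
    _ ≤ ε / 3 := by
      rw [div_le_iff₀ hε] at hq
      rw [div_le_iff₀ (by linarith)]
      linarith

lemma rpow_div_four_le_natDiv_ceil (hN : 0 < N) (hθ : θ ≤ 1) (hNθ : 4 ≤ (N : ℝ) ^ θ) :
    (N : ℝ) ^ θ / 4 ≤ ((N / ⌈(N : ℝ) ^ (1 - θ)⌉₊ : ℕ) : ℝ) := by
  have hN₁ : (1 : ℝ) ≤ N := by exact_mod_cast hN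
  have hone : 1 ≤ (N : ℝ) ^ (1 - θ) := Real.one_le_rpow hN₁ (by linarith)
  have hceil : (⌈(N : ℝ) ^ (1 - θ)⌉₊ : ℝ) ≤ 2 * (N : ℝ) ^ (1 - θ) :=
    Nat.ceil_le_two_mul (by linarith)
  have hsplit : (N : ℝ) ^ θ * (N : ℝ) ^ (1 - θ) = N := by
    rw [← Real.rpow_add (by linarith), add_sub_cancel, Real.rpow_one]
  have hquot : (N : ℝ) ^ θ / 2 ≤ N / ⌈(N : ℝ) ^ (1 - θ)⌉₊ := by
    rw [le_div_iff₀ (by linarith [Nat.le_ceil ((N : ℝ) ^ (1 - θ))])]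
    nlinarith
  have hfloor := Nat.lt_floor_add_one ((N : ℝ) / ⌈(N : ℝ) ^ (1 - θ)⌉₊)
  rw [Nat.floor_div_natCast, Nat.floor_natCast] at hfloor
  linarith

lemma exp_div_mul_le (hN : 0 < N) (hc : 0 < c) (hε : 0 < ε) (hη : η ≤ ρ / 4)
    (hNρ : 12 / (ε * ε) ≤ (N : ℝ) ^ (ρ / 2)) (hK : (N : ℝ) ^ (ρ - η) / 4 ≤ K) :
    Real.exp (4 * (c * (ρ / (16 * c) * Real.log N))) / (K * ε) ≤ ε / 3 := by
  have hN₁ : (1 : ℝ) ≤ N := by exact_mod_cast hN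
  have hN₀ : (0 : ℝ) < N := by linarith
  have hK₀ : (0 : ℝ) < K := lt_of_lt_of_le (by positivity) hK
  have hexp : Real.exp (4 * (c * (ρ / (16 * c) * Real.log N))) = (N : ℝ) ^ (ρ / 4) := by
    rw [Real.rpow_def_of_pos hN₀]
    congr 1
    field_simp
    ring
  have hpow : (N : ℝ) ^ (ρ / 4) * (N : ℝ) ^ (ρ / 2) ≤ (N : ℝ) ^ (ρ - η) := by
    rw [← Real.rpow_add hN₀]
    exact Real.rpow_le_rpow_of_exponent_le hN₁ (by linarith)
  rw [hexp, div_le_iff₀ (by positivity)]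
  calc (N : ℝ) ^ (ρ / 4) = (N : ℝ) ^ (ρ / 4) * (12 / (ε * ε)) * (ε * ε / 12) := by field_simp
    _ ≤ (N : ℝ) ^ (ρ / 4) * (N : ℝ) ^ (ρ / 2) * (ε * ε / 12) := by gcongr
    _ ≤ (N : ℝ) ^ (ρ - η) * (ε * ε / 12) := by gcongr
    _ = (N : ℝ) ^ (ρ - η) / 4 * (ε * ε / 3) := by ring
    _ ≤ K * (ε * ε / 3) := by gcongr
    _ = ε / 3 * (K * ε) := by ring

lemma ceil_mul_le_two_mul_ceil_mul {a t : ℝ} (ha : 1 ≤ a) (ht : 0 ≤ t) :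
    ⌈a⌉₊ * t ≤ 2 * (⌈a * t⌉₊ : ℝ) :=
  calc ⌈a⌉₊ * t ≤ 2 * a * t :=
        mul_le_mul_of_nonneg_right (Nat.ceil_le_two_mul (by linarith)) ht
    _ = 2 * (a * t) := mul_assoc _ _ _
    _ ≤ 2 * (⌈a * t⌉₊ : ℝ) := mul_le_mul_of_nonneg_left (Nat.le_ceil _) two_pos.le

lemma two_mul_ceil_le_ceil_mul {a t : ℝ} (ha : 1 ≤ a) (ht : 4 ≤ t) :
    2 * ⌈a⌉₊ ≤ ⌈a * t⌉₊ := by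
  have hle : (⌈a⌉₊ : ℝ) * 4 ≤ 2 * ⌈a * t⌉₊ :=
    (mul_le_mul_of_nonneg_left ht (Nat.cast_nonneg _)).trans
      (ceil_mul_le_two_mul_ceil_mul ha (by linarith))
  have : ⌈a⌉₊ * 4 ≤ 2 * ⌈a * t⌉₊ := by exact_mod_cast hle
  omega

-- The strips have width about `N ^ (1 - ρ)` and are spaced by about `N ^ (1 - ρ + η)`; the boxes
-- around a divider are cut at relative scale `N ^ η` and fluctuations at level `δ * log N`.
lemma exists_strip_params (hN : 3 ≤ N) (hρ₁ : ρ < 1) (hc : 0 < c) (hε : 0 < ε)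
    (hδ : δ = ρ / (16 * c)) (hδ₀ : 0 < δ) (hη₀ : 0 < η) (hη : η ≤ ρ / 4)
    (hηδ : η * (24 * logCharge) ≤ δ ^ 2) (hNq : 48 * q / ε ≤ N)
    (hNlog : Real.log 72 / η ≤ Real.log N) (hNδ : 9 * logCharge / (δ ^ 2 * ε) ≤ Real.log N)
    (ht : 4 ≤ (N : ℝ) ^ η) (ht' : 21 / η ≤ (N : ℝ) ^ η) (hNθ : 4 ≤ (N : ℝ) ^ (ρ - η))
    (hNρ : 12 / (ε * ε) ≤ (N : ℝ) ^ (ρ / 2)) :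
    ∃ (m n K : ℕ) (t τ : ℝ), 2 * n ≤ m ∧ 0 < n ∧ 0 < K ∧ K * m ≤ N ∧ 3 ≤ t ∧
      0 < τ ∧ (N : ℝ) ^ (1 - ρ) ≤ n ∧
      2 * (((N : ℝ) + 1) ^ 2 * q * (2 * Real.exp (-τ ^ 2 / (2 * stripVarBound N m n t))))
        + greenBound N / τ ^ 2 + Real.exp (4 * (c * τ)) / (K * ε) ≤ ε := by
  have hN₁ : (1 : ℝ) ≤ N := by exact_mod_cast (by omega : 1 ≤ N)
  have hlog₀ : 0 < Real.log N := Real.log_pos (by exact_mod_cast (by omega : 1 < N))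
  have hwidth : 1 ≤ (N : ℝ) ^ (1 - ρ) := Real.one_le_rpow hN₁ (by linarith)
  have hperiod : (N : ℝ) ^ (1 - (ρ - η)) = (N : ℝ) ^ (1 - ρ) * (N : ℝ) ^ η := by
    rw [← Real.rpow_add (by linarith)]
    ring_nf
  have hK := rpow_div_four_le_natDiv_ceil (by omega) (by linarith) hNθ
  rw [hperiod] at hK
  refine ⟨⌈(N : ℝ) ^ (1 - ρ) * (N : ℝ) ^ η⌉₊, ⌈(N : ℝ) ^ (1 - ρ)⌉₊,
    N / ⌈(N : ℝ) ^ (1 - ρ) * (N : ℝ) ^ η⌉₊, (N : ℝ) ^ η, δ * Real.log N,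
    two_mul_ceil_le_ceil_mul hwidth ht, Nat.ceil_pos.2 (by linarith),
    Nat.cast_pos.1 (lt_of_lt_of_le (by positivity) hK), Nat.div_mul_le_self _ _, by linarith,
    by positivity, Nat.le_ceil _, ?_⟩
  have hvar := stripVarBound_le_mul_log hN hη₀ hNlog ht' (Nat.ceil_pos.2 (by positivity))
    (ceil_mul_le_two_mul_ceil_mul hwidth (by linarith))
  have hlocal := mul_exp_neg_sq_div_le (δ := δ) (by omega) (stripVarBound_pos (by linarith))
    ((mul_le_mul_of_nonneg_left hvar (by norm_num)).trans
      (by linarith [mul_le_mul_of_nonneg_right hηδ hlog₀.le])) hε hNq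
  have hmean := greenBound_div_sq_le hN hδ₀ hε hNδ
  have hexch := exp_div_mul_le (by omega) hc hε hη hNρ hK
  rw [← hδ] at hexch
  exact (add_le_add (add_le_add hlocal hmean) hexch).trans_eq (by ring)

lemma tendsto_natCast_rpow_atTop (hη : 0 < η) :
    Tendsto (fun N : ℕ => (N : ℝ) ^ η) atTop atTop :=
  (tendsto_rpow_atTop hη).comp tendsto_natCast_atTop_atTop

lemma eventually_exists_strip_params (hρ₀ : 0 < ρ) (hρ₁ : ρ < 1) (hc : 0 < c) (hε : 0 < ε)
    (q : ℕ) :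
    ∀ᶠ N : ℕ in atTop, ∃ (m n K : ℕ) (t τ : ℝ), 2 * n ≤ m ∧ 0 < n ∧ 0 < K ∧ K * m ≤ N ∧ 3 ≤ t ∧
      0 < τ ∧ (N : ℝ) ^ (1 - ρ) ≤ n ∧
      2 * (((N : ℝ) + 1) ^ 2 * q * (2 * Real.exp (-τ ^ 2 / (2 * stripVarBound N m n t))))
        + greenBound N / τ ^ 2 + Real.exp (4 * (c * τ)) / (K * ε) ≤ ε := by
  have hC := logCharge_pos
  obtain ⟨δ, hδ⟩ : ∃ δ, δ = ρ / (16 * c) := ⟨_, rfl⟩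
  have hδ₀ : 0 < δ := hδ ▸ by positivity
  obtain ⟨η, hη₀, hη, hηδ⟩ : ∃ η, 0 < η ∧ η ≤ ρ / 4 ∧ η * (24 * logCharge) ≤ δ ^ 2 :=
    ⟨min (ρ / 4) (δ ^ 2 / (24 * logCharge)), by positivity, min_le_left _ _,
      (le_div_iff₀ (by positivity)).1 (min_le_right _ _)⟩
  have hlog : Tendsto (fun N : ℕ => Real.log N) atTop atTop :=
    Real.tendsto_log_atTop.comp tendsto_natCast_atTop_atTop
  filter_upwards [eventually_ge_atTop 3,
    tendsto_natCast_atTop_atTop.eventually_ge_atTop (48 * q / ε),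
    hlog.eventually_ge_atTop (Real.log 72 / η),
    hlog.eventually_ge_atTop (9 * logCharge / (δ ^ 2 * ε)),
    (tendsto_natCast_rpow_atTop hη₀).eventually_ge_atTop 4,
    (tendsto_natCast_rpow_atTop hη₀).eventually_ge_atTop (21 / η),
    (tendsto_natCast_rpow_atTop (by linarith : 0 < ρ - η)).eventually_ge_atTop 4,
    (tendsto_natCast_rpow_atTop (half_pos hρ₀)).eventually_ge_atTop (12 / (ε * ε))]
    with N hN hNq hNlog hNδ ht ht' hNθ hNρ
  exact exists_strip_params hN hρ₁ hc hε hδ hδ₀ hη₀ hη hηδ hNq hNlog hNδ ht ht' hNθ hNρ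

end StripParameters

section BoxSymmetries

variable {N : ℕ} {e e' : Equiv.Perm Vtx} {a ρ : ℝ} {v : Vtx}

/-- `e` is a symmetry of the lattice box `VN N`: it commutes with averaging over neighbours and
preserves the box, its interior and the family of local boxes. -/
structure IsBoxSymm (N : ℕ) (e : Equiv.Perm Vtx) : Prop where
  neighborAvg_comp : ∀ (f : FieldSp) (x : Vtx),
    neighborAvg (fun z => f (e z)) x = neighborAvg f (e x)
  mem_VN_iff : ∀ x, e x ∈ VN N ↔ x ∈ VN N
  mem_intr_iff : ∀ x, e x ∈ intr (VN N) ↔ x ∈ intr (VN N)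
  mem_localBox_iff : ∀ (r : ℝ) (v w : Vtx), w ∈ localBox N r v ↔ e w ∈ localBox N r (e v)

lemma IsBoxSymm.refl (N : ℕ) : IsBoxSymm N (Equiv.refl Vtx) :=
  ⟨fun _ _ => rfl, fun _ => Iff.rfl, fun _ => Iff.rfl, fun _ _ _ => Iff.rfl⟩

lemma IsBoxSymm.trans (h : IsBoxSymm N e) (h' : IsBoxSymm N e') : IsBoxSymm N (e.trans e') where
  neighborAvg_comp f x := (h.neighborAvg_comp (fun z => f (e' z)) x).trans (h'.neighborAvg_comp f _)
  mem_VN_iff x := (h'.mem_VN_iff _).trans (h.mem_VN_iff x)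
  mem_intr_iff x := (h'.mem_intr_iff _).trans (h.mem_intr_iff x)
  mem_localBox_iff r v w := (h.mem_localBox_iff r v w).trans (h'.mem_localBox_iff r _ _)

lemma isBoxSymm_prodComm (N : ℕ) : IsBoxSymm N (Equiv.prodComm ℤ ℤ) where
  neighborAvg_comp f x := by
    simp only [neighborAvg_apply, Equiv.prodComm_apply, Prod.swap]
    ring
  mem_VN_iff x := by simp only [mem_VN, Equiv.prodComm_apply, Prod.fst_swap, Prod.snd_swap]; tauto
  mem_intr_iff x := by
    simp only [mem_intr_VN, Equiv.prodComm_apply, Prod.fst_swap, Prod.snd_swap]; tauto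
  mem_localBox_iff r v w := by
    simp only [mem_localBox, mem_intr_VN, Equiv.prodComm_apply, Prod.fst_swap, Prod.snd_swap]; tauto

/-- The reflection of the box `VN N` exchanging its left and right sides. -/
def horizontalReflection (N : ℕ) : Equiv.Perm Vtx :=
  Function.Involutive.toPerm (fun x => ((N : ℤ) - x.1, x.2)) fun x => by simp

lemma horizontalReflection_apply (N : ℕ) (x : Vtx) :
    horizontalReflection N x = ((N : ℤ) - x.1, x.2) := rfl

lemma isBoxSymm_horizontalReflection (N : ℕ) : IsBoxSymm N (horizontalReflection N) where
  neighborAvg_comp f x := by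
    simp only [neighborAvg_apply, horizontalReflection_apply, sub_add_eq_sub_sub, ← sub_add]
    ring
  mem_VN_iff x := by simp only [mem_VN, horizontalReflection_apply]; omega
  mem_intr_iff x := by simp only [mem_intr_VN, horizontalReflection_apply]; omega
  mem_localBox_iff r v w := by
    simp only [mem_localBox, mem_intr_VN, horizontalReflection_apply, Int.cast_sub,
      sub_sub_sub_cancel_left, abs_sub_comm (v.1 : ℝ)]
    refine and_congr_left' ?_
    omega

lemma IsBoxSymm.multiscaleAvg_comp {ι : Type*} (h : IsBoxSymm N e) (r κ : ι → ℝ) (J : Finset ι)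
    (v : Vtx) (f : FieldSp) :
    multiscaleAvg N r κ J v (f ∘ e) = multiscaleAvg N r κ J (e v) f := by
  rw [multiscaleAvg_apply, multiscaleAvg_apply]
  exact Finset.sum_congr rfl fun j _ => congrArg (κ j * ·) <|
    harmonicExt_comp (h.mem_localBox_iff (r j) v) (fun x _ g => h.neighborAvg_comp g x) f v

/-- The strip of width `a` along the side of the box `VN N` that `e` maps the left side to. -/
def boundaryStrip (N : ℕ) (a : ℝ) (e : Equiv.Perm Vtx) : Finset Vtx :=
  (VN N).filter fun v => ((e.symm v).1 : ℝ) < a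

lemma mem_boundaryStrip : v ∈ boundaryStrip N a e ↔ v ∈ VN N ∧ ((e.symm v).1 : ℝ) < a :=
  Finset.mem_filter

/-- Symmetries of `VN N` carrying the left side to each of the four sides. -/
def sideSymms (N : ℕ) : Finset (Equiv.Perm Vtx) :=
  {Equiv.refl Vtx, horizontalReflection N, Equiv.prodComm ℤ ℤ,
    (horizontalReflection N).trans (Equiv.prodComm ℤ ℤ)}

lemma isBoxSymm_of_mem_sideSymms (he : e ∈ sideSymms N) : IsBoxSymm N e := by
  simp only [sideSymms, Finset.mem_insert, Finset.mem_singleton] at he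
  rcases he with rfl | rfl | rfl | rfl
  · exact .refl N
  · exact isBoxSymm_horizontalReflection N
  · exact isBoxSymm_prodComm N
  · exact (isBoxSymm_horizontalReflection N).trans (isBoxSymm_prodComm N)

lemma exists_abs_sub_lt_of_notMem_AN (hv : v ∈ VN N) (hvA : v ∉ AN N ρ) :
    ∃ z ∉ VN N, |(v.1 : ℝ) - z.1| < (N : ℝ) ^ (1 - ρ) ∧ |(v.2 : ℝ) - z.2| < (N : ℝ) ^ (1 - ρ) := by
  simp only [AN, Finset.mem_filter, hv, true_and, not_forall, not_le] at hvA
  obtain ⟨z, hz, hlt⟩ := hvA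
  exact ⟨z, hz, (Real.abs_le_sqrt (le_add_of_nonneg_right (sq_nonneg _))).trans_lt hlt,
    (Real.abs_le_sqrt (le_add_of_nonneg_left (sq_nonneg _))).trans_lt hlt⟩

lemma VN_sdiff_AN_subset (N : ℕ) (ρ : ℝ) :
    VN N \ AN N ρ ⊆ (sideSymms N).biUnion (boundaryStrip N ((N : ℝ) ^ (1 - ρ))) := by
  intro v hv
  obtain ⟨hvV, hvA⟩ := Finset.mem_sdiff.1 hv
  obtain ⟨z, hz, h₁, h₂⟩ := exists_abs_sub_lt_of_notMem_AN hvV hvA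
  rw [abs_lt] at h₁ h₂
  simp only [Finset.mem_biUnion, mem_boundaryStrip, hvV, true_and]
  have hside : z.1 < 0 ∨ N < z.1 ∨ z.2 < 0 ∨ N < z.2 := by
    rw [mem_VN] at hz
    omega
  rcases hside with hz | hz | hz | hz
  · refine ⟨Equiv.refl Vtx, by simp [sideSymms], ?_⟩
    have : (z.1 : ℝ) < 0 := by exact_mod_cast hz
    exact (by linarith : (v.1 : ℝ) < (N : ℝ) ^ (1 - ρ))
  · refine ⟨horizontalReflection N, by simp [sideSymms], ?_⟩
    have : (N : ℝ) < z.1 := by exact_mod_cast hz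
    change (((N : ℤ) - v.1 : ℤ) : ℝ) < _
    push_cast
    linarith
  · refine ⟨Equiv.prodComm ℤ ℤ, by simp [sideSymms], ?_⟩
    have : (z.2 : ℝ) < 0 := by exact_mod_cast hz
    exact (by linarith : (v.2 : ℝ) < (N : ℝ) ^ (1 - ρ))
  · refine ⟨(horizontalReflection N).trans (Equiv.prodComm ℤ ℤ), by simp [sideSymms], ?_⟩
    have : (N : ℝ) < z.2 := by exact_mod_cast hz
    change (((N : ℤ) - v.2 : ℤ) : ℝ) < _
    push_cast
    linarith

end BoxSymmetries

section GibbsMassUnion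

lemma gibbsMass_le_sum_of_subset_biUnion {α ι : Type*} [DecidableEq α] {Y : α → ℝ} {T S : Finset α}
    {E : Finset ι} {f : ι → Finset α} (hS : S ⊆ E.biUnion f) :
    gibbsMass Y T S ≤ ∑ i ∈ E, gibbsMass Y T (f i) := by
  refine (gibbsMass_mono (hS.trans (Finset.sup_eq_biUnion E f).ge)).trans <|
    Finset.apply_sup_le_sum (f := gibbsMass Y T) (by simp [gibbsMass]) (fun {s t} => ?_) E
  unfold gibbsMass
  rw [← add_div, ← Finset.sum_union_inter, Finset.sup_eq_union]
  gcongr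
  exact le_add_of_nonneg_right (Finset.sum_nonneg fun _ _ => (Real.exp_pos _).le)

end GibbsMassUnion

section BoundaryMass

open MeasureTheory ProbabilityTheory

variable {N m n K : ℕ} {a c t ε ρ τ : ℝ} {ι : Type*} {J : Finset ι} {r κ : ι → ℝ}
  {G : Vtx → Vtx → ℝ} {Ω : Type*} [MeasurableSpace Ω] {X : Ω → FieldSp} {P : Measure Ω}
  {e : Equiv.Perm Vtx}

lemma boundaryStrip_refl_subset_strip (hm : 2 * n ≤ m) (hK₀ : 0 < K) (ha : a ≤ n) :
    boundaryStrip N a (Equiv.refl Vtx) ⊆ strip N m n K 0 := by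
  intro v hv
  obtain ⟨hvV, hva⟩ := mem_boundaryStrip.1 hv
  have hv₀ : 0 ≤ v.1 := (mem_VN.1 hvV).1
  have hvn : v.1 < n := by exact_mod_cast (show (v.1 : ℝ) < a from hva).trans_le ha
  have hvm : v.1 < m := by omega
  have hdiv : v.1 / m = 0 := Int.ediv_eq_zero_of_lt hv₀ hvm
  have hmod : v.1 % m = v.1 := Int.emod_eq_of_lt hv₀ hvm
  refine mem_strip.2 ⟨mem_strips.2 ⟨hvV, ?_, ?_⟩, ?_⟩ <;> simp only [hdiv, hmod] <;> omega

lemma gibbsMass_boundaryStrip_refl_le (Y : Vtx → ℝ) (hm : 2 * n ≤ m) (hn : 0 < n) (hK₀ : 0 < K)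
    (ha : a ≤ n) :
    gibbsMass Y (VN N) (boundaryStrip N a (Equiv.refl Vtx)) ≤
      gibbsMass Y (strips N m n K) (strip N m n K 0) := by
  have : (strips N m n K).Nonempty := ⟨(0, 0), mem_strips.2 ⟨mem_VN.2 (by simp),
    by simpa using hn, by simpa using hK₀⟩⟩
  unfold gibbsMass
  gcongr
  · exact boundaryStrip_refl_subset_strip hm hK₀ ha
  · exact strips_subset_VN

lemma gibbsMass_boundaryStrip_eq (he : IsBoxSymm N e) (a : ℝ) (f : FieldSp) :
    gibbsMass (fun v => multiscaleAvg N r κ J v f) (VN N) (boundaryStrip N a e) =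
      gibbsMass (fun v => multiscaleAvg N r κ J v (f ∘ e)) (VN N)
        (boundaryStrip N a (Equiv.refl Vtx)) :=
  (gibbsMass_comp_equiv e (fun v => (he.mem_VN_iff v).symm)
    (fun v => by simp [mem_boundaryStrip, he.mem_VN_iff]) (fun _ hv => (mem_boundaryStrip.1 hv).1)
    fun v _ => he.multiscaleAvg_comp r κ J v f).symm

namespace IsKilledGFF

lemma comp_isBoxSymm (h : IsKilledGFF (intr (VN N)) G X P) (he : IsBoxSymm N e) :
    IsKilledGFF (intr (VN N)) G (fun ω => X ω ∘ e) P :=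
  h.comp_equiv e (h.isKilledGreen.apply_equiv e he.mem_intr_iff
    fun f _ x _ => he.neighborAvg_comp f x)

lemma measureReal_lt_gibbsMass_boundaryStrip_le (h : IsKilledGFF (intr (VN N)) G X P)
    (he : IsBoxSymm N e) (hm : 2 * n ≤ m) (hn : 0 < n) (hK₀ : 0 < K) (hK : K * m ≤ N)
    (ht : 3 ≤ t) (hτ : 0 < τ) (hκ : ∑ j ∈ J, |κ j| ≤ c) (hc : 0 < c) (hε : 0 < ε) (ha : a ≤ n) :
    P.real {ω | ε < gibbsMass (fun v => multiscaleAvg N r κ J v (X ω)) (VN N)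
      (boundaryStrip N a e)} ≤
      2 * (((N + 1) ^ 2 * J.card) * (2 * Real.exp (-τ ^ 2 / (2 * stripVarBound N m n t)))) +
        greenBound N / τ ^ 2 + Real.exp (4 * (c * τ)) / (K * ε) := by
  have := h.isProbabilityMeasure
  refine (measureReal_mono fun ω hω => ?_).trans
    ((h.comp_isBoxSymm he).measureReal_lt_gibbsMass_strip_le hm hn hK₀ hK ht hτ hκ hc hε)
  exact (hω.trans_eq (gibbsMass_boundaryStrip_eq he a (X ω))).trans_le
    (gibbsMass_boundaryStrip_refl_le _ hm hn hK₀ ha)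

end IsKilledGFF

lemma eventually_measureReal_lt_gibbsMass_boundaryStrip_le (hρ : 0 < ρ) (hε : 0 < ε)
    (J : Finset ι) (κ : ι → ℝ) :
    ∀ᶠ N : ℕ in atTop, ∀ (r : ι → ℝ) (G : Vtx → Vtx → ℝ) (X : Ω → FieldSp) (P : Measure Ω),
      IsKilledGFF (intr (VN N)) G X P → ∀ e, IsBoxSymm N e →
      P.real {ω | ε < gibbsMass (fun v => multiscaleAvg N r κ J v (X ω)) (VN N)
        (boundaryStrip N ((N : ℝ) ^ (1 - ρ)) e)} ≤ ε := by
  have hc : 0 < ∑ j ∈ J, |κ j| + 1 := by positivity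
  filter_upwards [eventually_ge_atTop 1, eventually_exists_strip_params
    (lt_min hρ one_half_pos) ((min_le_right ρ _).trans_lt one_half_lt_one) hc hε J.card]
    with N hN ⟨m, n, K, t, τ, hm, hn, hK₀, hK, ht, hτ, hNn, hbound⟩ r G X P h e he
  have hwidth : (N : ℝ) ^ (1 - ρ) ≤ n :=
    (Real.rpow_le_rpow_of_exponent_le (by exact_mod_cast hN)
      (sub_le_sub_left (min_le_left ρ _) 1)).trans hNn
  exact (h.measureReal_lt_gibbsMass_boundaryStrip_le he hm hn hK₀ hK ht hτ
    (le_add_of_nonneg_right zero_le_one) hc hε hwidth).trans hbound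

lemma eventually_measureReal_lt_gibbsMass_sdiff_AN_le (hρ : 0 < ρ) (hε : 0 < ε) (J : Finset ι)
    (κ : ι → ℝ) :
    ∀ᶠ N : ℕ in atTop, ∀ (r : ι → ℝ) (G : Vtx → Vtx → ℝ) (X : Ω → FieldSp) (P : Measure Ω),
      IsKilledGFF (intr (VN N)) G X P →
      P.real {ω | ε < gibbsMass (fun v => multiscaleAvg N r κ J v (X ω)) (VN N)
        (VN N \ AN N ρ)} ≤ ε := by
  filter_upwards [eventually_measureReal_lt_gibbsMass_boundaryStrip_le (Ω := Ω) hρ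
    (by positivity : 0 < ε / 4) J κ] with N hN r G X P h
  have := h.isProbabilityMeasure
  have hcard : ((sideSymms N).card : ℝ) * (ε / 4) ≤ ε := by
    have : ((sideSymms N).card : ℝ) ≤ 4 := by exact_mod_cast Finset.card_le_four
    nlinarith
  refine (measureReal_mono (fun ω hω => ?_) (measure_ne_top _ _)).trans <|
    (measureReal_biUnion_le_card_mul fun e he =>
      hN r G X P h e (isBoxSymm_of_mem_sideSymms he)).trans hcard
  have hsum : ∑ _e ∈ sideSymms N, ε / 4 < ∑ e ∈ sideSymms N,
      gibbsMass (fun v => multiscaleAvg N r κ J v (X ω)) (VN N)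
        (boundaryStrip N ((N : ℝ) ^ (1 - ρ)) e) := by
    rw [Finset.sum_const, nsmul_eq_mul]
    exact hcard.trans_lt (hω.trans_le (gibbsMass_le_sum_of_subset_biUnion
      (VN_sdiff_AN_subset N ρ)))
  simpa only [Set.mem_iUnion, exists_prop] using! Finset.exists_lt_of_sum_lt hsum

end BoundaryMass

section ScaleFields

open MeasureTheory ProbabilityTheory

variable {N : ℕ} {lam : ℝ} {P : Measure FieldSp} {v : Vtx}

/-- The half side of the box `[v]_λ`. The choice `N + 1` for `λ = 0` makes the box around any site
of `V_N` cover `V_N`. -/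
def scaleRadius (N : ℕ) (lam : ℝ) : ℝ := if lam = 0 then N + 1 else (N : ℝ) ^ (1 - lam) / 2

lemma localBox_eq_intr_VN (hv : v ∈ VN N) : localBox N (N + 1) v = intr (VN N) := by
  refine Finset.filter_true_of_mem fun w hw => ?_
  have hw' := mem_VN.1 (intr_subset _ hw)
  have hv' := mem_VN.1 hv
  have habs : ∀ a b : ℤ, 0 ≤ a → a ≤ N → 0 ≤ b → b ≤ N → |(a : ℝ) - b| + 1 ≤ N + 1 :=
    fun a b ha haN hb hbN => by
      have : |a - b| + 1 ≤ (N : ℤ) + 1 := by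
        rw [add_le_add_iff_right, abs_le]
        omega
      exact_mod_cast this
  exact ⟨habs _ _ hw'.1 hw'.2.1 hv'.1 hv'.2.1, habs _ _ hw'.2.2.1 hw'.2.2.2 hv'.2.2.1 hv'.2.2.2⟩

lemma intr_singleton (v : Vtx) : intr {v} = ∅ := by
  refine Finset.eq_empty_of_forall_notMem fun w hw => ?_
  obtain ⟨hwv, hnbr⟩ := mem_intr_iff.1 hw
  have hright := (forall_isNeighbor.1 hnbr).1
  rw [Finset.mem_singleton] at hwv hright
  simpa only [hwv, add_eq_left, one_ne_zero] using congrArg Prod.fst hright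

lemma localBox_eq_empty {r : ℝ} (hr : r < 1) (v : Vtx) : localBox N r v = ∅ :=
  Finset.eq_empty_of_forall_notMem fun w hw => by
    linarith [abs_nonneg ((w.1 : ℝ) - v.1), (mem_localBox.1 hw).2.1]

lemma intr_filter_abs_sub_le (N : ℕ) (r : ℝ) (v : Vtx) :
    intr ((VN N).filter fun w => |(w.1 : ℝ) - v.1| ≤ r ∧ |(w.2 : ℝ) - v.2| ≤ r) =
      localBox N r v := by
  ext w
  simp only [mem_localBox, mem_intr_iff, Finset.mem_filter]
  constructor
  · rintro ⟨⟨hw, -⟩, hnbr⟩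
    obtain ⟨⟨-, hright, -⟩, ⟨-, hleft, -⟩, ⟨-, -, hup⟩, -, -, hdown⟩ := forall_isNeighbor.1 hnbr
    push_cast at hright hleft hup hdown
    have hshift : ∀ a b : ℝ, |a + 1 - b| ≤ r → |a - 1 - b| ≤ r → |a - b| + 1 ≤ r :=
      fun a b hadd hsub => by
        rw [← le_sub_iff_add_le, abs_le]
        constructor <;> linarith [(abs_le.1 hadd).2, (abs_le.1 hsub).1]
    exact ⟨⟨hw, fun y hy => (hnbr y hy).1⟩, hshift _ _ hright hleft, hshift _ _ hup hdown⟩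
  · rintro ⟨⟨hw, hnbr⟩, h₁, h₂⟩
    refine ⟨⟨hw, by linarith, by linarith⟩, fun y hy => ⟨hnbr y hy, ?_, ?_⟩⟩
    · linarith [abs_sub_le (y.1 : ℝ) w.1 v.1, hy.abs_sub_le_one.1]
    · linarith [abs_sub_le (y.2 : ℝ) w.2 v.2, hy.abs_sub_le_one.2]

lemma intr_nbhd (lam : ℝ) (hv : v ∈ VN N) :
    intr (nbhd N lam v) = localBox N (scaleRadius N lam) v := by
  unfold nbhd scaleRadius
  split_ifs with h₀ h₁
  · exact (localBox_eq_intr_VN hv).symm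
  · rw [intr_singleton, localBox_eq_empty]
    rw [h₁, sub_self, Real.rpow_zero]
    exact one_half_lt_one
  · exact intr_filter_abs_sub_le N _ v

lemma scaleAlg_eq_iSup_comap_indicator (N : ℕ) (lam : ℝ) (v : Vtx) :
    scaleAlg N lam v = ⨆ w ∉ intr (nbhd N lam v),
      MeasurableSpace.comap (fun ω => (VN N : Set Vtx).indicator ω w) inferInstance := by
  have hcomap : ∀ w, (⨆ _ : w ∈ VN N,
      MeasurableSpace.comap (fun ω : FieldSp => ω w) inferInstance) =
        MeasurableSpace.comap (fun ω => (VN N : Set Vtx).indicator ω w) inferInstance := fun w => by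
    by_cases hw : w ∈ VN N
    · simp only [hw, iSup_pos, Set.indicator_of_mem (Finset.mem_coe.2 hw)]
    · simp only [hw, iSup_false, Set.indicator_of_notMem (mt Finset.mem_coe.1 hw),
        MeasurableSpace.comap_const]
  simp only [scaleAlg, Set.mem_ofPred_eq, iSup_and, ← hcomap]
  exact iSup_congr fun w => iSup_comm

lemma IsGFF.isKilledGFF (h : IsGFF N P) :
    ∃ G, IsKilledGFF (intr (VN N)) G (fun ω => (VN N : Set Vtx).indicator ω) P := by
  obtain ⟨-, G, hG, hlaw⟩ := h
  have hzero : ∀ x y, x ∉ VN N ∨ y ∉ VN N → G x y = 0 := fun x y hxy =>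
    hG.1 x y (hxy.imp (mt fun hx => intr_subset _ hx) (mt fun hy => intr_subset _ hy))
  have hmeas : Measurable fun ω : FieldSp => (VN N : Set Vtx).indicator ω :=
    measurable_pi_iff.2 fun w => by
      by_cases hw : w ∈ VN N
      · simpa only [Set.indicator_of_mem (Finset.mem_coe.2 hw)] using measurable_pi_apply w
      · simpa only [Set.indicator_of_notMem (mt Finset.mem_coe.1 hw)] using measurable_const
  refine ⟨G, hG.isKilledGreen, hmeas, fun L => ⟨(L.continuous.measurable.comp hmeas).aemeasurable,
    ?_⟩⟩
  have hL : (fun ω => L ((VN N : Set Vtx).indicator ω)) =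
      fun ω => ∑ v ∈ VN N, L (Pi.single v 1) * ω v := funext fun ω => by
    rw [clm_eq_sum L fun w hw => Set.indicator_of_notMem (mt Finset.mem_coe.1 hw) ω]
    exact Finset.sum_congr rfl fun v hv => by rw [Set.indicator_of_mem (Finset.mem_coe.2 hv)]
  rw [hL, hlaw, kernelCov_eq_sum hzero]
  simp only [mul_assoc]

lemma phiScale_ae_eq_harmonicExt {G : Vtx → Vtx → ℝ}
    (h : IsKilledGFF (intr (VN N)) G (fun ω => (VN N : Set Vtx).indicator ω) P) (lam : ℝ)
    (hv : v ∈ VN N) : phiScale N P v lam =ᵐ[P] fun ω =>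
      harmonicExt (localBox N (scaleRadius N lam) v) ((VN N : Set Vtx).indicator ω) v := by
  have hcond := h.condExp_eval (localBox_subset (r := scaleRadius N lam) (v := v)) v
  rw [← intr_nbhd lam hv, ← scaleAlg_eq_iSup_comap_indicator] at hcond
  simpa only [phiScale, Set.indicator_of_mem (Finset.mem_coe.2 hv), intr_nbhd lam hv] using hcond

/-- The radii of the boxes in `ψ_v`: the left copy of `i` stands for `φ_v(λ_i)`, the right copy for
the subtracted `φ_v(λ_{i-1})`. -/
def incrementRadius (N : ℕ) (lamv : ℕ → ℝ) : ℕ ⊕ ℕ → ℝ :=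
  Sum.elim (fun i => scaleRadius N (lamv i)) fun i => scaleRadius N (lamv (i - 1))

/-- The coefficients in `β ψ_v` of the harmonic averages over the boxes of `incrementRadius`. -/
def incrementCoeff (sigv : ℕ → ℝ) (β : ℝ) : ℕ ⊕ ℕ → ℝ :=
  Sum.elim (fun i => β * sigv i) fun i => -(β * sigv i)

lemma mul_psiFld_ae_eq_multiscaleAvg {G : Vtx → Vtx → ℝ}
    (h : IsKilledGFF (intr (VN N)) G (fun ω => (VN N : Set Vtx).indicator ω) P) (M : ℕ)
    (sigv lamv : ℕ → ℝ) (β : ℝ) (hv : v ∈ VN N) :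
    (fun ω => β * psiFld N M sigv lamv P v ω) =ᵐ[P] fun ω =>
      multiscaleAvg N (incrementRadius N lamv) (incrementCoeff sigv β)
        ((Finset.Icc 1 M).disjSum (Finset.Icc 1 M)) v ((VN N : Set Vtx).indicator ω) := by
  have hscales : ∀ᵐ ω ∂P, ∀ i, phiScale N P v (lamv i) ω = harmonicExt
      (localBox N (scaleRadius N (lamv i)) v) ((VN N : Set Vtx).indicator ω) v :=
    ae_all_iff.2 fun i => phiScale_ae_eq_harmonicExt h (lamv i) hv
  filter_upwards [hscales] with ω hω
  simp only [multiscaleAvg_apply, Finset.sum_disjSum, incrementRadius, incrementCoeff,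
    Sum.elim_inl, Sum.elim_inr, ← hω, psiFld]
  rw [← Finset.sum_add_distrib, Finset.mul_sum]
  exact Finset.sum_congr rfl fun i _ => by ring

lemma sum_gibbsW (N M : ℕ) (sigv lamv : ℕ → ℝ) (P : Measure FieldSp) (β : ℝ) (S : Finset Vtx)
    (ω : FieldSp) : ∑ v ∈ S, gibbsW N M sigv lamv P β v ω =
      gibbsMass (fun v => β * psiFld N M sigv lamv P v ω) (VN N) S := by
  simp only [gibbsW, ZN, gibbsMass, Finset.sum_div]

lemma sum_gibbsW_ae_eq_gibbsMass {G : Vtx → Vtx → ℝ}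
    (h : IsKilledGFF (intr (VN N)) G (fun ω => (VN N : Set Vtx).indicator ω) P) (M : ℕ)
    (sigv lamv : ℕ → ℝ) (β : ℝ) {S : Finset Vtx} (hS : S ⊆ VN N) :
    (fun ω => ∑ v ∈ S, gibbsW N M sigv lamv P β v ω) =ᵐ[P] fun ω =>
      gibbsMass (fun v => multiscaleAvg N (incrementRadius N lamv) (incrementCoeff sigv β)
        ((Finset.Icc 1 M).disjSum (Finset.Icc 1 M)) v ((VN N : Set Vtx).indicator ω))
        (VN N) S := by
  filter_upwards [(Finset.eventually_all (VN N)).2 fun v hv =>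
    mul_psiFld_ae_eq_multiscaleAvg h M sigv lamv β hv] with ω hω
  rw [sum_gibbsW, gibbsMass, gibbsMass]
  congr 1
  · exact Finset.sum_congr rfl fun v hv => by rw [hω v (hS hv)]
  · exact Finset.sum_congr rfl fun v hv => by rw [hω v hv]

lemma eventually_measureReal_lt_sum_gibbsW_sdiff_AN_le (M : ℕ) (sigv lamv : ℕ → ℝ)
    {P : ℕ → Measure FieldSp} (hGFF : ∀ N, IsGFF N (P N)) (β : ℝ) {ρ ε : ℝ} (hρ : 0 < ρ)
    (hε : 0 < ε) : ∀ᶠ N in atTop,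
      (P N).real {ω | ε < ∑ v ∈ VN N \ AN N ρ, gibbsW N M sigv lamv (P N) β v ω} ≤ ε := by
  filter_upwards [eventually_measureReal_lt_gibbsMass_sdiff_AN_le (Ω := FieldSp) hρ hε
    ((Finset.Icc 1 M).disjSum (Finset.Icc 1 M)) (incrementCoeff sigv β)] with N hN
  obtain ⟨G, hG⟩ := (hGFF N).isKilledGFF
  refine (measureReal_congr ?_).trans_le (hN (incrementRadius N lamv) G _ (P N) hG)
  filter_upwards [sum_gibbsW_ae_eq_gibbsMass hG M sigv lamv β Finset.sdiff_subset] with ω hω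
  exact congrArg (ε < ·) hω

end ScaleFields

section Convergence

open MeasureTheory

variable {P : ℕ → Measure FieldSp} {X : ℕ → FieldSp → ℝ}

lemma tendstoInProb_of_measureReal_le [∀ N, IsFiniteMeasure (P N)] {c : ℝ}
    (h : ∀ ε : ℝ, 0 < ε → ∀ᶠ N in atTop, (P N).real {ω | ε < |X N ω - c|} ≤ ε) :
    TendstoInProb P X c := fun ε hε => by
  rw [← ENNReal.tendsto_toReal_iff (fun N => measure_ne_top _ _) ENNReal.zero_ne_top,
    ENNReal.toReal_zero, Metric.tendsto_nhds]
  intro δ hδ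
  filter_upwards [h _ (lt_min hε (half_pos hδ))] with N hN
  rw [Real.dist_0_eq_abs, abs_of_nonneg ENNReal.toReal_nonneg]
  calc (P N).real {ω | ε < |X N ω - c|}
    _ ≤ (P N).real {ω | min ε (δ / 2) < |X N ω - c|} :=
        measureReal_mono (Set.ofPred_subset_ofPred.2 fun _ => (min_le_left _ _).trans_lt)
          (measure_ne_top _ _)
    _ ≤ δ / 2 := hN.trans (min_le_right _ _)
    _ < δ := half_lt_self hδ

lemma integral_rpow_le_add_mul_measureReal {Ω : Type*} {mΩ : MeasurableSpace Ω} {μ : Measure Ω}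
    [IsProbabilityMeasure μ] {Y : Ω → ℝ} {K δ p : ℝ} (hY : ∀ ω, 0 ≤ Y ω) (hK : ∀ ω, Y ω ≤ K)
    (hδ : 0 ≤ δ) (hp : 0 ≤ p) :
    ∫ ω, Y ω ^ p ∂μ ≤ δ ^ p + K ^ p * μ.real {ω | δ < Y ω} := by
  set B := toMeasurable μ {ω | δ < Y ω}
  have hB : MeasurableSet B := measurableSet_toMeasurable _ _
  have hpointwise : ∀ ω, Y ω ^ p ≤ δ ^ p + B.indicator (fun _ => K ^ p) ω := fun ω => by
    have hmain : Y ω ^ p ≤ K ^ p := Real.rpow_le_rpow (hY ω) (hK ω) hp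
    by_cases hω : ω ∈ B
    · rw [Set.indicator_of_mem hω]
      exact hmain.trans (le_add_of_nonneg_left (Real.rpow_nonneg hδ p))
    · rw [Set.indicator_of_notMem hω, add_zero]
      exact Real.rpow_le_rpow (hY ω) (not_lt.1 fun hlt => hω (subset_toMeasurable _ _ hlt)) hp
  have hint : Integrable (B.indicator fun _ => K ^ p) μ := (integrable_const _).indicator hB
  refine (integral_mono_of_nonneg (.of_forall fun ω => Real.rpow_nonneg (hY ω) p)
    ((integrable_const _).add hint) (.of_forall hpointwise)).trans_eq ?_
  rw [integral_add' (integrable_const _) hint, integral_const, probReal_univ, one_smul,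
    integral_indicator_const _ hB, measureReal_def, measure_toMeasurable, smul_eq_mul, mul_comm,
    measureReal_def]

lemma TendstoInProb.tendstoLp [∀ N, IsProbabilityMeasure (P N)] {c K p : ℝ}
    (h : TendstoInProb P X c) (hK : ∀ N ω, |X N ω - c| ≤ K) (hp : 0 < p) : TendstoLp P X p c := by
  refine Metric.tendsto_nhds.2 fun ε hε => ?_
  have hδ : 0 < (ε / 2) ^ p⁻¹ := by positivity
  have htail := ((ENNReal.tendsto_toReal ENNReal.zero_ne_top).comp (h _ hδ)).const_mul (K ^ p)
  rw [ENNReal.toReal_zero, mul_zero] at htail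
  filter_upwards [htail.eventually_lt_const (half_pos hε)] with N hN
  rw [Real.dist_0_eq_abs, abs_of_nonneg (integral_nonneg fun ω => by positivity)]
  calc ∫ ω, |X N ω - c| ^ p ∂P N
    _ ≤ ((ε / 2) ^ p⁻¹) ^ p + K ^ p * (P N).real {ω | (ε / 2) ^ p⁻¹ < |X N ω - c|} :=
        integral_rpow_le_add_mul_measureReal (fun _ => abs_nonneg _) (hK N) hδ.le hp.le
    _ < ε / 2 + ε / 2 := by
        rw [Real.rpow_inv_rpow (half_pos hε).le hp.ne']
        exact add_lt_add_right hN _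
    _ = ε := add_halves ε

end Convergence

end

theorem gibbs_mass_near_boundary_vanishes_general
    (M : ℕ) (sigv lamv : ℕ → ℝ)
    (P : ℕ → MeasureTheory.Measure FieldSp) (hGFF : ∀ N, IsGFF N (P N))
    (β ρ : ℝ) (hρ : 0 < ρ) :
    TendstoInProb P
      (fun N ω => ∑ v ∈ VN N \ AN N ρ, gibbsW N M sigv lamv (P N) β v ω) 0 ∧
    ∀ p : ℝ, 0 < p →
      TendstoLp P
        (fun N ω => ∑ v ∈ VN N \ AN N ρ, gibbsW N M sigv lamv (P N) β v ω) p 0 := by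
  have : ∀ N, MeasureTheory.IsProbabilityMeasure (P N) := fun N => (hGFF N).1
  have hmass : ∀ N ω, |∑ v ∈ VN N \ AN N ρ, gibbsW N M sigv lamv (P N) β v ω - 0| =
      ∑ v ∈ VN N \ AN N ρ, gibbsW N M sigv lamv (P N) β v ω := fun N ω => by
    rw [sub_zero, sum_gibbsW, abs_of_nonneg (gibbsMass_nonneg _ _ _)]
  have hprob : TendstoInProb P
      (fun N ω => ∑ v ∈ VN N \ AN N ρ, gibbsW N M sigv lamv (P N) β v ω) 0 := by
    refine tendstoInProb_of_measureReal_le fun ε hε => ?_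
    simpa only [hmass] using
      eventually_measureReal_lt_sum_gibbsW_sdiff_AN_le M sigv lamv hGFF β hρ hε
  refine ⟨hprob, fun p hp => hprob.tendstoLp (K := 1) (fun N ω => ?_) hp⟩
  rw [hmass, sum_gibbsW]
  exact gibbsMass_le_one Finset.sdiff_subset

/-- **Lemma (The Gibbs measure carries no mass near the boundary).**
For every `β > 0` and `ρ ∈ (0,λ_1)`, `𝒢_{β,N}(A_{N,ρ}^c) → 0` as `N → ∞`, in probability
and in `L^p` for every `1 ≤ p < ∞`. -/
theorem gibbs_mass_near_boundary_vanishes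
    (M : ℕ) (sigv lamv : ℕ → ℝ) (hparams : ScaleParams M sigv lamv)
    (P : ℕ → MeasureTheory.Measure FieldSp) (hGFF : ∀ N, IsGFF N (P N))
    (β ρ : ℝ) (hβ : 0 < β) (hρ0 : 0 < ρ) (hρ1 : ρ < lamv 1) :
    TendstoInProb P
      (fun N ω => ∑ v ∈ VN N \ AN N ρ, gibbsW N M sigv lamv (P N) β v ω) 0 ∧
    ∀ p : ℝ, 1 ≤ p →
      TendstoLp P
        (fun N ω => ∑ v ∈ VN N \ AN N ρ, gibbsW N M sigv lamv (P N) β v ω) p 0 :=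
  (gibbs_mass_near_boundary_vanishes_general M sigv lamv P hGFF β ρ hρ0).imp_right
    fun hLp p hp => hLp p (zero_lt_one.trans_le hp)
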